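/- arXiv:1411.2397 — 3 statements merged into one kernel-verified Lean document; each statement's English description precedes it below -/
import Mathlib

section
/- Let K be a number field with ring of integers O_K. Identify a pair (Q1, Q2) of quadratic forms in the five variables T0,…,T4 with coefficients in K with its coefficient vector, a point of the affine space A^30(K) = K^30. Call (Q1, Q2) a Hasse counterexample if: (1) the common zero locus X of Q1 and Q2 in P^4 over an algebraic closure of K is nonempty and at every common zero of Q1 and Q2 over the algebraic closure the 2×5 Jacobian matrix of (Q1, Q2) has rank 2 (so X is a smooth complete intersection of two quadrics, i.e. a del Pezzo surface of degree four over K); (2) X(K_𝔩) ≠ ∅ for every nonzero prime ideal 𝔩 of O_K, and for every embedding σ: K → ℝ the surface obtained by applying σ to the coefficients has a real point (i.e. X has an adelic point); (3) X has no K-rational point. Then the set of Hasse counterexamples is Zariski dense in the space of pairs: every polynomial in 30 variables with coefficients in K that vanishes at the coefficient vector of every Hasse counterexample is the zero polynomial. (Equivalently, the degree four del Pezzo surfaces over K that violate the Hasse principle are Zariski dense in the Grassmann scheme Gr(2,15)_K parametrizing pencils of quinary quadrics.) -/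
open IsDedekindDomain NumberField MvPolynomial

set_option maxHeartbeats 1000000
set_option synthInstance.maxHeartbeats 400000

/-- Index set for the 15 coefficients of a quinary quadratic form; a pair of quadratic
forms thus has coefficient vector in `K^30 = (Fin 2 × QIdx) → K`. -/
abbrev QIdx : Type := {q : Fin 5 × Fin 5 // q.1 ≤ q.2}

/-- The quadratic form in `T0,…,T4` with coefficient vector `c`. -/
noncomputable def quadForm {K : Type*} [CommRing K] (c : QIdx → K) :
    MvPolynomial (Fin 5) K :=
  ∑ q : QIdx, MvPolynomial.C (c q) * MvPolynomial.X q.val.1 * MvPolynomial.X q.val.2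

variable {K : Type*} [Field K]

/-- The pair of quadrics with coefficients `c` has a nonzero common solution over `F`
(with coefficients transported along `φ : K →+* F`). -/
def HasSolution {F : Type*} [Field F] (φ : K →+* F) (c : Fin 2 → QIdx → K) : Prop :=
  ∃ t : Fin 5 → F, t ≠ 0 ∧ ∀ i : Fin 2, MvPolynomial.eval₂ φ t (quadForm (c i)) = 0

/-- The common zero locus of the two quadrics is a degree four del Pezzo surface:
over an algebraic closure it is nonempty, and at every common zero the `2×5` Jacobian
matrix has rank `2`. -/
def IsDelPezzoPair [NumberField K] (c : Fin 2 → QIdx → K) : Prop :=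
  HasSolution (algebraMap K (AlgebraicClosure K)) c ∧
  ∀ t : Fin 5 → AlgebraicClosure K, t ≠ 0 →
    (∀ i : Fin 2, MvPolynomial.eval₂ (algebraMap K (AlgebraicClosure K)) t
      (quadForm (c i)) = 0) →
    (Matrix.of fun (i : Fin 2) (m : Fin 5) =>
      MvPolynomial.eval₂ (algebraMap K (AlgebraicClosure K)) t
        (MvPolynomial.pderiv m (quadForm (c i)))).rank = 2

/-- The pair of quadrics with coefficients `c` defines a degree four del Pezzo surface
over `K` that violates the Hasse principle: it has points over every completion of `K`
but no `K`-rational point. -/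
def IsHasseCounterexample [NumberField K] (c : Fin 2 → QIdx → K) : Prop :=
  IsDelPezzoPair c ∧
  (∀ v : HeightOneSpectrum (𝓞 K),
    HasSolution (algebraMap K (v.adicCompletion K)) c) ∧
  (∀ σ : K →+* ℝ, HasSolution σ c) ∧
  ¬ HasSolution (RingHom.id K) c

/-!
Let `p ≡ 1 mod 8` be a prime unramified in `K`, and consider the surfaces
`t₀ t₁ = t₂² - p t₃²`, `(t₀ + t₁) (c t₀ + d t₁) = t₂² - p t₄²`. If `c` and `d` are coprime and
suitably chosen modulo `p`, then the ratio `r = t₀ / t₁` at a rational point is congruent to `s²`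
modulo every prime above `p`, where the norm of `s² + 1` is not a square modulo `p`. At each prime
modulo which `p` is not a square, the norm equations force `r (r + 1)` to have even valuation, so,
writing `r = a / β` with `β` congruent to `1` modulo `p`, quadratic reciprocity shows that the norm
of `a (a + β) = β² r (r + 1)`, which is congruent to `s² (s² + 1)`, is a square modulo `p`: a
contradiction. Local points exist at the primes above `2` and at the real places because `p` is a
square there, at the primes above `p` because the simple root `s²` of `(r + 1) (c r + d) = r` lifts
to a square, and elsewhere by Chevalley–Warning and Hensel's lemma.

For the density, being a counterexample is invariant under linear substitutions of the variables
and recombinations of the two forms, and there are infinitely many admissible `c`, each with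
infinitely many admissible `d`. It therefore suffices that the coefficients of the twist of this
pencil of surfaces by generic matrices are algebraically independent, which by the Jacobian
criterion follows once the differential of the parametrization is surjective at one point.
-/

namespace HasseDense

open Matrix

/-! ### Pairs of quadratic forms -/

section Forms

variable {R S F : Type*} [CommRing R] [CommRing S] [Field F]

/-- The coefficient vector of the quadratic form `t ↦ tᵀ N t`, for an arbitrary (not necessarily
symmetric) matrix `N`. -/
def formCoeffs (N : Matrix (Fin 5) (Fin 5) R) : QIdx → R := fun q =>
  if q.1.1 = q.1.2 then N q.1.1 q.1.2 else N q.1.1 q.1.2 + N q.1.2 q.1.1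

lemma formCoeffs_map {G : Type*} [FunLike G R S] [AddMonoidHomClass G R S] (φ : G)
    (N : Matrix (Fin 5) (Fin 5) R) (q : QIdx) :
    formCoeffs (N.map φ) q = φ (formCoeffs N q) := by
  simp only [formCoeffs, map_apply, apply_ite φ, map_add]

lemma sum_QIdx_symmetrize {A : Type*} [AddCommMonoid A] (f : Fin 5 → Fin 5 → A) :
    ∑ q : QIdx, (if q.1.1 = q.1.2 then f q.1.1 q.1.2 else f q.1.1 q.1.2 + f q.1.2 q.1.1) =
      ∑ i, ∑ j, f i j := by
  have h : ∀ g : Fin 5 → Fin 5 → A, ∑ q : QIdx, g q.1.1 q.1.2 =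
      ∑ i, ∑ j, if i ≤ j then g i j else 0 := fun g => by
    rw [← Finset.sum_product', Finset.univ_product_univ, ← Finset.sum_filter]
    exact (Finset.sum_subtype (Finset.univ.filter fun q : Fin 5 × Fin 5 => q.1 ≤ q.2)
      (by simp) (fun q => g q.1 q.2)).symm
  rw [h fun i j => if i = j then f i j else f i j + f j i]
  simp (decide := true) only [Fin.sum_univ_five, if_true, if_false, zero_add, add_zero]
  abel

lemma quadForm_formCoeffs (N : Matrix (Fin 5) (Fin 5) R) :
    quadForm (formCoeffs N) = ∑ i, ∑ j, C (N i j) * X i * X j := by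
  rw [← sum_QIdx_symmetrize, quadForm]
  refine Finset.sum_congr rfl fun q _ => ?_
  rw [formCoeffs]
  split_ifs
  · rfl
  · rw [C_add]
    ring

lemma eval₂_quadForm_formCoeffs (φ : R →+* S) (N : Matrix (Fin 5) (Fin 5) R) (t : Fin 5 → S) :
    eval₂ φ t (quadForm (formCoeffs N)) = t ⬝ᵥ N.map φ *ᵥ t := by
  simp only [quadForm_formCoeffs, eval₂_sum, eval₂_mul, eval₂_C, eval₂_X, dotProduct, mulVec,
    map_apply, Finset.mul_sum]
  exact Finset.sum_congr rfl fun i _ => Finset.sum_congr rfl fun j _ => by ring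

lemma eval₂_pderiv_quadForm_formCoeffs (φ : R →+* S) (N : Matrix (Fin 5) (Fin 5) R)
    (t : Fin 5 → S) (m : Fin 5) :
    eval₂ φ t (pderiv m (quadForm (formCoeffs N))) = ((N.map φ + (N.map φ)ᵀ) *ᵥ t) m := by
  have hX (i : Fin 5) : eval₂ φ t (Pi.single (M := fun _ => MvPolynomial (Fin 5) R) m 1 i) =
      if i = m then 1 else 0 := by
    rcases eq_or_ne i m with rfl | h
    · simp
    · simp [h]
  simp only [quadForm_formCoeffs, map_sum, Derivation.leibniz, pderiv_C, pderiv_X, smul_eq_mul,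
    eval₂_sum, eval₂_add, eval₂_mul, eval₂_C, eval₂_X, hX, mul_zero, add_zero, mul_ite, mul_one,
    Finset.sum_add_distrib, Finset.sum_ite_eq', Finset.mem_univ, if_true, Finset.sum_ite_irrel,
    Finset.sum_const_zero, add_mulVec, Pi.add_apply]
  rw [add_comm]
  simp only [mulVec, dotProduct, map_apply, transpose_apply, mul_comm]

/-- The pair of quadrics obtained from the pair `M` by the linear substitution `g` of the variables
and the recombination of the two forms with coefficients `h`. -/
def twist (g : Matrix (Fin 5) (Fin 5) R) (h : Matrix (Fin 2) (Fin 2) R)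
    (M : Fin 2 → Matrix (Fin 5) (Fin 5) R) : Fin 2 → Matrix (Fin 5) (Fin 5) R :=
  fun i => gᵀ * (∑ k, h i k • M k) * g

lemma twist_map (φ : R →+* S) (g : Matrix (Fin 5) (Fin 5) R) (h : Matrix (Fin 2) (Fin 2) R)
    (M : Fin 2 → Matrix (Fin 5) (Fin 5) R) (i : Fin 2) :
    (twist g h M i).map φ = twist (g.map φ) (h.map φ) (fun k => (M k).map φ) i := by
  simp only [twist, Matrix.map_mul, transpose_map]
  congr 2
  ext a b
  simp [Matrix.sum_apply]

/-- The two quadratic forms `t ↦ tᵀ Mᵢ t` have a common nonzero zero over `R`; over a field, the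
two quadrics have a common point in `ℙ⁴`. -/
def HasCommonZero (M : Fin 2 → Matrix (Fin 5) (Fin 5) R) : Prop :=
  ∃ t : Fin 5 → R, t ≠ 0 ∧ ∀ i, t ⬝ᵥ M i *ᵥ t = 0

lemma HasCommonZero.map {M : Fin 2 → Matrix (Fin 5) (Fin 5) R} (h : HasCommonZero M)
    {φ : R →+* S} (hφ : Function.Injective φ) : HasCommonZero fun i => (M i).map φ := by
  obtain ⟨t, ht, hM⟩ := h
  refine ⟨φ ∘ t, fun h0 => ht (hφ.comp_left (h0.trans (funext fun _ => (map_zero φ).symm))),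
    fun i => ?_⟩
  rw [← map_zero φ, ← hM i, RingHom.map_dotProduct]
  exact congrArg (_ ⬝ᵥ ·) (funext fun j => (RingHom.map_mulVec φ (M i) t j).symm)

/-- The Jacobian matrix at `t` of the pair of quadratic forms `t ↦ tᵀ Mᵢ t`. -/
def jacobian (M : Fin 2 → Matrix (Fin 5) (Fin 5) F) (t : Fin 5 → F) : Matrix (Fin 2) (Fin 5) F :=
  of fun i => (M i + (M i)ᵀ) *ᵥ t

/-- The Jacobian criterion for the intersection of the quadrics `tᵀ Mᵢ t = 0` to be smooth at each
of its `F`-points. -/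
def IsSmoothAtPoints (M : Fin 2 → Matrix (Fin 5) (Fin 5) F) : Prop :=
  ∀ t : Fin 5 → F, t ≠ 0 → (∀ i, t ⬝ᵥ M i *ᵥ t = 0) → (jacobian M t).rank = 2

lemma hasSolution_formCoeffs_iff (φ : K →+* F) (M : Fin 2 → Matrix (Fin 5) (Fin 5) K) :
    HasSolution φ (fun i => formCoeffs (M i)) ↔ HasCommonZero fun i => (M i).map φ := by
  simp only [HasSolution, HasCommonZero, eval₂_quadForm_formCoeffs]

lemma isDelPezzoPair_formCoeffs_iff [NumberField K] (M : Fin 2 → Matrix (Fin 5) (Fin 5) K) :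
    IsDelPezzoPair (fun i => formCoeffs (M i)) ↔
      HasCommonZero (fun i => (M i).map (algebraMap K (AlgebraicClosure K))) ∧
      IsSmoothAtPoints fun i => (M i).map (algebraMap K (AlgebraicClosure K)) := by
  simp only [IsDelPezzoPair, hasSolution_formCoeffs_iff, IsSmoothAtPoints, jacobian,
    eval₂_quadForm_formCoeffs, eval₂_pderiv_quadForm_formCoeffs]

lemma dotProduct_twist_mulVec (g : Matrix (Fin 5) (Fin 5) F) (h : Matrix (Fin 2) (Fin 2) F)
    (M : Fin 2 → Matrix (Fin 5) (Fin 5) F) (t : Fin 5 → F) (i : Fin 2) :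
    t ⬝ᵥ twist g h M i *ᵥ t = (h *ᵥ fun k => (g *ᵥ t) ⬝ᵥ M k *ᵥ (g *ᵥ t)) i := by
  rw [twist, ← mulVec_mulVec, ← mulVec_mulVec, dotProduct_mulVec, vecMul_transpose,
    sum_mulVec, dotProduct_sum]
  simp only [smul_mulVec, dotProduct_smul, smul_eq_mul]
  rfl

lemma jacobian_twist (g : Matrix (Fin 5) (Fin 5) F) (h : Matrix (Fin 2) (Fin 2) F)
    (M : Fin 2 → Matrix (Fin 5) (Fin 5) F) (t : Fin 5 → F) :
    jacobian (twist g h M) t = h * jacobian M (g *ᵥ t) * g := by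
  ext i m
  have hsum : twist g h M i + (twist g h M i)ᵀ =
      gᵀ * (∑ k, h i k • (M k + (M k)ᵀ)) * g := by
    simp only [twist, transpose_mul, transpose_transpose, transpose_sum, transpose_smul, smul_add,
      Finset.sum_add_distrib, Matrix.mul_add, Matrix.add_mul, Matrix.mul_assoc]
  simp only [jacobian, of_apply, hsum, mul_apply, ← mulVec_mulVec, sum_mulVec, smul_mulVec]
  rw [mulVec_transpose]
  simp only [vecMul, dotProduct, Finset.sum_apply, Pi.smul_apply, smul_eq_mul]

lemma mulVec_eq_zero_iff_of_isUnit_det {n : Type*} [Fintype n] [DecidableEq n] {A : Matrix n n F}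
    (hA : IsUnit A.det) (v : n → F) : A *ᵥ v = 0 ↔ v = 0 :=
  (mulVec_injective_of_isUnit ((isUnit_iff_isUnit_det A).mpr hA)).eq_iff' (mulVec_zero A)

section Twist

variable {g : Matrix (Fin 5) (Fin 5) F} {h : Matrix (Fin 2) (Fin 2) F}
  {M : Fin 2 → Matrix (Fin 5) (Fin 5) F}

lemma forall_dotProduct_twist_eq_zero_iff (hh : IsUnit h.det) (t : Fin 5 → F) :
    (∀ i, t ⬝ᵥ twist g h M i *ᵥ t = 0) ↔ ∀ i, (g *ᵥ t) ⬝ᵥ M i *ᵥ (g *ᵥ t) = 0 := by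
  simp only [dotProduct_twist_mulVec]
  simpa only [funext_iff, Pi.zero_apply] using mulVec_eq_zero_iff_of_isUnit_det hh _

lemma IsSmoothAtPoints.twist (hg : IsUnit g.det) (hh : IsUnit h.det) (H : IsSmoothAtPoints M) :
    IsSmoothAtPoints (twist g h M) := by
  intro t ht hz
  rw [jacobian_twist, rank_mul_eq_left_of_isUnit_det _ _ hg,
    rank_mul_eq_right_of_isUnit_det _ _ hh]
  exact H _ ((mulVec_eq_zero_iff_of_isUnit_det hg t).not.mpr ht)
    ((forall_dotProduct_twist_eq_zero_iff hh t).mp hz)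

lemma hasCommonZero_twist_iff (hg : IsUnit g.det) (hh : IsUnit h.det) :
    HasCommonZero (twist g h M) ↔ HasCommonZero M := by
  constructor
  · rintro ⟨t, ht, hz⟩
    exact ⟨g *ᵥ t, (mulVec_eq_zero_iff_of_isUnit_det hg t).not.mpr ht,
      (forall_dotProduct_twist_eq_zero_iff hh t).mp hz⟩
  · rintro ⟨t, ht, hz⟩
    have hgt : g *ᵥ g⁻¹ *ᵥ t = t := by rw [mulVec_mulVec, mul_nonsing_inv _ hg, one_mulVec]
    refine ⟨g⁻¹ *ᵥ t, fun h0 => ht ?_, (forall_dotProduct_twist_eq_zero_iff hh _).mpr ?_⟩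
    · rw [← hgt, h0, mulVec_zero]
    · rwa [hgt]

end Twist

lemma isUnit_det_map {R S n : Type*} [CommRing R] [CommRing S] [Fintype n] [DecidableEq n]
    (φ : R →+* S) {A : Matrix n n R} (hA : IsUnit A.det) : IsUnit (A.map φ).det :=
  RingHom.map_det φ A ▸ hA.map φ

lemma isHasseCounterexample_twist [NumberField K] {g : Matrix (Fin 5) (Fin 5) K}
    {h : Matrix (Fin 2) (Fin 2) K} (hg : IsUnit g.det) (hh : IsUnit h.det)
    {M : Fin 2 → Matrix (Fin 5) (Fin 5) K}
    (H : IsHasseCounterexample fun i => formCoeffs (M i)) :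
    IsHasseCounterexample fun i => formCoeffs (twist g h M i) := by
  simp only [IsHasseCounterexample, isDelPezzoPair_formCoeffs_iff, hasSolution_formCoeffs_iff,
    twist_map, hasCommonZero_twist_iff (isUnit_det_map _ hg) (isUnit_det_map _ hh)] at H ⊢
  exact ⟨⟨H.1.1, H.1.2.twist (isUnit_det_map _ hg) (isUnit_det_map _ hh)⟩, H.2⟩

end Forms

/-! ### Algebraic independence by the Jacobian criterion -/

section JacobianCriterion

variable {σ R : Type*} [CommRing R]

lemma totalDegree_pderiv_le {Q : MvPolynomial σ R} {n : ℕ} (hQ : Q.totalDegree ≤ n + 1) (j : σ) :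
    (pderiv j Q).totalDegree ≤ n := by
  rw [totalDegree]
  refine Finset.sup_le fun m hm => ?_
  rw [mem_support_iff, coeff_pderiv] at hm
  have hmem : m + Finsupp.single j 1 ∈ Q.support := mem_support_iff.mpr (left_ne_zero_of_mul hm)
  have hdeg := (le_totalDegree hmem).trans hQ
  rw [Finsupp.sum_add_index' (by simp) (by simp)] at hdeg
  simpa using hdeg

lemma eq_C_of_forall_pderiv_eq_zero [IsDomain R] [CharZero R] {Q : MvPolynomial σ R}
    (hQ : ∀ j, pderiv j Q = 0) : Q = C (coeff 0 Q) := by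
  classical
  ext m
  rw [coeff_C]
  split_ifs with hm
  · rw [hm]
  obtain ⟨j, hj⟩ := Finsupp.ne_iff.mp (Ne.symm hm)
  have hle : Finsupp.single j 1 ≤ m := by
    rw [Finsupp.single_le_iff]
    exact Nat.one_le_iff_ne_zero.mpr hj
  have hcoeff := congrArg (coeff (m - Finsupp.single j 1)) (hQ j)
  rw [coeff_pderiv, tsub_add_cancel_of_le hle, coeff_zero] at hcoeff
  exact (mul_eq_zero.mp hcoeff).resolve_right (Nat.cast_add_one_ne_zero _)

lemma eq_zero_of_mem_of_pderiv_mem [IsDomain R] [CharZero R] {I : Set (MvPolynomial σ R)}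
    (hpderiv : ∀ Q ∈ I, ∀ j, pderiv j Q ∈ I) (hC : ∀ r : R, C r ∈ I → r = 0)
    {Q : MvPolynomial σ R} (hQ : Q ∈ I) : Q = 0 := by
  induction hn : Q.totalDegree using Nat.strong_induction_on generalizing Q with
  | _ n ih =>
    have hconst : Q = C (coeff 0 Q) := by
      rcases n with _ | n
      · exact totalDegree_eq_zero_iff_eq_C.mp hn
      · exact eq_C_of_forall_pderiv_eq_zero fun j => ih _
          (Nat.lt_succ_of_le (totalDegree_pderiv_le hn.le j)) (hpderiv Q hQ j) rfl
    rw [hconst] at hQ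
    rw [hconst, hC _ hQ, C_0]

lemma derivation_aeval [Fintype σ] {A : Type*} [CommRing A] [Algebra R A] (d : Derivation R A A)
    (w : σ → A) (Q : MvPolynomial σ R) :
    d (aeval w Q) = ∑ j, d (w j) * aeval w (pderiv j Q) := by
  classical
  induction Q using MvPolynomial.induction_on with
  | C a => simp
  | add p q hp hq => simp only [map_add, hp, hq, mul_add, Finset.sum_add_distrib]
  | mul_X p i hp =>
    have hX (j : σ) : aeval w (pderiv j (X i : MvPolynomial σ R)) = if j = i then 1 else 0 := by
      rcases eq_or_ne j i with rfl | h
      · simp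
      · simp [h, pderiv_X_of_ne h.symm]
    simp only [map_mul, aeval_X, Derivation.leibniz, smul_eq_mul, map_add, hp, hX, mul_add,
      Finset.sum_add_distrib, Finset.mul_sum, mul_ite, mul_one, mul_zero, Finset.sum_ite_eq',
      Finset.mem_univ, if_true]
    congr 1
    · exact mul_comm _ _
    · exact Finset.sum_congr rfl fun j _ => mul_left_comm _ _ _

lemma surjective_of_forall_dotProduct_eq_zero [Fintype σ] {V : Type*} [AddCommGroup V] [Module K V]
    (f : V →ₗ[K] σ → K) (hf : ∀ c : σ → K, (∀ v, c ⬝ᵥ f v = 0) → c = 0) :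
    Function.Surjective f := by
  classical
  rw [← LinearMap.range_eq_top]
  by_contra hne
  obtain ⟨ℓ, hℓ, hle⟩ := Submodule.exists_le_ker_of_lt_top _ (lt_top_iff_ne_top.mpr hne)
  have hdot (u : σ → K) : (fun j => ℓ fun i => if j = i then 1 else 0) ⬝ᵥ u = ℓ u :=
    (dotProduct_comm _ u).trans (LinearMap.pi_apply_eq_sum_univ ℓ u).symm
  refine hℓ (LinearMap.ext fun u => ?_)
  rw [← hdot, hf _ fun v => (hdot _).trans (hle ⟨v, rfl⟩), zero_dotProduct, LinearMap.zero_apply]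

theorem algebraicIndependent_of_jacobian [CharZero K] [Fintype σ] {A : Type*} [CommRing A]
    [IsDomain A] [Algebra K A] (w : σ → A) (e : A →ₐ[K] K)
    (hw : ∀ c : σ → K, (∀ d : Derivation K A A, c ⬝ᵥ (fun j => e (d (w j))) = 0) → c = 0) :
    AlgebraicIndependent K w := by
  classical
  let jac : Derivation K A A →ₗ[K] σ → K :=
    { toFun := fun d j => e (d (w j))
      map_add' := fun d d' => by ext; simp
      map_smul' := fun r d => by ext; simp }
  choose d hd using fun i => surjective_of_forall_dotProduct_eq_zero jac hw (Pi.single i 1)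
  let J : Matrix σ σ A := of fun i j => d i (w j)
  have hJ : J.det ≠ 0 := fun h0 => by
    have hmap : J.map e = 1 := by
      ext i j
      rw [one_eq_pi_single]
      exact congrFun (hd i) j
    have := AlgHom.map_det e J
    rw [h0, AlgHom.mapMatrix_apply, hmap] at this
    simp at this
  rw [algebraicIndependent_iff]
  intro Q hQ
  refine eq_zero_of_mem_of_pderiv_mem (I := {Q | aeval w Q = 0}) (fun Q hQ j => ?_) (fun r hr => ?_)
    hQ
  · refine congrFun (eq_zero_of_mulVec_eq_zero (v := fun j => aeval w (pderiv j Q)) hJ ?_) j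
    ext i
    exact (derivation_aeval (d i) w Q).symm.trans (by rw [hQ.out, map_zero, Pi.zero_apply])
  · simpa using congrArg e hr.out

end JacobianCriterion

/-! ### The pencil of surfaces and its twists -/

section Pencil

variable {R S : Type*} [CommRing R] [CommRing S]

/-- The intersection of the quadrics `t₀ t₁ = t₂² - D t₃²` and
`(t₀ + t₁) (a t₀ + b t₁) = t₂² - D t₄²`. -/
def pencil (D a b : R) : Fin 2 → Matrix (Fin 5) (Fin 5) R :=
  ![!![0, 1, 0, 0, 0; 0, 0, 0, 0, 0; 0, 0, -1, 0, 0; 0, 0, 0, D, 0; 0, 0, 0, 0, 0],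
    !![a, a + b, 0, 0, 0; 0, b, 0, 0, 0; 0, 0, -1, 0, 0; 0, 0, 0, 0, 0; 0, 0, 0, 0, D]]

lemma pencil_map (φ : R →+* S) (D a b : R) (i : Fin 2) :
    (pencil D a b i).map φ = pencil (φ D) (φ a) (φ b) i := by
  ext k l
  fin_cases i <;> fin_cases k <;> fin_cases l <;> simp [pencil]

/-- The tangent vector of the family `pencil D` in the direction `(a, b)`. -/
def pencilTangent (a b : R) : Fin 2 → Matrix (Fin 5) (Fin 5) R :=
  ![0, !![a, a + b, 0, 0, 0; 0, b, 0, 0, 0; 0, 0, 0, 0, 0; 0, 0, 0, 0, 0; 0, 0, 0, 0, 0]]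

end Pencil

section Conormal

variable {D a b : K} {L : Fin 2 → Matrix (Fin 5) (Fin 5) K}

/-- The pair `L` of symmetric matrices annihilates, under the trace pairing, the tangent space at
`pencil D a b` to the family of all twists of all members of `pencil D`. -/
structure IsConormal (D a b : K) (L : Fin 2 → Matrix (Fin 5) (Fin 5) K) : Prop where
  symm (j : Fin 2) (k l : Fin 5) : L j k l = L j l k
  substitution : ∑ j, L j * (pencil D a b j + (pencil D a b j)ᵀ) = 0
  recombination (j k : Fin 2) : trace (L j * pencil D a b k) = 0
  parameters (a' b' : K) : trace (L 1 * pencilTangent a' b' 1) = 0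

namespace IsConormal

lemma column_zero (hL : IsConormal D a b L) (n : Fin 5) :
    L 0 n 1 + 2 * a * L 1 n 0 + (a + b) * L 1 n 1 = 0 := by
  have h := congrFun (congrFun hL.substitution n) 0
  simp [pencil, Matrix.add_apply, mul_apply, Fin.sum_univ_succ] at h
  linear_combination h

lemma column_one (hL : IsConormal D a b L) (n : Fin 5) :
    L 0 n 0 + (a + b) * L 1 n 0 + 2 * b * L 1 n 1 = 0 := by
  have h := congrFun (congrFun hL.substitution n) 1
  simp [pencil, Matrix.add_apply, mul_apply, Fin.sum_univ_succ] at h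
  linear_combination h

variable [CharZero K]

lemma column_two (hL : IsConormal D a b L) (n : Fin 5) : L 0 n 2 + L 1 n 2 = 0 := by
  have h := congrFun (congrFun hL.substitution n) 2
  simp [pencil, Matrix.add_apply, mul_apply, Fin.sum_univ_succ] at h
  linear_combination (-1 / 2 : K) * h

lemma column_three (hL : IsConormal D a b L) (hD : D ≠ 0) (n : Fin 5) : L 0 n 3 = 0 := by
  have h := congrFun (congrFun hL.substitution n) 3
  simpa [pencil, Matrix.add_apply, mul_apply, Fin.sum_univ_succ, hD, ← two_mul] using h

lemma column_four (hL : IsConormal D a b L) (hD : D ≠ 0) (n : Fin 5) : L 1 n 4 = 0 := by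
  have h := congrFun (congrFun hL.substitution n) 4
  simpa [pencil, Matrix.add_apply, mul_apply, Fin.sum_univ_succ, hD, ← two_mul] using h

lemma apply_one_eq_zero (hL : IsConormal D a b L) (hab : a ≠ b) :
    L 1 0 0 = 0 ∧ L 1 0 1 = 0 ∧ L 1 1 1 = 0 := by
  have ha : L 1 0 0 + L 1 0 1 = 0 := by
    simpa [pencilTangent, Matrix.trace, mul_apply, Fin.sum_univ_five, hL.symm 1 1 0] using
      hL.parameters 1 0
  have hb : L 1 0 1 + L 1 1 1 = 0 := by
    simpa [pencilTangent, Matrix.trace, mul_apply, Fin.sum_univ_five, hL.symm 1 1 0] using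
      hL.parameters 0 1
  have h01 : L 1 0 1 = 0 := by
    refine (mul_eq_zero.mp (?_ : (a - b) * L 1 0 1 = 0)).resolve_left (sub_ne_zero.mpr hab)
    linear_combination -(1 / 2 : K) * (hL.column_zero 0 - hL.column_one 1 - hL.symm 0 0 1) +
      a * ha - b * hb - (a + b) / 2 * hL.symm 1 1 0
  exact ⟨by linear_combination ha - h01, h01, by linear_combination hb - h01⟩

lemma apply_zero_eq_zero (hL : IsConormal D a b L) (hab : a ≠ b) :
    L 0 0 0 = 0 ∧ L 0 0 1 = 0 ∧ L 0 1 1 = 0 := by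
  obtain ⟨h00, h01, h11⟩ := hL.apply_one_eq_zero hab
  have h10 := (hL.symm 1 1 0).trans h01
  exact ⟨by linear_combination hL.column_one 0 - (a + b) * h00 - 2 * b * h01,
    by linear_combination hL.column_zero 0 - 2 * a * h00 - (a + b) * h01,
    by linear_combination hL.column_zero 1 - 2 * a * h10 - (a + b) * h11⟩

lemma apply_two_eq_zero (hL : IsConormal D a b L) (hΔ : (a + b - 1) ^ 2 - 4 * a * b ≠ 0) :
    L 0 0 2 = 0 ∧ L 0 1 2 = 0 ∧ L 1 0 2 = 0 ∧ L 1 1 2 = 0 := by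
  have h0 := hL.column_two 0
  have h1 := hL.column_two 1
  have p := hL.column_zero 2
  have q := hL.column_one 2
  simp only [hL.symm _ 2 0, hL.symm _ 2 1] at p q
  have h102 : L 1 0 2 = 0 := by
    refine (mul_eq_zero.mp ?_).resolve_left hΔ
    linear_combination (a + b - 1) * q - 2 * b * p - (a + b - 1) * h0 + 2 * b * h1
  have h112 : L 1 1 2 = 0 := by
    refine (mul_eq_zero.mp ?_).resolve_left hΔ
    linear_combination (a + b - 1) * p - 2 * a * q - (a + b - 1) * h1 + 2 * a * h0
  exact ⟨by linear_combination h0 - h102, by linear_combination h1 - h112, h102, h112⟩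

lemma apply_three_eq_zero (hL : IsConormal D a b L) (hD : D ≠ 0) (hab : a ≠ b) :
    L 1 0 3 = 0 ∧ L 1 1 3 = 0 := by
  have hab2 : (a - b) ^ 2 ≠ 0 := pow_ne_zero 2 (sub_ne_zero.mpr hab)
  have p := hL.column_zero 3
  have q := hL.column_one 3
  simp only [hL.symm _ 3 0, hL.symm _ 3 1, hL.column_three hD, zero_add] at p q
  constructor <;> refine (mul_eq_zero.mp ?_).resolve_left hab2
  · linear_combination (a + b) * q - 2 * b * p
  · linear_combination (a + b) * p - 2 * a * q

lemma apply_four_eq_zero (hL : IsConormal D a b L) (hD : D ≠ 0) : L 0 0 4 = 0 ∧ L 0 1 4 = 0 := by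
  have p := hL.column_zero 4
  have q := hL.column_one 4
  simpa only [hL.symm _ 4 0, hL.symm _ 4 1, hL.column_four hD, mul_zero, add_zero, and_comm]
    using And.intro p q

lemma diagonal_eq_zero (hL : IsConormal D a b L) (hD : D ≠ 0) (hab : a ≠ b) :
    (∀ j, L j 2 2 = 0) ∧ L 1 3 3 = 0 ∧ L 0 4 4 = 0 := by
  obtain ⟨h000, h001, h011⟩ := hL.apply_zero_eq_zero hab
  obtain ⟨h100, h101, h111⟩ := hL.apply_one_eq_zero hab
  have h122 : L 1 2 2 = 0 := by
    simpa [pencil, Matrix.trace, mul_apply, Fin.sum_univ_five, hL.symm _ 1 0, *,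
      hL.column_four hD] using hL.recombination 1 1
  have h022 : L 0 2 2 = 0 := by linear_combination hL.column_two 2 - h122
  have t01 : L 0 4 4 * D = 0 := by
    simpa [pencil, Matrix.trace, mul_apply, Fin.sum_univ_five, hL.symm _ 1 0, *]
      using hL.recombination 0 1
  have t10 : L 1 3 3 * D = 0 := by
    simpa [pencil, Matrix.trace, mul_apply, Fin.sum_univ_five, hL.symm _ 1 0, *]
      using hL.recombination 1 0
  refine ⟨fun j => ?_, (mul_eq_zero.mp t10).resolve_right hD, (mul_eq_zero.mp t01).resolve_right hD⟩
  fin_cases j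
  exacts [h022, h122]

theorem eq_zero (hL : IsConormal D a b L) (hD : D ≠ 0) (hab : a ≠ b)
    (hΔ : (a + b - 1) ^ 2 - 4 * a * b ≠ 0) : L = 0 := by
  obtain ⟨h000, h001, h011⟩ := hL.apply_zero_eq_zero hab
  obtain ⟨h100, h101, h111⟩ := hL.apply_one_eq_zero hab
  obtain ⟨h002, h012, h102, h112⟩ := hL.apply_two_eq_zero hΔ
  obtain ⟨h103, h113⟩ := hL.apply_three_eq_zero hD hab
  obtain ⟨h004, h014⟩ := hL.apply_four_eq_zero hD
  obtain ⟨h22, h133, h044⟩ := hL.diagonal_eq_zero hD hab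
  have c3 := hL.column_three hD
  have c4 := hL.column_four hD
  have h034 : L 0 3 4 = 0 := (hL.symm 0 3 4).trans (c3 4)
  have h123 : L 1 2 3 = 0 := by
    linear_combination hL.column_two 3 - c3 2 - hL.symm 0 3 2 - hL.symm 1 3 2
  have h024 : L 0 2 4 = 0 := by
    linear_combination hL.column_two 4 - c4 2 - hL.symm 0 4 2 - hL.symm 1 4 2
  have upper (j : Fin 2) (k l : Fin 5) (hkl : k ≤ l) : L j k l = 0 := by
    fin_cases j <;> fin_cases k <;> fin_cases l <;>
      first | assumption | exact h22 _ | exact c3 _ | exact c4 _ | exact absurd hkl (by decide)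
  ext j k l
  rcases le_total k l with h | h
  exacts [upper j k l h, (hL.symm j k l).trans (upper j l k h)]

end IsConormal
end Conormal

section DualMatrix

/-- The symmetric matrix representing the linear functional with coefficient vector `c` on
quadratic forms, under the trace pairing with `formCoeffs`. -/
def dualMatrix {α : Type*} (c : QIdx → α) : Matrix (Fin 5) (Fin 5) α :=
  of fun k l => c ⟨(min k l, max k l), min_le_max⟩

lemma dualMatrix_symm {α : Type*} (c : QIdx → α) (k l : Fin 5) :
    dualMatrix c k l = dualMatrix c l k := by
  simp only [dualMatrix, of_apply, min_comm, max_comm]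

lemma dualMatrix_apply_QIdx {α : Type*} (c : QIdx → α) (q : QIdx) :
    dualMatrix c q.1.1 q.1.2 = c q := by
  simp only [dualMatrix, of_apply, min_eq_left q.2, max_eq_right q.2]

lemma trace_dualMatrix_mul {R : Type*} [CommRing R] (c : QIdx → R)
    (N : Matrix (Fin 5) (Fin 5) R) : trace (dualMatrix c * N) = c ⬝ᵥ formCoeffs N := by
  calc trace (dualMatrix c * N) = ∑ k, ∑ l, dualMatrix c k l * N k l := by
        simp only [Matrix.trace, diag_apply, mul_apply]
        rw [Finset.sum_comm]
        exact Finset.sum_congr rfl fun k _ => Finset.sum_congr rfl fun l _ => by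
          rw [dualMatrix_symm]
    _ = c ⬝ᵥ formCoeffs N := by
        rw [← sum_QIdx_symmetrize fun k l => dualMatrix c k l * N k l]
        refine Finset.sum_congr rfl fun q _ => ?_
        rw [formCoeffs, dualMatrix_symm c q.1.2, dualMatrix_apply_QIdx, mul_ite, mul_add]

end DualMatrix

section Leibniz

variable {A : Type*} [CommRing A] (e : A →+* K) (δ : A →+ K)

lemma mul_map_of_leibniz (hδ : ∀ x y, δ (x * y) = e x * δ y + δ x * e y) {l m n : Type*}
    [Fintype m] (B : Matrix l m A) (N : Matrix m n A) :
    (B * N).map δ = B.map e * N.map δ + B.map δ * N.map e := by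
  ext i j
  simp only [map_apply, mul_apply, map_sum, hδ, Matrix.add_apply, Finset.sum_add_distrib]

lemma sum_smul_map_of_leibniz (hδ : ∀ x y, δ (x * y) = e x * δ y + δ x * e y) {ι m n : Type*}
    [Fintype ι] (r : ι → A) (M : ι → Matrix m n A) :
    (∑ k, r k • M k).map δ = ∑ k, e (r k) • (M k).map δ + ∑ k, δ (r k) • (M k).map e := by
  ext i j
  simp only [map_apply, Matrix.sum_apply, Matrix.smul_apply, Matrix.add_apply, smul_eq_mul,
    map_sum, hδ, Finset.sum_add_distrib]

lemma twist_map_of_leibniz (hδ : ∀ x y, δ (x * y) = e x * δ y + δ x * e y)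
    {g : Matrix (Fin 5) (Fin 5) A} {h : Matrix (Fin 2) (Fin 2) A} (hg : g.map e = 1)
    (hh : h.map e = 1) (M : Fin 2 → Matrix (Fin 5) (Fin 5) A) (i : Fin 2) :
    (twist g h M i).map δ = (g.map δ)ᵀ * (M i).map e + (M i).map e * g.map δ +
      ∑ k, δ (h i k) • (M k).map e + (M i).map δ := by
  have hone (N : Fin 2 → Matrix (Fin 5) (Fin 5) K) : ∑ k, e (h i k) • N k = N i := by
    have he (k : Fin 2) : e (h i k) = (1 : Matrix (Fin 2) (Fin 2) K) i k := by
      rw [← hh, map_apply]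
    simp only [he, one_apply, ite_smul, one_smul, zero_smul, Finset.sum_ite_eq,
      Finset.mem_univ, if_true]
  have hsum : (∑ k, h i k • M k).map e = (M i).map e := by
    rw [← hone fun k => (M k).map e]
    ext a b
    simp only [map_apply, Matrix.sum_apply, Matrix.smul_apply, smul_eq_mul, map_sum, map_mul]
  simp only [twist, mul_map_of_leibniz e δ hδ, Matrix.map_mul, transpose_map, hg, hsum,
    sum_smul_map_of_leibniz e δ hδ, hone, transpose_one, Matrix.one_mul, Matrix.mul_one]
  abel

lemma pencil_map_of_leibniz (hδ : ∀ x y, δ (x * y) = e x * δ y + δ x * e y) {D : A} (hD : δ D = 0)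
    (a b : A) (i : Fin 2) : (pencil D a b i).map δ = pencilTangent (δ a) (δ b) i := by
  have h1 : δ 1 = 0 := by simpa using hδ 1 1
  ext k l
  fin_cases i <;> fin_cases k <;> fin_cases l <;> simp [pencil, pencilTangent, h1, hD]

end Leibniz

section Density

/-- The parameters of a twist of a member of `pencil D`: the entries of the two matrices `g`, `h`
of the twist and the two parameters of the pencil. -/
abbrev TwistParam : Type := (Fin 5 × Fin 5) ⊕ (Fin 2 × Fin 2) ⊕ Fin 2

variable {R S : Type*} [CommRing R] [CommRing S]

/-- The point of `TwistParam → R` with the given entries. -/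
def twistParam (g : Matrix (Fin 5) (Fin 5) R) (h : Matrix (Fin 2) (Fin 2) R) (a b : R) :
    TwistParam → R :=
  Sum.elim (fun i => g i.1 i.2) (Sum.elim (fun i => h i.1 i.2) ![a, b])

/-- The `g`-component of a point of the parameter space. -/
def substitutionMatrix (y : TwistParam → R) : Matrix (Fin 5) (Fin 5) R :=
  of fun i j => y (.inl (i, j))

/-- The `h`-component of a point of the parameter space. -/
def recombinationMatrix (y : TwistParam → R) : Matrix (Fin 2) (Fin 2) R :=
  of fun i j => y (.inr (.inl (i, j)))

/-- The pair of quadrics with parameters `y` in the family of twists of members of `pencil D`. -/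
def twistedPencil (D : R) (y : TwistParam → R) : Fin 2 → Matrix (Fin 5) (Fin 5) R :=
  twist (substitutionMatrix y) (recombinationMatrix y)
    (pencil D (y (.inr (.inr 0))) (y (.inr (.inr 1))))

lemma twistedPencil_map (φ : R →+* S) (D : R) (y : TwistParam → R) (i : Fin 2) :
    (twistedPencil D y i).map φ = twistedPencil (φ D) (φ ∘ y) i := by
  rw [twistedPencil, twist_map, twistedPencil]
  simp only [pencil_map]
  rfl

lemma pencilTangent_zero (i : Fin 2) : pencilTangent (0 : R) 0 i = 0 := by
  ext k l
  fin_cases i <;> fin_cases k <;> fin_cases l <;> simp [pencilTangent]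

lemma trace_mul_transpose_mul_of_symm {n : Type*} [Fintype n] {L : Matrix n n R} (hL : Lᵀ = L)
    (E M : Matrix n n R) : trace (L * (Eᵀ * M)) = trace (L * Mᵀ * E) := by
  rw [← trace_transpose, transpose_mul, transpose_mul, transpose_transpose, hL, trace_mul_comm,
    Matrix.mul_assoc]

lemma isConormal_dualMatrix {D a b : K} {c : Fin 2 × QIdx → K}
    (hc : ∀ E (H : Matrix (Fin 2) (Fin 2) K) a' b', ∑ j, trace (dualMatrix (fun q => c (j, q)) *
      (Eᵀ * pencil D a b j + pencil D a b j * E + ∑ k, H j k • pencil D a b k +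
        pencilTangent a' b' j)) = 0) :
    IsConormal D a b fun j => dualMatrix fun q => c (j, q) where
  symm j k l := dualMatrix_symm _ k l
  substitution := by
    rw [ext_iff_trace_mul_right]
    intro E
    have hL (j : Fin 2) : (dualMatrix fun q => c (j, q))ᵀ = dualMatrix fun q => c (j, q) :=
      Matrix.ext fun k l => dualMatrix_symm (fun q => c (j, q)) l k
    have h := hc E 0 0 0
    simp only [Matrix.zero_apply, zero_smul, Finset.sum_const_zero, add_zero, pencilTangent_zero,
      Matrix.mul_add, trace_add, trace_mul_transpose_mul_of_symm (hL _)] at h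
    simpa only [Matrix.mul_add, Matrix.add_mul, Matrix.sum_mul, trace_sum, trace_add,
      Matrix.zero_mul, trace_zero, Matrix.mul_assoc, add_comm] using h
  recombination j k := by
    have h := hc 0 (Matrix.single j k 1) 0 0
    fin_cases j <;> simpa [pencilTangent_zero, Matrix.single_apply, ite_and] using h
  parameters a' b' := by
    have h := hc 0 0 a' b'
    simpa [pencilTangent] using h

/-- The coefficient vector of the universal twist of a member of `pencil D`. -/
noncomputable def universalCoeffs (D : K) (q : Fin 2 × QIdx) : MvPolynomial TwistParam K :=
  formCoeffs (twistedPencil (C D) X q.1) q.2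

lemma eval_universalCoeffs (D : K) (y : TwistParam → K) (q : Fin 2 × QIdx) :
    eval y (universalCoeffs D q) = formCoeffs (twistedPencil D y q.1) q.2 := by
  rw [universalCoeffs, ← formCoeffs_map, twistedPencil_map, eval_C]
  congr 3
  ext s
  simp

lemma sum_mul_eval_derivation_universalCoeffs (D a b : K) (c : Fin 2 × QIdx → K)
    (E : Matrix (Fin 5) (Fin 5) K) (H : Matrix (Fin 2) (Fin 2) K) (a' b' : K) :
    c ⬝ᵥ (fun q => aeval (twistParam 1 1 a b)
      (mkDerivation K (fun s => C (twistParam E H a' b' s)) (universalCoeffs D q))) =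
    ∑ j, trace (dualMatrix (fun q => c (j, q)) *
      (Eᵀ * pencil D a b j + pencil D a b j * E + ∑ k, H j k • pencil D a b k +
        pencilTangent a' b' j)) := by
  let e := (aeval (R := K) (twistParam (1 : Matrix (Fin 5) (Fin 5) K) 1 a b)).toRingHom
  let d := mkDerivation K fun s => C (σ := TwistParam) (twistParam E H a' b' s)
  let δ : MvPolynomial TwistParam K →+ K := e.toAddMonoidHom.comp d.toLinearMap.toAddMonoidHom
  have hδ (x y : MvPolynomial TwistParam K) : δ (x * y) = e x * δ y + δ x * e y := by
    change e (d (x * y)) = e x * e (d y) + e (d x) * e y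
    rw [d.leibniz, smul_eq_mul, smul_eq_mul, map_add, map_mul, map_mul, mul_comm (e y)]
  have heX (s : TwistParam) : e (X s) = twistParam 1 1 a b s := aeval_X _ _
  have hδX (s : TwistParam) : δ (X s) = twistParam E H a' b' s := by
    change e (d (X s)) = _
    rw [mkDerivation_X]
    exact aeval_C _ _
  have heC (r : K) : e (C r) = r := aeval_C _ _
  have hδC : δ (C D) = 0 := (congrArg e (derivation_C d D)).trans (map_zero e)
  have htangent (j : Fin 2) : (twistedPencil (C D) X j).map δ =
      Eᵀ * pencil D a b j + pencil D a b j * E + ∑ k, H j k • pencil D a b k +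
        pencilTangent a' b' j := by
    have hg : (substitutionMatrix X).map e = 1 := Matrix.ext fun _ _ => heX _
    have hh : (recombinationMatrix X).map e = 1 := Matrix.ext fun _ _ => heX _
    have hgδ : (substitutionMatrix X).map δ = E := Matrix.ext fun _ _ => hδX _
    have hhδ (k : Fin 2) : δ (recombinationMatrix X j k) = H j k := hδX _
    rw [twistedPencil, twist_map_of_leibniz e δ hδ hg hh, hgδ, pencil_map_of_leibniz e δ hδ hδC]
    simp only [hhδ, pencil_map, heC, heX, hδX]
    rfl
  simp only [trace_dualMatrix_mul, dotProduct, Fintype.sum_prod_type, ← htangent, formCoeffs_map]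
  rfl

theorem algebraicIndependent_universalCoeffs [CharZero K] {D : K} (hD : D ≠ 0) :
    AlgebraicIndependent K (universalCoeffs D) := by
  refine algebraicIndependent_of_jacobian _ (aeval (twistParam 1 1 1 2)) fun c hc => ?_
  have hL : IsConormal D 1 2 fun j => dualMatrix fun q => c (j, q) :=
    isConormal_dualMatrix fun E H a' b' => by
      rw [← sum_mul_eval_derivation_universalCoeffs, hc]
  have h0 := hL.eq_zero hD (by norm_num) (by norm_num)
  ext ⟨j, q⟩
  rw [← dualMatrix_apply_QIdx (fun q => c (j, q)), congrFun h0 j]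
  rfl

lemma eval_update_eq_zero {σ : Type*} [DecidableEq σ] {F : MvPolynomial σ K} {y : σ → K} {s : σ}
    (hF : {t | eval (Function.update y s t) F = 0}.Infinite) (t : K) :
    eval (Function.update y s t) F = 0 := by
  let p : Polynomial K := aeval (Function.update (fun i => Polynomial.C (y i)) s Polynomial.X) F
  have hp (t : K) : p.eval t = eval (Function.update y s t) F := by
    rw [← Polynomial.coe_aeval_eq_eval, ← aeval_eq_eval, comp_aeval_apply]
    congr 2
    ext i
    rcases eq_or_ne i s with rfl | hi
    · simp
    · simp [hi]
  have hp0 : p = 0 := Polynomial.eq_zero_of_infinite_isRoot p <| by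
    simpa only [Polynomial.IsRoot, hp] using hF
  rw [← hp, hp0, Polynomial.eval_zero]

lemma eval_eq_zero_of_eval_update_eq_zero {σ : Type*} [DecidableEq σ] {good : K → K → Prop}
    (hgood : {a | {b | good a b}.Infinite}.Infinite) {F : MvPolynomial σ K} {y : σ → K} {s s' : σ}
    (hF : ∀ a b, good a b → eval (Function.update (Function.update y s a) s' b) F = 0) :
    eval y F = 0 := by
  have hs (a : K) (ha : {b | good a b}.Infinite) : eval (Function.update y s a) F = 0 := by
    have h := eval_update_eq_zero (ha.mono fun b => hF a b) (Function.update y s a s')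
    rwa [Function.update_eq_self] at h
  simpa only [Function.update_eq_self] using eval_update_eq_zero (hgood.mono hs) (y s)

lemma eval_det_substitutionMatrix_X (y : TwistParam → K) :
    eval y (substitutionMatrix X).det = (substitutionMatrix y).det := by
  rw [RingHom.map_det]
  exact congrArg det (Matrix.ext fun _ _ => eval_X _)

lemma eval_det_recombinationMatrix_X (y : TwistParam → K) :
    eval y (recombinationMatrix X).det = (recombinationMatrix y).det := by
  rw [RingHom.map_det]
  exact congrArg det (Matrix.ext fun _ _ => eval_X _)

lemma det_substitutionMatrix_X_ne_zero : (substitutionMatrix (X (R := K))).det ≠ 0 := fun h => by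
  have h1 := eval_det_substitutionMatrix_X (twistParam (1 : Matrix (Fin 5) (Fin 5) K) 1 0 0)
  have hone : substitutionMatrix (twistParam (1 : Matrix (Fin 5) (Fin 5) K) 1 0 0) = 1 := rfl
  rw [h, map_zero, hone, det_one] at h1
  exact zero_ne_one h1

lemma det_recombinationMatrix_X_ne_zero : (recombinationMatrix (X (R := K))).det ≠ 0 := fun h => by
  have h1 := eval_det_recombinationMatrix_X (twistParam (1 : Matrix (Fin 5) (Fin 5) K) 1 0 0)
  have hone : recombinationMatrix (twistParam (1 : Matrix (Fin 5) (Fin 5) K) 1 0 0) = 1 := rfl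
  rw [h, map_zero, hone, det_one] at h1
  exact zero_ne_one h1

theorem eq_zero_of_eval_twist_pencil [CharZero K] {D : K} (hD : D ≠ 0) {good : K → K → Prop}
    (hgood : {a | {b | good a b}.Infinite}.Infinite) {P : MvPolynomial (Fin 2 × QIdx) K}
    (hP : ∀ g h, IsUnit g.det → IsUnit h.det → ∀ a b, good a b →
      eval (fun q => formCoeffs (twist g h (pencil D a b) q.1) q.2) P = 0) : P = 0 := by
  let F := aeval (universalCoeffs D) P
  have hF (y : TwistParam → K) :
      eval y F = eval (fun q => formCoeffs (twistedPencil D y q.1) q.2) P := by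
    simp only [← eval_universalCoeffs, ← aeval_eq_eval]
    exact comp_aeval_apply _ _ _
  have hdet : F * ((substitutionMatrix X).det * (recombinationMatrix X).det) = 0 := by
    refine MvPolynomial.funext fun y => ?_
    rw [map_mul, map_mul, map_zero, eval_det_substitutionMatrix_X, eval_det_recombinationMatrix_X]
    by_cases hg : (substitutionMatrix y).det = 0
    · rw [hg, zero_mul, mul_zero]
    by_cases hh : (recombinationMatrix y).det = 0
    · rw [hh, mul_zero, mul_zero]
    rw [eval_eq_zero_of_eval_update_eq_zero (s := .inr (.inr 0)) (s' := .inr (.inr 1)) hgood,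
      zero_mul]
    intro a b hab
    rw [hF]
    exact hP _ _ (isUnit_iff_ne_zero.mpr hg) (isUnit_iff_ne_zero.mpr hh) a b hab
  have hF0 : F = 0 := (mul_eq_zero.mp hdet).resolve_right
    (mul_ne_zero det_substitutionMatrix_X_ne_zero det_recombinationMatrix_X_ne_zero)
  exact (algebraicIndependent_universalCoeffs hD).eq_zero_of_aeval_eq_zero _ hF0

end Density

/-! ### Smoothness -/

section PencilZeros

variable {R : Type*} [CommRing R]

lemma dotProduct_pencil_zero (D a b : R) (t : Fin 5 → R) :
    t ⬝ᵥ pencil D a b 0 *ᵥ t = t 0 * t 1 - t 2 ^ 2 + D * t 3 ^ 2 := by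
  simp [pencil, mulVec, dotProduct, Fin.sum_univ_five]
  ring

lemma dotProduct_pencil_one (D a b : R) (t : Fin 5 → R) :
    t ⬝ᵥ pencil D a b 1 *ᵥ t =
      (t 0 + t 1) * (a * t 0 + b * t 1) - t 2 ^ 2 + D * t 4 ^ 2 := by
  simp [pencil, mulVec, dotProduct, Fin.sum_univ_five]
  ring

lemma hasCommonZero_pencil_iff {D a b : R} :
    HasCommonZero (pencil D a b) ↔ ∃ u v x y z : R,
      ¬ (u = 0 ∧ v = 0 ∧ x = 0 ∧ y = 0 ∧ z = 0) ∧ u * v = x ^ 2 - D * y ^ 2 ∧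
        (u + v) * (a * u + b * v) = x ^ 2 - D * z ^ 2 := by
  simp only [HasCommonZero, Fin.forall_fin_two, dotProduct_pencil_zero, dotProduct_pencil_one]
  constructor
  · rintro ⟨t, ht, h0, h1⟩
    refine ⟨t 0, t 1, t 2, t 3, t 4, ?_, by linear_combination h0, by linear_combination h1⟩
    simpa [funext_iff, Fin.forall_fin_succ] using ht
  · rintro ⟨u, v, x, y, z, hne, h0, h1⟩
    refine ⟨![u, v, x, y, z], ?_, ?_, ?_⟩
    · simpa [funext_iff, Fin.forall_fin_succ] using hne
    · change u * v - x ^ 2 + D * y ^ 2 = 0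
      linear_combination h0
    · change (u + v) * (a * u + b * v) - x ^ 2 + D * z ^ 2 = 0
      linear_combination h1

lemma hasCommonZero_pencil_swap {D a b : R} (h : HasCommonZero (pencil D b a)) :
    HasCommonZero (pencil D a b) := by
  obtain ⟨u, v, x, y, z, hne, h0, h1⟩ := hasCommonZero_pencil_iff.mp h
  exact hasCommonZero_pencil_iff.mpr ⟨v, u, x, y, z, by tauto, by linear_combination h0,
    by linear_combination h1⟩

lemma hasCommonZero_pencil_of_sq_eq [Nontrivial R] {D : R} (a b : R) {r : R} (hr : r ^ 2 = D) :
    HasCommonZero (pencil D a b) :=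
  hasCommonZero_pencil_iff.mpr ⟨0, 0, r, 1, 1, by simp, by linear_combination -hr,
    by linear_combination -hr⟩

end PencilZeros

section Nondegenerate

variable {R : Type*} [CommRing R]

/-- The conditions on the parameters under which, over a field of characteristic zero,
`pencil D a b` is a smooth complete intersection. -/
structure IsNondegenerate (D a b : R) : Prop where
  D_ne_zero : D ≠ 0
  a_ne_zero : a ≠ 0
  b_ne_zero : b ≠ 0
  a_ne_b : a ≠ b
  discr_ne_zero : (a + b - 1) ^ 2 - 4 * a * b ≠ 0

lemma IsNondegenerate.map {R' : Type*} [CommRing R'] {D a b : R} (H : IsNondegenerate D a b)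
    {φ : R →+* R'} (hφ : Function.Injective φ) : IsNondegenerate (φ D) (φ a) (φ b) where
  D_ne_zero := (map_ne_zero_iff φ hφ).mpr H.D_ne_zero
  a_ne_zero := (map_ne_zero_iff φ hφ).mpr H.a_ne_zero
  b_ne_zero := (map_ne_zero_iff φ hφ).mpr H.b_ne_zero
  a_ne_b := hφ.ne H.a_ne_b
  discr_ne_zero := by
    simpa only [map_sub, map_add, map_mul, map_pow, map_one, map_ofNat] using
      (map_ne_zero_iff φ hφ).mpr H.discr_ne_zero

end Nondegenerate

section Geometry

variable {F : Type*} [Field F]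

lemma eq_zero_of_symmetric_system {p q r u v : F} (hdet : q ^ 2 - p * r ≠ 0)
    (h0 : p * u + q * v = 0) (h1 : q * u + r * v = 0) : u = 0 ∧ v = 0 := by
  constructor <;> refine (mul_eq_zero.mp ?_).resolve_left hdet
  · linear_combination q * h1 - r * h0
  · linear_combination q * h0 - p * h1

lemma vecMul_jacobian_pencil (D a b α β : F) (t : Fin 5 → F) :
    ![α, β] ᵥ* jacobian (pencil D a b) t =
      ![2 * a * β * t 0 + (α + (a + b) * β) * t 1, (α + (a + b) * β) * t 0 + 2 * b * β * t 1,
        -2 * ((α + β) * t 2), 2 * D * (α * t 3), 2 * D * (β * t 4)] := by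
  ext i
  fin_cases i <;>
    simp [vecMul, jacobian, pencil, mulVec, dotProduct, Fin.sum_univ_five, Matrix.add_apply] <;>
    ring

variable [CharZero F] {D a b : F} {t : Fin 5 → F} {α β : F}

lemma vecMul_jacobian_pencil_eq_zero (hD : D ≠ 0) (h : ![α, β] ᵥ* jacobian (pencil D a b) t = 0) :
    2 * a * β * t 0 + (α + (a + b) * β) * t 1 = 0 ∧
      (α + (a + b) * β) * t 0 + 2 * b * β * t 1 = 0 ∧
      (α + β) * t 2 = 0 ∧ α * t 3 = 0 ∧ β * t 4 = 0 := by
  rw [vecMul_jacobian_pencil] at h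
  have h2D : 2 * D ≠ 0 := mul_ne_zero two_ne_zero hD
  exact ⟨congrFun h 0, congrFun h 1,
    (mul_eq_zero.mp (congrFun h 2)).resolve_left (neg_ne_zero.mpr two_ne_zero),
    (mul_eq_zero.mp (congrFun h 3)).resolve_left h2D,
    (mul_eq_zero.mp (congrFun h 4)).resolve_left h2D⟩

lemma apply_zero_one_eq_zero_of_vecMul_jacobian (H : IsNondegenerate D a b) (hne : (α, β) ≠ 0)
    (h : ![α, β] ᵥ* jacobian (pencil D a b) t = 0) (hα : t 0 * t 1 = t 2 ^ 2 - D * t 3 ^ 2)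
    (hβ : (t 0 + t 1) * (a * t 0 + b * t 1) = t 2 ^ 2 - D * t 4 ^ 2) : t 0 = 0 ∧ t 1 = 0 := by
  obtain ⟨h0, h1, h2, h3, h4⟩ := vecMul_jacobian_pencil_eq_zero H.D_ne_zero h
  by_cases hdet : (α + (a + b) * β) ^ 2 - 2 * a * β * (2 * b * β) = 0
  swap
  · exact eq_zero_of_symmetric_system hdet h0 h1
  have hβ0 : β ≠ 0 := by
    rintro rfl
    simp_all
  have hα0 : α ≠ 0 := by
    rintro rfl
    refine mul_ne_zero (pow_ne_zero 2 (sub_ne_zero.mpr H.a_ne_b)) (pow_ne_zero 2 hβ0) ?_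
    linear_combination hdet
  have hαβ : α + β ≠ 0 := fun hαβ => by
    obtain rfl := eq_neg_of_add_eq_zero_left hαβ
    refine mul_ne_zero H.discr_ne_zero (pow_ne_zero 2 hβ0) ?_
    linear_combination hdet
  obtain ⟨hx, hy, hz⟩ : t 2 = 0 ∧ t 3 = 0 ∧ t 4 = 0 :=
    ⟨by simpa [hαβ] using h2, by simpa [hα0] using h3, by simpa [hβ0] using h4⟩
  rw [hx, hy] at hα
  rw [hx, hz] at hβ
  rcases mul_eq_zero.mp (hα.trans (by ring)) with hu | hv
  · simp_all [H.b_ne_zero]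
  · simp_all [H.a_ne_zero]

lemma eq_zero_of_vecMul_jacobian_pencil_eq_zero (H : IsNondegenerate D a b) (ht : t ≠ 0)
    (hzero : ∀ i, t ⬝ᵥ pencil D a b i *ᵥ t = 0)
    (h : ![α, β] ᵥ* jacobian (pencil D a b) t = 0) : (α, β) = 0 := by
  by_contra hne
  have hα := hzero 0
  have hβ := hzero 1
  rw [dotProduct_pencil_zero] at hα
  rw [dotProduct_pencil_one] at hβ
  obtain ⟨hu, hv⟩ := apply_zero_one_eq_zero_of_vecMul_jacobian H hne h (by linear_combination hα)
    (by linear_combination hβ)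
  obtain ⟨-, -, -, h3, h4⟩ := vecMul_jacobian_pencil_eq_zero H.D_ne_zero h
  have hx : t 2 = 0 := by
    by_cases hα0 : α = 0
    · have hz : t 4 = 0 := by simp_all
      simpa [hu, hv, hz] using hβ
    · have hy : t 3 = 0 := by simp_all
      simpa [hu, hv, hy] using hα
  have hy : t 3 = 0 := by simpa [hu, hx, H.D_ne_zero] using hα
  have hz : t 4 = 0 := by simpa [hu, hv, hx, H.D_ne_zero] using hβ
  exact ht (by ext i; fin_cases i <;> assumption)

lemma IsNondegenerate.isSmoothAtPoints_pencil (H : IsNondegenerate D a b) :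
    IsSmoothAtPoints (pencil D a b) := by
  intro t ht hzero
  have hker : ∀ w, w ᵥ* jacobian (pencil D a b) t = 0 → w = 0 := by
    intro w hw
    have hw' : w = ![w 0, w 1] := funext (Fin.forall_fin_two.mpr ⟨rfl, rfl⟩)
    have hw0 := eq_zero_of_vecMul_jacobian_pencil_eq_zero H ht hzero (hw' ▸ hw)
    exact funext (Fin.forall_fin_two.mpr (Prod.mk_eq_zero.mp hw0))
  have hrows : LinearIndependent F (jacobian (pencil D a b) t).row :=
    vecMul_injective_iff.mp
      ((injective_iff_map_eq_zero (jacobian (pencil D a b) t).vecMulLinear).mpr hker)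
  exact hrows.rank_matrix

omit [CharZero F] in
lemma pencil_map_natCast {F' : Type*} [Field F'] (φ : F →+* F') (p : ℕ) (a b : F) :
    (fun i => (pencil (p : F) a b i).map φ) = pencil (p : F') (φ a) (φ b) := by
  ext1 i
  rw [pencil_map, map_natCast]

lemma isHasseCounterexample_pencil [NumberField K] (p : ℕ) {a b : K}
    (H : IsNondegenerate (p : K) a b)
    (hloc : ∀ v : HeightOneSpectrum (𝓞 K), HasCommonZero (pencil (p : v.adicCompletion K)
      (algebraMap K (v.adicCompletion K) a) (algebraMap K (v.adicCompletion K) b)))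
    (hglob : ¬ HasCommonZero (pencil (p : K) a b)) :
    IsHasseCounterexample fun i => formCoeffs (pencil (p : K) a b i) := by
  have : CharZero (AlgebraicClosure K) :=
    charZero_of_injective_algebraMap (algebraMap K (AlgebraicClosure K)).injective
  simp only [IsHasseCounterexample, isDelPezzoPair_formCoeffs_iff, hasSolution_formCoeffs_iff,
    pencil_map_natCast, RingHom.id_apply]
  refine ⟨⟨?_, ?_⟩, hloc, fun σ => ?_, hglob⟩
  · obtain ⟨r, hr⟩ := IsAlgClosed.exists_pow_nat_eq (p : AlgebraicClosure K) zero_lt_two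
    exact hasCommonZero_pencil_of_sq_eq _ _ hr
  · simpa only [map_natCast] using
      (H.map (algebraMap K (AlgebraicClosure K)).injective).isSmoothAtPoints_pencil
  · exact hasCommonZero_pencil_of_sq_eq _ _ (Real.sq_sqrt (Nat.cast_nonneg p))

end Geometry

/-! ### Local solubility -/

section FiniteField

variable {k : Type*} [Field k] [Finite k]

lemma totalDegree_quadForm_le {R : Type*} [CommRing R] [Nontrivial R] (c : QIdx → R) :
    (quadForm c).totalDegree ≤ 2 := by
  refine totalDegree_finsetSum_le fun q _ => ?_
  have hX (j : Fin 5) : (X j : MvPolynomial (Fin 5) R).totalDegree ≤ 1 := (totalDegree_X j).le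
  calc (C (c q) * X q.1.1 * X q.1.2).totalDegree
      ≤ 0 + 1 + 1 := (totalDegree_mul _ _).trans <| add_le_add
        ((totalDegree_mul _ _).trans <| add_le_add (totalDegree_C _).le (hX _)) (hX _)
    _ = 2 := rfl

lemma hasCommonZero_of_finite (M : Fin 2 → Matrix (Fin 5) (Fin 5) k) : HasCommonZero M := by
  classical
  have := Fintype.ofFinite k
  let f (i : Fin 2) := quadForm (formCoeffs (M i))
  have heval (i : Fin 2) (t : Fin 5 → k) : eval t (f i) = t ⬝ᵥ M i *ᵥ t :=
    eval₂_quadForm_formCoeffs (RingHom.id k) (M i) t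
  have hzero (i : Fin 2) : eval 0 (f i) = 0 := by
    rw [heval, zero_dotProduct]
  have hdvd := char_dvd_card_solutions_of_add_lt (ringChar k) (f₁ := f 0) (f₂ := f 1)
    (lt_of_le_of_lt (add_le_add (totalDegree_quadForm_le _) (totalDegree_quadForm_le _))
      (by simp))
  have : Nonempty {t : Fin 5 → k // eval t (f 0) = 0 ∧ eval t (f 1) = 0} :=
    ⟨⟨0, hzero 0, hzero 1⟩⟩
  have hcard := (CharP.char_is_prime k (ringChar k)).one_lt.trans_le
    (Nat.le_of_dvd Fintype.card_pos hdvd)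
  obtain ⟨⟨t, ht⟩, hne⟩ := Fintype.exists_ne_of_one_lt_card hcard ⟨0, hzero 0, hzero 1⟩
  refine ⟨t, fun h => hne (Subtype.ext h), Fin.forall_fin_two.mpr ?_⟩
  rwa [← heval, ← heval]

lemma exists_mul_sq_add_mul_sq_eq_of_finite (h2 : (2 : k) ≠ 0) {α β : k} (hα : α ≠ 0) (hβ : β ≠ 0)
    (γ : k) : ∃ y z : k, α * y ^ 2 + β * z ^ 2 = γ := by
  have := Fintype.ofFinite k
  have hchar : ringChar k ≠ 2 := fun h => h2 (by exact_mod_cast h ▸ ringChar.Nat.cast_ringChar)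
  obtain ⟨y, z, h⟩ := FiniteField.exists_root_sum_quadratic
    (Polynomial.degree_quadratic (b := 0) (c := 0) hα)
    (Polynomial.degree_quadratic (b := 0) (c := -γ) hβ) (FiniteField.odd_card_of_char_ne_two hchar)
  simp only [Polynomial.eval_add, Polynomial.eval_mul, Polynomial.eval_C, Polynomial.eval_pow,
    Polynomial.eval_X] at h
  exact ⟨y, z, by linear_combination h⟩

lemma exists_pencil_zero_of_not_isSquare (h2 : (2 : k) ≠ 0) {D c d : k} (hD : ¬ IsSquare D)
    (hc : c ≠ 0) (hd : d ≠ 0) :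
    ∃ u v x y z : k, (u ≠ 0 ∨ v ≠ 0) ∧ (y ≠ 0 ∨ z ≠ 0) ∧ u * v = x ^ 2 - D * y ^ 2 ∧
      (u + v) * (c * u + d * v) = x ^ 2 - D * z ^ 2 := by
  obtain ⟨u, v, x, y, z, hne, h0, h1⟩ := hasCommonZero_pencil_iff.mp
    (hasCommonZero_of_finite (pencil D c d))
  have hns (r s : k) (h : r ^ 2 = D * s ^ 2) : r = 0 ∧ s = 0 := by
    have hs : s = 0 := by
      by_contra hs
      refine hD ⟨r / s, ?_⟩
      field_simp
      exact h.symm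
    subst hs
    exact ⟨by simpa using h, rfl⟩
  have huv : u ≠ 0 ∨ v ≠ 0 := by
    by_contra! huv
    obtain ⟨rfl, rfl⟩ := huv
    have hy := hns x y (by linear_combination -h0)
    have hz := hns x z (by linear_combination -h1)
    exact hne ⟨rfl, rfl, hy.1, hy.2, hz.2⟩
  by_cases hyz : y = 0 ∧ z = 0
  swap
  · exact ⟨u, v, x, y, z, huv, by tauto, h0, h1⟩
  obtain ⟨rfl, rfl⟩ := hyz
  have hx : x ≠ 0 := by
    rintro rfl
    rcases mul_eq_zero.mp (h0.trans (by ring)) with rfl | rfl <;> simp_all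
  have hD1 : 1 - D ≠ 0 := fun h => hD ⟨1, by linear_combination -h⟩
  have hy : 2 * x / (1 - D) ≠ 0 := div_ne_zero (mul_ne_zero h2 hx) hD1
  have hconic : (x * (1 + D) / (1 - D)) ^ 2 - D * (2 * x / (1 - D)) ^ 2 = x ^ 2 := by
    field_simp
    ring
  exact ⟨u, v, x * (1 + D) / (1 - D), 2 * x / (1 - D), 2 * x / (1 - D), huv, Or.inl hy,
    by linear_combination h0 - hconic, by linear_combination h1 - hconic⟩

end FiniteField

section Henselian

open IsLocalRing (residue ResidueField residue_surjective residue_eq_zero_iff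
  residue_ne_zero_iff_isUnit)

variable {R : Type*} [CommRing R] [HenselianLocalRing R]

lemma exists_root_of_residue_simple_root (b c a : R) (h0 : residue R (a ^ 2 + b * a + c) = 0)
    (h1 : residue R (2 * a + b) ≠ 0) :
    ∃ r : R, r ^ 2 + b * r + c = 0 ∧ residue R r = residue R a := by
  have hmonic : (Polynomial.X ^ 2 + (Polynomial.C b * Polynomial.X + Polynomial.C c)).Monic :=
    Polynomial.monic_X_pow_add (Polynomial.degree_linear_le.trans_lt (by norm_num))
  obtain ⟨r, hr, hra⟩ := HenselianLocalRing.is_henselian _ hmonic a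
    (by rw [← residue_eq_zero_iff, ← h0]; congr 1; simp [add_assoc])
    (by rw [← residue_ne_zero_iff_isUnit]; convert h1 using 2; simp [one_add_one_eq_two])
  refine ⟨r, ?_, ?_⟩
  · simpa [add_assoc] using hr
  · rwa [← residue_eq_zero_iff, map_sub, sub_eq_zero] at hra

lemma exists_sq_eq_one_add_eight_mul (h2 : (2 : ResidueField R) = 0) (m : R) :
    ∃ r : R, r ^ 2 = 1 + 8 * m := by
  obtain ⟨t, ht, -⟩ := exists_root_of_residue_simple_root 1 (-(2 * m)) 0
    (by simp only [map_add, map_neg, map_mul, map_pow, map_zero, map_ofNat, h2]; ring) (by simp)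
  exact ⟨1 + 2 * t, by linear_combination 4 * ht⟩

variable (h2 : (2 : ResidueField R) ≠ 0)
include h2

lemma exists_mul_sq_eq_of_residue {δ α a : R} (hδ : residue R δ ≠ 0) (ha : residue R a ≠ 0)
    (hα : residue R α = residue R (δ * a ^ 2)) :
    ∃ b : R, δ * b ^ 2 = α ∧ residue R b = residue R a := by
  obtain ⟨ε, hε⟩ := ((residue_ne_zero_iff_isUnit δ).mp hδ).exists_right_inv
  obtain ⟨r, hr, hra⟩ := exists_root_of_residue_simple_root 0 (-(ε * α)) a
    (by
      have hε' : residue R δ * residue R ε = 1 := by rw [← map_mul, hε, map_one]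
      simp only [map_add, map_mul, map_neg, map_pow, map_zero, hα]
      linear_combination (-residue R a ^ 2) * hε')
    (by simpa only [add_zero, map_mul, map_ofNat] using mul_ne_zero h2 ha)
  exact ⟨r, by linear_combination δ * hr + α * hε, hra⟩

lemma exists_eq_sub_mul_sq_of_residue {D α x y : R} (hD : residue R D ≠ 0)
    (h : residue R α = residue R (x ^ 2 - D * y ^ 2)) (hy : residue R y ≠ 0 ∨ α = x ^ 2) :
    ∃ y' : R, α = x ^ 2 - D * y' ^ 2 := by
  rcases hy with hy | rfl
  · obtain ⟨b, hb, -⟩ := exists_mul_sq_eq_of_residue h2 (α := x ^ 2 - α) hD hy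
      (by rw [map_sub, h, ← map_sub, sub_sub_cancel])
    exact ⟨b, by linear_combination hb⟩
  · exact ⟨0, by ring⟩

variable {D c d : R} (hD : residue R D ≠ 0)
include hD

lemma hasCommonZero_pencil_of_residue_zero {u v x y z : R} (huv : residue R u ≠ 0 ∨ residue R v ≠ 0)
    (h0 : residue R (u * v) = residue R (x ^ 2 - D * y ^ 2))
    (h1 : residue R ((u + v) * (c * u + d * v)) = residue R (x ^ 2 - D * z ^ 2))
    (hy : residue R y ≠ 0 ∨ u * v = x ^ 2)
    (hz : residue R z ≠ 0 ∨ (u + v) * (c * u + d * v) = x ^ 2) :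
    HasCommonZero (pencil D c d) := by
  obtain ⟨y', hy'⟩ := exists_eq_sub_mul_sq_of_residue h2 hD h0 hy
  obtain ⟨z', hz'⟩ := exists_eq_sub_mul_sq_of_residue h2 hD h1 hz
  refine hasCommonZero_pencil_iff.mpr ⟨u, v, x, y', z', ?_, hy', hz'⟩
  rintro ⟨rfl, rfl, -⟩
  simp at huv

lemma hasCommonZero_pencil_of_residue_zero_right {u v x z : R} (hv : residue R v ≠ 0)
    (hz : residue R z ≠ 0) (h0 : residue R (u * v) = residue R (x ^ 2))
    (h1 : residue R ((u + v) * (c * u + d * v)) = residue R (x ^ 2 - D * z ^ 2)) :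
    HasCommonZero (pencil D c d) := by
  obtain ⟨w, hw⟩ := ((residue_ne_zero_iff_isUnit v).mp hv).exists_right_inv
  have hu : residue R (x ^ 2 * w) = residue R u := by
    rw [map_mul, ← h0, ← map_mul, mul_assoc, hw, mul_one]
  refine hasCommonZero_pencil_of_residue_zero h2 hD (u := x ^ 2 * w) (v := v) (x := x) (y := 0)
    (z := z) (Or.inr hv) ?_ ?_ (Or.inr (by linear_combination x ^ 2 * hw)) (Or.inl hz)
  · rw [map_mul, hu, ← map_mul, h0]
    congr 1
    ring
  · rw [← h1]
    simp only [map_mul, map_add] at hu ⊢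
    rw [hu]

lemma hasCommonZero_pencil_of_residue_zero_left (hns : ¬ IsSquare (residue R D))
    (hc : residue R c ≠ 0) {u v x y : R} (huv : residue R u ≠ 0 ∨ residue R v ≠ 0)
    (hy : residue R y ≠ 0) (h0 : residue R (u * v) = residue R (x ^ 2 - D * y ^ 2))
    (h1 : residue R ((u + v) * (c * u + d * v)) = residue R (x ^ 2)) :
    HasCommonZero (pencil D c d) := by
  by_cases hx : residue R x = 0
  · have hsum : residue R (u + v) ≠ 0 := by
      intro hsum
      refine hns ⟨residue R u / residue R y, ?_⟩
      field_simp
      simp only [map_mul, map_sub, map_pow, map_add] at h0 hsum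
      linear_combination h0 - residue R u * hsum + residue R x * hx
    have hcduv : residue R c * residue R u + residue R d * residue R v = 0 := by
      rw [map_mul, map_pow, hx, sq, mul_zero, mul_eq_zero] at h1
      simpa only [map_add, map_mul] using h1.resolve_left hsum
    have hv : residue R v ≠ 0 := by
      intro hv
      rw [hv, mul_zero, add_zero, mul_eq_zero] at hcduv
      exact huv.elim (· (hcduv.resolve_left hc)) (· hv)
    obtain ⟨e, he⟩ := ((residue_ne_zero_iff_isUnit c).mp hc).exists_right_inv
    have hu : residue R (-(d * v * e)) = residue R u := by
      have he' : residue R c * residue R e = 1 := by rw [← map_mul, he, map_one]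
      simp only [map_neg, map_mul]
      linear_combination residue R u * he' - residue R e * hcduv
    refine hasCommonZero_pencil_of_residue_zero h2 hD (u := -(d * v * e)) (v := v) (x := 0)
      (y := y) (z := 0) (Or.inr hv) ?_ ?_ (Or.inl hy)
      (Or.inr (by linear_combination d * v * (d * v * e - v) * he))
    · rw [map_mul, hu, ← map_mul, h0]
      simp only [map_sub, map_pow, map_mul, hx, map_zero]
    · simp only [map_mul, map_add] at hcduv ⊢
      rw [hu, hcduv]
      simp
  · obtain ⟨x', hx', hxx'⟩ := exists_mul_sq_eq_of_residue h2 (δ := 1)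
      (α := (u + v) * (c * u + d * v)) (by simp) hx (by rw [h1, one_mul])
    refine hasCommonZero_pencil_of_residue_zero h2 hD (x := x') (y := y) (z := 0) huv ?_ ?_
      (Or.inl hy) (Or.inr (by linear_combination -hx'))
    · rw [h0]
      simp only [map_sub, map_mul, map_pow, hxx']
    · rw [h1]
      simp only [map_sub, map_mul, map_pow, hxx', map_zero]
      ring

lemma hasCommonZero_pencil_of_residue_left_eq_zero [Finite (ResidueField R)]
    (hns : ¬ IsSquare (residue R D)) (hc : residue R c = 0) (hd : residue R d ≠ 0) :
    HasCommonZero (pencil D c d) := by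
  obtain ⟨y₀, z₀, h⟩ := exists_mul_sq_add_mul_sq_eq_of_finite h2 (mul_ne_zero hd hD)
    (neg_ne_zero.mpr hD) (residue R d)
  obtain ⟨y, rfl⟩ := residue_surjective y₀
  obtain ⟨z, rfl⟩ := residue_surjective z₀
  have hz : residue R z ≠ 0 := by
    intro hz
    have hDy : residue R D * residue R y ^ 2 = 1 :=
      mul_left_cancel₀ hd (by rw [hz] at h; linear_combination h)
    have hy : residue R y ≠ 0 := fun hy => by simp [hy] at hDy
    refine hns ⟨(residue R y)⁻¹, ?_⟩
    field_simp
    linear_combination hDy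
  obtain ⟨z', hz'⟩ := exists_eq_sub_mul_sq_of_residue h2 (y := z) (x := 0)
    (α := (-(D * y ^ 2) + 1) * (c * -(D * y ^ 2) + d * 1)) hD
    (by
      simp only [map_sub, map_mul, map_pow, map_add, map_neg, map_one, map_zero, hc]
      linear_combination -h)
    (Or.inl hz)
  exact hasCommonZero_pencil_iff.mpr
    ⟨-(D * y ^ 2), 1, 0, y, z', fun h => one_ne_zero h.2.1, by ring, hz'⟩

lemma hasCommonZero_pencil_of_residue_ne_zero [Finite (ResidueField R)]
    (hcd : residue R c ≠ 0 ∨ residue R d ≠ 0) : HasCommonZero (pencil D c d) := by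
  by_cases hns : IsSquare (residue R D)
  · obtain ⟨r₀, hr₀⟩ := hns
    obtain ⟨r, rfl⟩ := residue_surjective r₀
    obtain ⟨s, hs, -⟩ := exists_mul_sq_eq_of_residue h2 (δ := 1) (α := D) (a := r) (by simp)
      (by rintro h; simp_all) (by rw [hr₀, one_mul, map_pow, sq])
    exact hasCommonZero_pencil_of_sq_eq c d (by rwa [one_mul] at hs)
  by_cases hc : residue R c = 0
  · exact hasCommonZero_pencil_of_residue_left_eq_zero h2 hD hns hc
      (hcd.resolve_left (not_not.mpr hc))
  by_cases hd : residue R d = 0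
  · exact hasCommonZero_pencil_swap (hasCommonZero_pencil_of_residue_left_eq_zero h2 hD hns hd hc)
  obtain ⟨u₀, v₀, x₀, y₀, z₀, huv, hyz, h0, h1⟩ := exists_pencil_zero_of_not_isSquare h2 hns hc hd
  obtain ⟨u, rfl⟩ := residue_surjective u₀
  obtain ⟨v, rfl⟩ := residue_surjective v₀
  obtain ⟨x, rfl⟩ := residue_surjective x₀
  obtain ⟨y, rfl⟩ := residue_surjective y₀
  obtain ⟨z, rfl⟩ := residue_surjective z₀
  simp only [← map_mul, ← map_add, ← map_pow, ← map_sub] at h0 h1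
  by_cases hy : residue R y = 0
  · have hz : residue R z ≠ 0 := hyz.resolve_left (not_not.mpr hy)
    have h0' : residue R (u * v) = residue R (x ^ 2) := by
      rw [h0]
      simp only [map_sub, map_mul, map_pow, hy]
      ring
    rcases huv with hu | hv
    · exact hasCommonZero_pencil_swap (hasCommonZero_pencil_of_residue_zero_right h2 hD hu hz
        (by rw [← h0', mul_comm]) (by rw [← h1]; congr 1; ring))
    · exact hasCommonZero_pencil_of_residue_zero_right h2 hD hv hz h0' h1
  by_cases hz : residue R z = 0
  · refine hasCommonZero_pencil_of_residue_zero_left h2 hD hns hc huv hy h0 ?_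
    rw [h1]
    simp only [map_sub, map_mul, map_pow, hz]
    ring
  exact hasCommonZero_pencil_of_residue_zero h2 hD huv h0 h1 (Or.inl hy) (Or.inl hz)

omit hD in
lemma hasCommonZero_pencil_of_simple_root (D : R) {s : R} (hc : residue R c ≠ 0)
    (hs : residue R s ≠ 0)
    (hroot : residue R ((s ^ 2 + 1) * (c * s ^ 2 + d)) = residue R (s ^ 2))
    (hsimple : residue R (2 * c * s ^ 2 + c + d - 1) ≠ 0) : HasCommonZero (pencil D c d) := by
  obtain ⟨e, he⟩ := ((residue_ne_zero_iff_isUnit c).mp hc).exists_right_inv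
  have he' : residue R c * residue R e = 1 := by rw [← map_mul, he, map_one]
  obtain ⟨w, hw, hws⟩ := exists_root_of_residue_simple_root (e * (c + d - 1)) (e * d) (s ^ 2)
    (by
      simp only [map_add, map_mul, map_sub, map_pow, map_one] at hroot ⊢
      linear_combination residue R e * hroot - residue R s ^ 4 * he')
    (by
      intro h
      apply hsimple
      simp only [map_add, map_mul, map_sub, map_pow, map_one, map_ofNat] at h ⊢
      linear_combination residue R c * h - (residue R c + residue R d - 1) * he')
  obtain ⟨x, hx, -⟩ := exists_mul_sq_eq_of_residue h2 (δ := 1) (α := w) (by simp) hs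
    (by rw [hws, one_mul])
  refine hasCommonZero_pencil_iff.mpr ⟨w, 1, x, 0, 0, fun h => one_ne_zero h.2.1,
    by linear_combination -hx, ?_⟩
  linear_combination c * hw - ((c + d - 1) * w + d) * he - hx

end Henselian

section AdicCompletion

open IsLocalRing (residue ResidueField residue_surjective residue_eq_zero_iff
  residue_ne_zero_iff_isUnit)

variable [NumberField K] (v : HeightOneSpectrum (𝓞 K))

local notation "K_v" => v.adicCompletion K
local notation "O_v" => v.adicCompletionIntegers K

lemma norm_le_one_iff_mem_adicCompletionIntegers (x : K_v) : ‖x‖ ≤ 1 ↔ x ∈ O_v := by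
  rw [HeightOneSpectrum.mem_adicCompletionIntegers]
  exact Valued.toNormedField.norm_le_one_iff

lemma mem_span_singleton_pow_iff_norm_le {ϖ : O_v} (hϖ : ϖ ≠ 0) (n : ℕ) (x : O_v) :
    x ∈ Ideal.span {ϖ} ^ n ↔ ‖(x : K_v)‖ ≤ ‖(ϖ : K_v)‖ ^ n := by
  rw [Ideal.span_singleton_pow, Ideal.mem_span_singleton]
  have h0 : (ϖ : K_v) ≠ 0 := by simpa using hϖ
  constructor
  · rintro ⟨y, rfl⟩
    push_cast
    rw [norm_mul, norm_pow]
    exact mul_le_of_le_one_right (by positivity)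
      ((norm_le_one_iff_mem_adicCompletionIntegers v y).mpr y.2)
  · intro h
    have hy : (x : K_v) / (ϖ : K_v) ^ n ∈ O_v := by
      rw [← norm_le_one_iff_mem_adicCompletionIntegers, norm_div, norm_pow]
      exact div_le_one_of_le₀ h (by positivity)
    refine ⟨⟨_, hy⟩, Subtype.ext ?_⟩
    push_cast
    field_simp

lemma norm_lt_one_of_irreducible {ϖ : O_v} (hϖ : Irreducible ϖ) : ‖(ϖ : K_v)‖ < 1 := by
  by_contra! h
  refine hϖ.not_isUnit (Ideal.span_singleton_eq_top.mp ((Ideal.eq_top_iff_one _).mpr ?_))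
  simpa only [pow_one] using
    (mem_span_singleton_pow_iff_norm_le v hϖ.ne_zero 1 1).mpr (by simpa using h)

lemma exists_norm_sub_le_pow {f : ℕ → O_v} {q : ℝ} (hq : q < 1)
    (hf : ∀ ⦃m n⦄, m ≤ n → ‖(f m : K_v) - f n‖ ≤ q ^ m) :
    ∃ L : O_v, ∀ n, ‖(f n : K_v) - L‖ ≤ q ^ n := by
  have hcauchy : CauchySeq fun n => (f n : K_v) :=
    cauchySeq_of_le_geometric _ 1 hq fun n => by
      simpa only [dist_eq_norm, one_mul] using hf n.le_succ
  obtain ⟨L, hL⟩ := cauchySeq_tendsto_of_complete hcauchy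
  have hmem : L ∈ O_v := by
    rw [← norm_le_one_iff_mem_adicCompletionIntegers]
    exact le_of_tendsto' hL.norm
      fun m => (norm_le_one_iff_mem_adicCompletionIntegers v _).mpr (f m).2
  exact ⟨⟨L, hmem⟩, fun n => le_of_tendsto (tendsto_const_nhds.sub hL).norm
    (Filter.eventually_atTop.mpr ⟨n, fun _ hm => hf hm⟩)⟩

instance isAdicComplete_adicCompletionIntegers :
    IsAdicComplete (IsLocalRing.maximalIdeal O_v) O_v where
  haus' := (IsHausdorff.of_le_jacobson _ _ (IsLocalRing.maximalIdeal_le_jacobson _)).haus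
  prec' f hf := by
    obtain ⟨ϖ, hϖ⟩ := IsDiscreteValuationRing.exists_irreducible O_v
    simp only [hϖ.maximalIdeal_eq, smul_eq_mul, Ideal.mul_top, SModEq.sub_mem,
      mem_span_singleton_pow_iff_norm_le v hϖ.ne_zero] at hf ⊢
    simpa using exists_norm_sub_le_pow v (norm_lt_one_of_irreducible v hϖ)
      fun m n hmn => by simpa using hf hmn

instance henselianLocalRing_adicCompletionIntegers : HenselianLocalRing O_v where
  is_henselian f hf a h₀ h₁ := HenselianRing.is_henselian f hf a h₀ (h₁.map _)

lemma residue_algebraMap_eq_zero_iff (a : 𝓞 K) :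
    residue O_v (algebraMap (𝓞 K) O_v a) = 0 ↔ a ∈ v.asIdeal := by
  rw [← not_iff_not, ← ne_eq, residue_ne_zero_iff_isUnit,
    HeightOneSpectrum.adicCompletionIntegers.isUnit_iff_valued_eq_one,
    ← HeightOneSpectrum.valuation_eq_one_iff_notMem (K := K),
    ← HeightOneSpectrum.valuedAdicCompletion_eq_valuation]
  rfl

lemma residue_eq_residue_of_valued_sub_lt_one {x y : O_v}
    (h : Valued.v ((x : K_v) - y) < 1) : residue O_v x = residue O_v y := by
  rw [← sub_eq_zero, ← map_sub]
  by_contra hne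
  rw [← ne_eq, residue_ne_zero_iff_isUnit,
    HeightOneSpectrum.adicCompletionIntegers.isUnit_iff_valued_eq_one] at hne
  exact h.ne hne

lemma residue_comp_algebraMap_surjective :
    Function.Surjective ((residue O_v).comp (algebraMap (𝓞 K) O_v)) := by
  intro y
  obtain ⟨x, rfl⟩ := residue_surjective y
  obtain ⟨k, hk⟩ := (HeightOneSpectrum.denseRange_algebraMap K v).exists_dist_lt (x : K_v) one_pos
  rw [dist_eq_norm, Valued.toNormedField.norm_lt_one_iff] at hk
  have hkO : algebraMap K K_v k ∈ O_v := by
    simpa only [sub_sub_cancel] using sub_mem x.2 ((HeightOneSpectrum.mem_adicCompletionIntegers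
      _ _ _).mpr hk.le)
  have hval (l : K) : Valued.v (algebraMap K K_v l) = v.valuation K l :=
    HeightOneSpectrum.valuedAdicCompletion_eq_valuation' v l
  have hk1 := (HeightOneSpectrum.mem_adicCompletionIntegers _ _ _).mp hkO
  rw [hval] at hk1
  obtain ⟨a, ha⟩ := v.exists_valuation_sub_lt_of_integer hk1 1
  rw [Units.val_one, ← hval, map_sub] at ha
  have ha' : residue O_v (algebraMap (𝓞 K) O_v a) = residue O_v ⟨_, hkO⟩ :=
    residue_eq_residue_of_valued_sub_lt_one v ha
  have hk' : residue O_v x = residue O_v ⟨_, hkO⟩ :=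
    residue_eq_residue_of_valued_sub_lt_one v hk
  exact ⟨a, by rw [RingHom.comp_apply, ha', hk']⟩

instance finite_residueField_adicCompletionIntegers : Finite (ResidueField O_v) := by
  have : Finite (𝓞 K ⧸ v.asIdeal) := Ideal.finiteQuotientOfFreeOfNeBot _ v.ne_bot
  refine Finite.of_surjective (Ideal.Quotient.lift v.asIdeal
    ((residue O_v).comp (algebraMap (𝓞 K) O_v))
    fun a ha => (residue_algebraMap_eq_zero_iff v a).mpr ha) ?_
  exact Ideal.Quotient.lift_surjective_of_surjective _ _ (residue_comp_algebraMap_surjective v)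

lemma hasCommonZero_pencil_adicCompletion {p : ℕ} {c d : 𝓞 K}
    (h : HasCommonZero (pencil (p : O_v) (algebraMap (𝓞 K) O_v c) (algebraMap (𝓞 K) O_v d))) :
    HasCommonZero (pencil (p : K_v) (algebraMap K K_v c) (algebraMap K K_v d)) := by
  have := h.map (φ := algebraMap O_v K_v) Subtype.val_injective
  simp only [pencil_map, map_natCast] at this
  exact this

lemma hasCommonZero_pencil_of_notMem {p : ℕ} {c d : 𝓞 K} (hp : (p : 𝓞 K) ∉ v.asIdeal)
    (h2 : (2 : 𝓞 K) ∉ v.asIdeal) (hcd : c ∉ v.asIdeal ∨ d ∉ v.asIdeal) :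
    HasCommonZero (pencil (p : K_v) (algebraMap K K_v c) (algebraMap K K_v d)) := by
  simp only [← residue_algebraMap_eq_zero_iff, map_natCast, map_ofNat] at hp h2 hcd
  exact hasCommonZero_pencil_adicCompletion v
    (hasCommonZero_pencil_of_residue_ne_zero h2 (by simpa using hp) hcd)

lemma hasCommonZero_pencil_of_two_mem {p : ℕ} (hp : p % 8 = 1) (c d : 𝓞 K)
    (h2 : (2 : 𝓞 K) ∈ v.asIdeal) :
    HasCommonZero (pencil (p : K_v) (algebraMap K K_v c) (algebraMap K K_v d)) := by
  rw [← residue_algebraMap_eq_zero_iff, map_ofNat, map_ofNat] at h2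
  obtain ⟨r, hr⟩ := exists_sq_eq_one_add_eight_mul h2 ((p / 8 : ℕ) : O_v)
  refine hasCommonZero_pencil_adicCompletion v (hasCommonZero_pencil_of_sq_eq _ _ (r := r) ?_)
  rw [hr]
  exact_mod_cast congrArg (Nat.cast : ℕ → O_v) (by omega : 1 + 8 * (p / 8) = p)

lemma hasCommonZero_pencil_of_congruences (p : ℕ) {c d s t : 𝓞 K} (h2 : (2 : 𝓞 K) ∉ v.asIdeal)
    (hs : s ∉ v.asIdeal) (hst : s ^ 2 - t ∉ v.asIdeal)
    (hc : c * ((1 + s ^ 2) * (1 + t)) - 1 ∈ v.asIdeal) (hd : d - c * s ^ 2 * t ∈ v.asIdeal) :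
    HasCommonZero (pencil (p : K_v) (algebraMap K K_v c) (algebraMap K K_v d)) := by
  simp only [← residue_algebraMap_eq_zero_iff, map_sub, map_mul, map_add, map_one, map_pow,
    map_ofNat] at hc hd h2 hs hst
  have hc0 : residue O_v (algebraMap (𝓞 K) O_v c) ≠ 0 := by
    intro h
    simp [h] at hc
  refine hasCommonZero_pencil_adicCompletion v (hasCommonZero_pencil_of_simple_root h2 _ hc0 hs ?_
    fun h => (mul_ne_zero hc0 hst) ?_)
  · simp only [map_mul, map_add, map_pow, map_one]
    linear_combination (residue O_v (algebraMap (𝓞 K) O_v s) ^ 2 + 1) * hd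
      + residue O_v (algebraMap (𝓞 K) O_v s) ^ 2 * hc
  · simp only [map_mul, map_add, map_sub, map_pow, map_one, map_ofNat] at h
    linear_combination h - hd - hc

end AdicCompletion

/-! ### The reciprocity obstruction -/

section ZeroRatio

variable {F Γ : Type*} [Field F] [LinearOrderedCommGroupWithZero Γ]

/-- `r` is the ratio of the first two coordinates of a zero of `pencil D c d` whose second
coordinate is normalised to `1`. -/
def IsZeroRatio (D c d r : F) : Prop :=
  ∃ x y z, r = x ^ 2 - D * y ^ 2 ∧ (r + 1) * (c * r + d) = x ^ 2 - D * z ^ 2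

variable (v : Valuation F Γ) {D : F}

lemma valuation_sub_of_ne {x y : F} (h : v x ≠ v y) : v (x - y) = max (v x) (v y) := by
  rw [sub_eq_add_neg, v.map_add_of_distinct_val (by rwa [v.map_neg]), v.map_neg]

lemma valuation_sub_mul_sq_of_unit (hD : v D = 1) (hns : ∀ x, 1 ≤ v (x ^ 2 - D)) (x y : F) :
    v (x ^ 2 - D * y ^ 2) = max (v x) (v y) ^ 2 := by
  have hDy : v (D * y ^ 2) = v y ^ 2 := by rw [map_mul, map_pow, hD, one_mul]
  rw [(pow_left_mono 2).map_max]
  by_cases hxy : v x = v y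
  · rcases eq_or_ne y 0 with rfl | hy
    · simp
    have hunit : v ((x / y) ^ 2 - D) = 1 := by
      refine le_antisymm ((v.map_sub _ _).trans ?_) (hns _)
      rw [map_pow, map_div₀, hxy, div_self (v.ne_zero_iff.mpr hy), one_pow, hD, max_self]
    rw [show x ^ 2 - D * y ^ 2 = y ^ 2 * ((x / y) ^ 2 - D) by field_simp, map_mul, hunit, map_pow,
      mul_one, hxy, max_self]
  · rw [valuation_sub_of_ne, map_pow, hDy]
    rw [map_pow, hDy]
    exact (pow_left_injective two_ne_zero).ne hxy

lemma IsZeroRatio.isSquare_valuation_mul_add_one {c d r : F} (h : IsZeroRatio D c d r)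
    (hD : v D = 1) (hns : ∀ x, 1 ≤ v (x ^ 2 - D)) (hc : v c ≤ 1) (hd : v d ≤ 1) :
    IsSquare (v (r * (r + 1))) := by
  obtain ⟨x, y, z, h₁, h₂⟩ := h
  have hr := valuation_sub_mul_sq_of_unit v hD hns x y
  have hrcd := valuation_sub_mul_sq_of_unit v hD hns x z
  rw [← h₁] at hr
  rw [← h₂] at hrcd
  rw [map_mul]
  rcases lt_trichotomy (v r) 1 with hlt | heq | hgt
  · rw [v.map_add_eq_of_lt_right (by rwa [map_one]), map_one, mul_one, hr]
    exact IsSquare.sq _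
  · have hadd : v (r + 1) ≤ 1 := (v.map_add _ _).trans (by rw [heq, map_one, max_self])
    suffices 1 ≤ v (r + 1) by rw [heq, hadd.antisymm this, one_mul]; exact IsSquare.one
    by_contra! hlt
    have hfactor : v (c * r + d) ≤ 1 :=
      (v.map_add _ _).trans (max_le (by rwa [map_mul, heq, mul_one]) hd)
    have hx : v x < 1 := by
      rw [map_mul] at hrcd
      have := hrcd.symm.trans_lt ((mul_le_of_le_one_right' hfactor).trans_lt hlt)
      exact (le_max_left _ _).trans_lt ((pow_lt_one_iff two_ne_zero).mp this)
    have hone : v (1 ^ 2 - D * y ^ 2) < 1 := by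
      rw [show 1 ^ 2 - D * y ^ 2 = (r + 1) - x ^ 2 by rw [h₁]; ring]
      exact v.map_sub_lt hlt (by rw [map_pow]; exact pow_lt_one' hx two_ne_zero)
    rw [valuation_sub_mul_sq_of_unit v hD hns, map_one] at hone
    exact hone.not_ge (one_le_pow₀ (le_max_left _ _))
  · rw [v.map_add_eq_of_lt_left (by rwa [map_one])]
    exact ⟨v r, rfl⟩

lemma eq_zero_of_valuation_sq_eq (hD : ¬ IsSquare (v D)) {x y : F}
    (h : v x ^ 2 = v D * v y ^ 2) : x = 0 ∧ y = 0 := by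
  rcases eq_or_ne y 0 with rfl | hy
  · simpa using h
  · have hvy : v y ≠ 0 := v.ne_zero_iff.mpr hy
    exact absurd ⟨v x / v y, by rw [← sq, div_pow, h]; field_simp⟩ hD

lemma eq_zero_of_unit_mul_sq_eq (hD : ¬ IsSquare (v D)) {e x y : F} (he : v e = 1)
    (h : e * x ^ 2 = D * y ^ 2) : x = 0 ∧ y = 0 := by
  refine eq_zero_of_valuation_sq_eq v hD ?_
  rw [← map_pow, ← map_pow, ← map_mul, ← h, map_mul, he, one_mul]

lemma valuation_sub_mul_sq_of_not_isSquare (hD : ¬ IsSquare (v D)) (x y : F) :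
    v (x ^ 2 - D * y ^ 2) = max (v x ^ 2) (v D * v y ^ 2) := by
  by_cases h : v x ^ 2 = v D * v y ^ 2
  · obtain ⟨rfl, rfl⟩ := eq_zero_of_valuation_sq_eq v hD h
    simp only [ne_eq, OfNat.ofNat_ne_zero, not_false_eq_true, zero_pow, mul_zero, sub_self,
      map_zero, max_self]
  · rw [valuation_sub_of_ne] <;> simp only [map_mul, map_pow, ne_eq, h, not_false_eq_true]

variable {c d r : F} (hD : ¬ IsSquare (v D)) (hc : v c = 1) (hd : v d = 1)
include hD hc hd

lemma exists_isZeroRatio (h : HasCommonZero (pencil D c d)) :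
    ∃ r, r ≠ 0 ∧ r + 1 ≠ 0 ∧ IsZeroRatio D c d r := by
  obtain ⟨a, b, x, y, z, hne, h₁, h₂⟩ := hasCommonZero_pencil_iff.mp h
  have hzero {e x y : F} (he : v e = 1) := eq_zero_of_unit_mul_sq_eq v hD (x := x) (y := y) he
  have hb : b ≠ 0 := by
    rintro rfl
    obtain ⟨rfl, rfl⟩ := hzero (x := x) (y := y) (map_one v) (by linear_combination -h₁)
    obtain ⟨rfl, rfl⟩ := hzero (e := -c) (x := a) (y := z) (by rwa [v.map_neg])
      (by linear_combination -h₂)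
    simp at hne
  have ha : a ≠ 0 := by
    rintro rfl
    obtain ⟨rfl, rfl⟩ := hzero (x := x) (y := y) (map_one v) (by linear_combination -h₁)
    exact hb (hzero (e := -d) (y := z) (by rwa [v.map_neg]) (by linear_combination -h₂)).1
  have hab : a + b ≠ 0 := fun hab => by
    obtain ⟨rfl, rfl⟩ := hzero (x := x) (y := z) (map_one v)
      (by linear_combination (c * a + d * b) * hab - h₂)
    exact ha (hzero (y := y) (map_one v) (by linear_combination a * hab - h₁)).1
  refine ⟨a / b, div_ne_zero ha hb, ?_, x / b, y / b, z / b, ?_, ?_⟩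
  · rwa [div_add_one hb, div_ne_zero_iff, and_iff_left hb]
  · field_simp
    linear_combination h₁
  · field_simp
    linear_combination h₂

namespace IsZeroRatio

lemma valuation_eq_one (h : IsZeroRatio D c d r) (hr : r ≠ 0) : v r = 1 := by
  obtain ⟨x, y, z, h₁, h₂⟩ := h
  have hvr := valuation_sub_mul_sq_of_not_isSquare v hD x y
  have hprod := valuation_sub_mul_sq_of_not_isSquare v hD x z
  rw [← h₁] at hvr
  rw [← h₂, map_mul] at hprod
  have hx : v x ^ 2 ≤ v r := hvr ▸ le_max_left _ _
  have hcr : v (c * r) = v r := by rw [map_mul, hc, one_mul]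
  rcases lt_trichotomy (v r) 1 with hlt | heq | hgt
  · rw [v.map_add_eq_of_lt_right (by rwa [map_one]),
      v.map_add_eq_of_lt_right (by rwa [hcr, hd]), map_one, hd, one_mul] at hprod
    rcases max_choice (v x ^ 2) (v D * v z ^ 2) with hmax | hmax <;> rw [hmax] at hprod
    · exact absurd hprod (hx.trans_lt hlt).ne'
    · exact absurd (eq_zero_of_valuation_sq_eq v hD (x := 1) (by simpa using hprod)).1 one_ne_zero
  · exact heq
  · rw [v.map_add_eq_of_lt_left (by rwa [map_one]),
      v.map_add_eq_of_lt_left (by rwa [hcr, hd]), hcr, ← sq] at hprod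
    rcases max_choice (v x ^ 2) (v D * v z ^ 2) with hmax | hmax <;> rw [hmax] at hprod
    · exact absurd (hprod.trans_le hx) (lt_self_pow₀ hgt one_lt_two).not_ge
    · exact absurd (eq_zero_of_valuation_sq_eq v hD hprod).1 hr

/- The congruences on `c` and `d` turn `(r + 1) (c r + d) - r` into
`c (r - s ^ 2) (r - t)` modulo the maximal ideal, and `r` is a square there. -/
lemma valuation_sub_sq_lt_one (h : IsZeroRatio D c d r) (hr : r ≠ 0) {s t : F}
    (ht : ∀ x, 1 ≤ v (x ^ 2 - t)) (hcst : v (c * ((1 + s ^ 2) * (1 + t)) - 1) < 1)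
    (hdst : v (d - c * s ^ 2 * t) < 1) : v (r - s ^ 2) < 1 := by
  have hvr := h.valuation_eq_one v hD hc hd hr
  obtain ⟨x, y, z, h₁, h₂⟩ := h
  have hlt {w : F} (hw : v (D * w ^ 2) ≤ 1) : v (D * w ^ 2) < 1 := by
    refine hw.lt_of_ne fun heq => one_ne_zero (α := F) (eq_zero_of_unit_mul_sq_eq v hD
      (e := D * w ^ 2) (x := 1) (y := w) heq (by ring)).1
  have hadd : v (r + 1) ≤ 1 := (v.map_add _ _).trans (by rw [hvr, map_one, max_self])
  have hDy : v (D * y ^ 2) < 1 := hlt <| by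
    rw [← hvr, h₁, valuation_sub_mul_sq_of_not_isSquare v hD, map_mul, map_pow]
    exact le_max_right _ _
  have hDz : v (D * z ^ 2) < 1 := hlt <| by
    have hprod : v ((r + 1) * (c * r + d)) ≤ 1 := by
      rw [map_mul]
      refine mul_le_one' hadd ((v.map_add _ _).trans ?_)
      rw [map_mul, hvr, hc, hd, one_mul, max_self]
    rw [h₂, valuation_sub_mul_sq_of_not_isSquare v hD] at hprod
    rw [map_mul, map_pow]
    exact (le_max_right _ _).trans hprod
  have hmul : v (c * ((r - s ^ 2) * (r - t))) < 1 := by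
    rw [show c * ((r - s ^ 2) * (r - t)) = (D * y ^ 2 - D * z ^ 2) -
      (r * (c * ((1 + s ^ 2) * (1 + t)) - 1) + (r + 1) * (d - c * s ^ 2 * t)) by
        linear_combination h₂ - h₁]
    refine v.map_sub_lt (v.map_sub_lt hDy hDz) (v.map_add_lt ?_ ?_) <;> rw [map_mul]
    · rwa [hvr, one_mul]
    · exact (mul_le_of_le_one_left' hadd).trans_lt hdst
  have hrt : 1 ≤ v (r - t) := by
    by_contra! hlt
    refine (ht x).not_gt ?_
    rw [show x ^ 2 - t = (r - t) + D * y ^ 2 by rw [h₁]; ring]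
    exact v.map_add_lt hlt hDy
  rw [map_mul, map_mul, hc, one_mul] at hmul
  exact (le_mul_of_one_le_right' hrt).trans_lt hmul

end IsZeroRatio

end ZeroRatio

section Dedekind

variable {R : Type*} [CommRing R] {n x : R}

lemma exists_le_asIdeal {I : Ideal R} (hI : I ≠ ⊤) (hn : n ≠ 0) (hnI : n ∈ I) :
    ∃ v : HeightOneSpectrum R, I ≤ v.asIdeal := by
  obtain ⟨m, hm, hIm⟩ := Ideal.exists_le_maximal I hI
  exact ⟨⟨m, hm.isPrime, fun h => hn (by simpa [h] using hIm hnI)⟩, hIm⟩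

lemma mem_asIdeal_of_mem_span {v : HeightOneSpectrum R} (hv : n ∈ v.asIdeal)
    (hx : x ∈ Ideal.span {n}) : x ∈ v.asIdeal :=
  (Ideal.span_singleton_le_iff_mem _).mpr hv hx

lemma isUnit_mk_span_singleton_iff (hn : n ≠ 0) :
    IsUnit (Ideal.Quotient.mk (Ideal.span {n}) x) ↔
      ∀ v : HeightOneSpectrum R, n ∈ v.asIdeal → x ∉ v.asIdeal := by
  constructor
  · intro hunit v hnv hxv
    have := hunit.map (Ideal.Quotient.factor ((Ideal.span_singleton_le_iff_mem _).mpr hnv))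
    rw [Ideal.Quotient.factor_mk, Ideal.Quotient.eq_zero_iff_mem.mpr hxv] at this
    exact not_isUnit_zero this
  · intro h
    by_contra hunit
    obtain ⟨M, hM, hxM⟩ := exists_max_ideal_of_mem_nonunits hunit
    have hnM : n ∈ M.comap (Ideal.Quotient.mk (Ideal.span {n})) := by
      simp [Ideal.mem_comap]
    obtain ⟨v, hv⟩ := exists_le_asIdeal (Ideal.comap_ne_top _ hM.ne_top) hn hnM
    exact h v (hv hnM) (hv hxM)

variable [IsDedekindDomain R]

lemma mem_span_singleton_of_forall_mem (hn : n ≠ 0)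
    (hsq : ∀ v : HeightOneSpectrum R, n ∈ v.asIdeal → n ∉ v.asIdeal ^ 2)
    (hx : ∀ v : HeightOneSpectrum R, n ∈ v.asIdeal → x ∈ v.asIdeal) : x ∈ Ideal.span {n} := by
  by_contra hxn
  have hmem {y : R} : y ∈ (Ideal.span {n}).colon {x} ↔ y * x ∈ Ideal.span {n} :=
    Submodule.mem_colon_singleton
  obtain ⟨v, hle⟩ := exists_le_asIdeal (I := (Ideal.span {n}).colon {x})
    (fun h => hxn (by simpa using hmem.mp ((Ideal.eq_top_iff_one _).mp h))) hn
    (hmem.mpr (Ideal.mul_mem_right _ _ (Ideal.mem_span_singleton_self n)))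
  have hnv : n ∈ v.asIdeal :=
    hle (hmem.mpr (Ideal.mul_mem_right _ _ (Ideal.mem_span_singleton_self n)))
  obtain ⟨J, hJ⟩ := Ideal.dvd_span_singleton.mpr hnv
  obtain ⟨y, hyJ, hyv⟩ : ∃ y ∈ J, y ∉ v.asIdeal := by
    by_contra! hJv
    refine hsq v hnv ?_
    rw [sq, ← Ideal.span_singleton_le_iff_mem, hJ]
    exact Ideal.mul_mono_right hJv
  refine hyv (hle (hmem.mpr ?_))
  rw [hJ, mul_comm y]
  exact Ideal.mul_mem_mul (hx v hnv) hyJ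

lemma exists_forall_of_forall_exists (hn : n ≠ 0)
    {P : ∀ v : HeightOneSpectrum R, R ⧸ v.asIdeal → Prop}
    (h : ∀ v : HeightOneSpectrum R, n ∈ v.asIdeal → ∃ y, P v y) :
    ∃ x, ∀ v : HeightOneSpectrum R, n ∈ v.asIdeal → P v (Ideal.Quotient.mk v.asIdeal x) := by
  have hfin : {v : HeightOneSpectrum R | v.asIdeal ∣ Ideal.span {n}}.Finite :=
    Ideal.finite_factors (by simpa using hn)
  have hmem (v) : v ∈ hfin.toFinset ↔ n ∈ v.asIdeal :=
    hfin.mem_toFinset.trans Ideal.dvd_span_singleton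
  have hlift (v : hfin.toFinset) : ∃ x, P v (Ideal.Quotient.mk v.1.asIdeal x) := by
    obtain ⟨y, hy⟩ := h v ((hmem v).mp v.2)
    obtain ⟨x, rfl⟩ := Ideal.Quotient.mk_surjective y
    exact ⟨x, hy⟩
  choose f hf using hlift
  obtain ⟨x, hx⟩ := IsDedekindDomain.exists_forall_sub_mem_ideal (s := hfin.toFinset)
    HeightOneSpectrum.asIdeal (fun _ => 1) (fun v _ => v.prime)
    (fun _ _ _ _ hne h => hne (HeightOneSpectrum.ext h)) f
  refine ⟨x, fun v hnv => ?_⟩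
  have hv := (hmem v).mpr hnv
  rw [Ideal.Quotient.eq.mpr (by simpa only [pow_one] using hx v hv)]
  exact hf ⟨v, hv⟩

variable {L : Type*} [Field L] [Algebra R L] [IsFractionRing R L]

lemma exists_mul_eq_algebraMap {r : L} (hn : n ≠ 0)
    (hr : ∀ v : HeightOneSpectrum R, n ∈ v.asIdeal → v.valuation L r ≤ 1) :
    ∃ β a : R, β - 1 ∈ Ideal.span {n} ∧ algebraMap R L a = algebraMap R L β * r := by
  let I : Ideal R :=
    { carrier := {b | ∃ a, algebraMap R L a = algebraMap R L b * r}
      zero_mem' := ⟨0, by simp⟩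
      add_mem' := by
        rintro b b' ⟨a, ha⟩ ⟨a', ha'⟩
        exact ⟨a + a', by rw [map_add, map_add, ha, ha', add_mul]⟩
      smul_mem' := by
        rintro k b ⟨a, ha⟩
        exact ⟨k * a, by rw [smul_eq_mul, map_mul, map_mul, ha, mul_assoc]⟩ }
  have htop : I ⊔ Ideal.span {n} = ⊤ := by
    by_contra hne
    have hn' : n ∈ I ⊔ Ideal.span {n} := Ideal.mem_sup_right (Ideal.mem_span_singleton_self n)
    obtain ⟨v, hv⟩ := exists_le_asIdeal hne hn hn'
    obtain ⟨a, b, hb⟩ := v.exists_primeCompl_mul_eq_of_integer r (hr v (hv hn'))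
    exact b.2 (hv (Ideal.mem_sup_left ⟨a, by rw [mul_comm]; exact hb.symm⟩))
  obtain ⟨β, ⟨a, ha⟩, k, hk, hβk⟩ := Submodule.mem_sup.mp ((Ideal.eq_top_iff_one _).mp htop)
  refine ⟨β, a, ?_, ha⟩
  rw [← hβk, sub_add_cancel_left]
  exact neg_mem hk

lemma exists_mul_eq_algebraMap_of_valuation_sub_lt_one {r : L} (hn : n ≠ 0)
    (hsq : ∀ v : HeightOneSpectrum R, n ∈ v.asIdeal → n ∉ v.asIdeal ^ 2)
    (hr : ∀ v : HeightOneSpectrum R, n ∈ v.asIdeal → v.valuation L (r - algebraMap R L x) < 1) :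
    ∃ β a : R, β - 1 ∈ Ideal.span {n} ∧ a - x ∈ Ideal.span {n} ∧
      algebraMap R L a = algebraMap R L β * r := by
  obtain ⟨β, a, hβ, ha⟩ := exists_mul_eq_algebraMap (r := r) hn fun v hnv => by
    rw [← sub_add_cancel r (algebraMap R L x)]
    exact (v.valuation L).map_add_le (hr v hnv).le (v.valuation_le_one x)
  refine ⟨β, a, hβ, mem_span_singleton_of_forall_mem hn hsq fun v hnv => ?_, ha⟩
  have hβx : a - x - (β - 1) * x ∈ v.asIdeal := by
    refine (v.valuation_lt_one_iff_mem (K := L) _).mp ?_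
    change v.valuation L (algebraMap R L (a - x - (β - 1) * x)) < 1
    rw [show a - x - (β - 1) * x = a - β * x by ring, map_sub, map_mul, ha, ← mul_sub, map_mul]
    exact (mul_le_of_le_one_left' (v.valuation_le_one β)).trans_lt (hr v hnv)
  exact (Submodule.sub_mem_iff_left _ <| Ideal.mul_mem_right _ _ <|
    mem_asIdeal_of_mem_span hnv hβ).mp hβx

variable (L) (v : HeightOneSpectrum R)

lemma not_isSquare_valuation (hx : x ∈ v.asIdeal) (hx2 : x ∉ v.asIdeal ^ 2) :
    ¬ IsSquare (v.valuation L (algebraMap R L x)) := by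
  rw [v.valuation_of_algebraMap]
  rintro ⟨g, hg⟩
  have hle : v.intValuation x ≤ WithZero.exp (-((1 : ℕ) : ℤ)) :=
    (v.intValuation_le_pow_iff_mem _ _).mpr (by rwa [pow_one])
  have hgt : ¬ v.intValuation x ≤ WithZero.exp (-((2 : ℕ) : ℤ)) :=
    (v.intValuation_le_pow_iff_mem _ _).not.mpr hx2
  have hg0 : g ≠ 0 := by
    rintro rfl
    simp [hg] at hgt
  rw [hg, ← WithZero.exp_log hg0, ← WithZero.exp_add, WithZero.exp_le_exp] at hle hgt
  omega

lemma one_le_valuation_sq_sub {t : R} (ht : ∀ y, y ^ 2 - t ∉ v.asIdeal) (y : L) :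
    1 ≤ v.valuation L (y ^ 2 - algebraMap R L t) := by
  by_contra! hlt
  have hy : v.valuation L y ≤ 1 := by
    have : v.valuation L (y ^ 2) ≤ 1 := by
      rw [← sub_add_cancel (y ^ 2) (algebraMap R L t)]
      exact v.valuation L |>.map_add_le hlt.le (v.valuation_le_one t)
    rwa [map_pow, pow_le_one_iff two_ne_zero] at this
  obtain ⟨a, ha⟩ := v.exists_valuation_sub_lt_of_integer hy 1
  refine ht a ((v.valuation_lt_one_iff_mem (K := L) _).mp ?_)
  change v.valuation L (algebraMap R L (a ^ 2 - t)) < 1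
  rw [map_sub, map_pow, show algebraMap R L a ^ 2 - algebraMap R L t =
    (algebraMap R L a - y) * (algebraMap R L a + y) + (y ^ 2 - algebraMap R L t) by ring]
  refine (v.valuation L).map_add_lt ?_ hlt
  rw [map_mul]
  exact (mul_le_of_le_one_right' ((v.valuation L).map_add_le (v.valuation_le_one a) hy)).trans_lt ha

end Dedekind

section Norm

section NormMod

variable {S : Type*} [CommRing S] [Module.Free ℤ S] [Module.Finite ℤ S]

lemma intCast_norm_eq_det_baseChange (n : ℕ) (x : S) :
    ((Algebra.norm ℤ x : ℤ) : ZMod n) =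
      LinearMap.det ((LinearMap.mulLeft ℤ x).baseChange (ZMod n)) := by
  rw [LinearMap.det_baseChange, Algebra.norm_apply]
  rfl

lemma intCast_norm_eq_of_sub_mem_span {n : ℕ} {x y : S}
    (h : x - y ∈ Ideal.span {(n : S)}) :
    ((Algebra.norm ℤ x : ℤ) : ZMod n) = ((Algebra.norm ℤ y : ℤ) : ZMod n) := by
  obtain ⟨k, hk⟩ := Ideal.mem_span_singleton.mp h
  obtain rfl : x = y + n • k := by rw [nsmul_eq_mul, ← hk, add_sub_cancel]
  rw [intCast_norm_eq_det_baseChange, intCast_norm_eq_det_baseChange]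
  congr 1
  refine TensorProduct.AlgebraTensorModule.curry_injective (LinearMap.ext_ring (LinearMap.ext ?_))
  intro z
  have hz : (1 : ZMod n) ⊗ₜ[ℤ] ((n • k) * z) = 0 := by
    rw [smul_mul_assoc, ← TensorProduct.smul_tmul, nsmul_one, CharP.cast_eq_zero,
      TensorProduct.zero_tmul]
  simp [add_mul, TensorProduct.tmul_add, ← hz]

/-- The norm of `S / n` over `ℤ / n`, for `S` free of finite rank over `ℤ`: the reduction of the
norm of `S` over `ℤ`. -/
noncomputable def normMod (S : Type*) [CommRing S] [Module.Free ℤ S] [Module.Finite ℤ S] (n : ℕ) :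
    S ⧸ Ideal.span {(n : S)} →* ZMod n where
  toFun := Quotient.lift (fun x => ((Algebra.norm ℤ x : ℤ) : ZMod n)) fun _ _ hxy =>
    intCast_norm_eq_of_sub_mem_span ((Submodule.quotientRel_def _).mp hxy)
  map_one' := show ((Algebra.norm ℤ (1 : S) : ℤ) : ZMod n) = 1 by simp
  map_mul' := by
    rintro ⟨x⟩ ⟨y⟩
    change ((Algebra.norm ℤ (x * y) : ℤ) : ZMod n) = _
    rw [map_mul, Int.cast_mul]

lemma normMod_mk (n : ℕ) (x : S) :
    normMod S n (Ideal.Quotient.mk _ x) = ((Algebra.norm ℤ x : ℤ) : ZMod n) := rfl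

end NormMod

lemma det_eq_det_of_forall_mem_ker {F V W : Type*} [Field F] [AddCommGroup V] [Module F V]
    [Module.Finite F V] [AddCommGroup W] [Module F W] {π : V →ₗ[F] W}
    (hπ : Function.Surjective π) {f : V →ₗ[F] V} {g : W →ₗ[F] W} (hfg : π ∘ₗ f = g ∘ₗ π)
    (hker : ∀ x ∈ LinearMap.ker π, f x = x) : LinearMap.det f = LinearMap.det g := by
  have hle : LinearMap.ker π ≤ (LinearMap.ker π).comap f := fun x hx => by
    rwa [Submodule.mem_comap, hker x hx]
  have hrestrict : f.restrict hle = LinearMap.id := LinearMap.ext fun x =>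
    Subtype.ext (hker x.1 x.2)
  let e := π.quotKerEquivOfSurjective hπ
  rw [LinearMap.det_eq_det_mul_det (LinearMap.ker π) f hle, hrestrict, LinearMap.det_id, one_mul,
    ← LinearMap.det_conj _ e]
  congr 1
  ext y
  obtain ⟨x, rfl⟩ := hπ y
  have he : e.symm (π x) = (LinearMap.ker π).mkQ x := by
    rw [LinearEquiv.symm_apply_eq]
    rfl
  simp only [LinearMap.comp_apply, LinearEquiv.coe_coe, he, Submodule.mkQ_apply,
    Submodule.mapQ_apply]
  exact LinearMap.congr_fun hfg x

lemma normMod_mk_eq_norm_mk {S : Type*} [CommRing S] [Module.Free ℤ S] [Module.Finite ℤ S]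
    {p : ℕ} [Fact p.Prime] (I : Ideal S) [Algebra (ZMod p) (S ⧸ I)] {w : S}
    (hw : ∀ x ∈ I, (w - 1) * x ∈ Ideal.span {(p : S)}) :
    normMod S p (Ideal.Quotient.mk _ w) = Algebra.norm (ZMod p) (Ideal.Quotient.mk I w) := by
  let π : TensorProduct ℤ (ZMod p) S →ₐ[ZMod p] S ⧸ I :=
    Algebra.TensorProduct.lift (Algebra.ofId (ZMod p) (S ⧸ I))
      (Ideal.Quotient.mkₐ ℤ I) (fun _ _ => mul_comm _ _)
  have hπ (x : S) : π (1 ⊗ₜ[ℤ] x) = Ideal.Quotient.mk I x := by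
    refine (Algebra.TensorProduct.lift_tmul _ _ _ (1 : ZMod p) x).trans ?_
    rw [map_one, one_mul]
    rfl
  have hsurj : Function.Surjective fun x : S => (1 : ZMod p) ⊗ₜ[ℤ] x :=
    Algebra.TensorProduct.includeRight_surjective S (ZMod.intCast_surjective (n := p))
  rw [normMod_mk, intCast_norm_eq_det_baseChange, Algebra.norm_apply]
  refine det_eq_det_of_forall_mem_ker (π := π.toLinearMap) (fun y => ?_) ?_ fun y hy => ?_
  · obtain ⟨x, rfl⟩ := Ideal.Quotient.mk_surjective y
    exact ⟨1 ⊗ₜ x, hπ x⟩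
  · ext y
    simp [hπ]
  · obtain ⟨x, rfl⟩ := hsurj y
    have hx : x ∈ I := by rwa [← Ideal.Quotient.eq_zero_iff_mem, ← hπ]
    obtain ⟨z, hz⟩ := Ideal.mem_span_singleton.mp (hw x hx)
    have hwx : w * x = x + p • z := by rw [nsmul_eq_mul]; linear_combination hz
    rw [LinearMap.baseChange_tmul, LinearMap.mulLeft_apply, hwx, TensorProduct.tmul_add,
      ← TensorProduct.smul_tmul, nsmul_one, CharP.cast_eq_zero, TensorProduct.zero_tmul, add_zero]

lemma isSquare_of_isSquare_algebraMap {k L : Type*} [Field k] [Field L] [Algebra k L]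
    (hodd : Odd (Module.finrank k L)) {x : k} (hx : IsSquare (algebraMap k L x)) :
    IsSquare x := by
  obtain ⟨m, hm⟩ := hodd
  obtain ⟨y, hy⟩ := hx
  have hnorm := congrArg (Algebra.norm k) hy
  rw [Algebra.norm_algebraMap, map_mul, hm] at hnorm
  rcases eq_or_ne x 0 with rfl | hx0
  · exact IsSquare.zero
  · refine ⟨Algebra.norm k y / x ^ m, ?_⟩
    field_simp
    linear_combination hnorm

lemma isSquare_natCast_of_isSquare_natCast {p q : ℕ} [Fact p.Prime] [Fact q.Prime]
    (hp : p % 8 = 1) (h : q ≠ 2 → IsSquare (p : ZMod q)) : IsSquare (q : ZMod p) := by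
  rcases eq_or_ne q 2 with rfl | hq
  · exact (ZMod.exists_sq_eq_two_iff (by rintro rfl; omega)).mpr (Or.inl hp)
  · exact (ZMod.exists_sq_eq_prime_iff_of_mod_four_eq_one (by omega) hq).mpr (h hq)

variable [NumberField K]

lemma isSquare_absNorm {p : ℕ} [Fact p.Prime] (hp : p % 8 = 1) (v : HeightOneSpectrum (𝓞 K))
    (hv : (2 : 𝓞 K) ∉ v.asIdeal → ∃ x : 𝓞 K, x ^ 2 - p ∈ v.asIdeal) :
    IsSquare ((Ideal.absNorm v.asIdeal : ℕ) : ZMod p) := by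
  have := v.isMaximal
  let _ : Field (𝓞 K ⧸ v.asIdeal) := Ideal.Quotient.field _
  have : Finite (𝓞 K ⧸ v.asIdeal) := Ideal.finiteQuotientOfFreeOfNeBot _ v.ne_bot
  obtain ⟨q, _⟩ := CharP.exists (𝓞 K ⧸ v.asIdeal)
  have : Fact q.Prime := ⟨CharP.char_is_prime (𝓞 K ⧸ v.asIdeal) q⟩
  let _ : Algebra (ZMod q) (𝓞 K ⧸ v.asIdeal) := ZMod.algebra _ q
  have hcard : Ideal.absNorm v.asIdeal = q ^ Module.finrank (ZMod q) (𝓞 K ⧸ v.asIdeal) := by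
    rw [Ideal.absNorm_apply, Submodule.cardQuot_apply,
      Module.natCard_eq_pow_finrank (K := ZMod q), Nat.card_zmod]
  rw [hcard, Nat.cast_pow]
  rcases Nat.even_or_odd (Module.finrank (ZMod q) (𝓞 K ⧸ v.asIdeal)) with heven | hodd
  · exact heven.isSquare_pow _
  refine (isSquare_natCast_of_isSquare_natCast hp fun hq => ?_).pow _
  obtain ⟨x, hx⟩ := hv fun h2 => hq <| (Nat.prime_dvd_prime_iff_eq Fact.out Nat.prime_two).mp <| by
    rwa [← CharP.cast_eq_zero_iff (𝓞 K ⧸ v.asIdeal), ← map_natCast (Ideal.Quotient.mk v.asIdeal),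
      Ideal.Quotient.eq_zero_iff_mem, Nat.cast_ofNat]
  refine isSquare_of_isSquare_algebraMap hodd ⟨Ideal.Quotient.mk v.asIdeal x, ?_⟩
  rw [map_natCast, ← map_natCast (Ideal.Quotient.mk v.asIdeal), ← map_mul, ← sq, eq_comm,
    Ideal.Quotient.eq]
  exact hx

lemma isSquare_absNorm_maxPowDividing {p : ℕ} [Fact p.Prime] (hp : p % 8 = 1) {x : 𝓞 K}
    (hx : x ≠ 0) (v : HeightOneSpectrum (𝓞 K))
    (h : (2 : 𝓞 K) ∉ v.asIdeal → (∀ y : 𝓞 K, y ^ 2 - p ∉ v.asIdeal) →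
      IsSquare (v.valuation K (algebraMap (𝓞 K) K x))) :
    IsSquare ((Ideal.absNorm (v.maxPowDividing (Ideal.span {x})) : ℕ) : ZMod p) := by
  rw [HeightOneSpectrum.maxPowDividing, map_pow, Nat.cast_pow]
  by_cases hv : (2 : 𝓞 K) ∉ v.asIdeal → ∃ y : 𝓞 K, y ^ 2 - p ∈ v.asIdeal
  · exact (isSquare_absNorm hp v hv).pow _
  push Not at hv
  obtain ⟨g, hg⟩ := h hv.1 hv.2
  rw [v.valuation_of_algebraMap, v.intValuation_if_neg hx] at hg
  have hg0 : g ≠ 0 := by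
    rintro rfl
    simp at hg
  rw [← WithZero.exp_log hg0, ← WithZero.exp_add, WithZero.exp_inj] at hg
  refine Even.isSquare_pow ((Int.even_coe_nat _).mp ⟨-WithZero.log g, ?_⟩) _
  omega

lemma isSquare_intCast_norm {p : ℕ} [Fact p.Prime] (hp : p % 8 = 1) {x : 𝓞 K} (hx : x ≠ 0)
    (h : ∀ v : HeightOneSpectrum (𝓞 K), (2 : 𝓞 K) ∉ v.asIdeal →
      (∀ y : 𝓞 K, y ^ 2 - p ∉ v.asIdeal) → IsSquare (v.valuation K (algebraMap (𝓞 K) K x))) :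
    IsSquare ((Algebra.norm ℤ x : ℤ) : ZMod p) := by
  have habs : IsSquare ((Ideal.absNorm (Ideal.span {x}) : ℕ) : ZMod p) := by
    rw [← Ideal.finprod_heightOneSpectrum_factorization (I := Ideal.span {x}) (by simpa using hx)]
    refine finprod_induction (fun I => IsSquare ((Ideal.absNorm I : ℕ) : ZMod p)) ?_ ?_
      fun v => isSquare_absNorm_maxPowDividing hp hx v (h v)
    · simp
    · intro I J hI hJ
      rw [map_mul, Nat.cast_mul]
      exact hI.mul hJ
  rw [Ideal.absNorm_span_singleton] at habs
  have hneg : IsSquare (-1 : ZMod p) := ZMod.exists_sq_eq_neg_one_iff.mpr (by omega)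
  rcases Int.natAbs_eq (Algebra.norm ℤ x) with hnorm | hnorm
  · rwa [hnorm, Int.cast_natCast]
  · rw [hnorm, Int.cast_neg, Int.cast_natCast, neg_eq_neg_one_mul]
    exact hneg.mul habs

end Norm

section GlobalObstruction

/-- The conditions on `c` and `d`, given `p`, `s` and `t`, under which `pencil p c d` is a
counterexample to the Hasse principle. The two congruences say that `s²` and `t` are the roots of
`(r + 1) * (c * r + d) = r` modulo the primes above `p`. -/
structure IsCompatible (p : ℕ) (s t c d : 𝓞 K) : Prop where
  isCoprime : IsCoprime c d
  c_congr : c * ((1 + s ^ 2) * (1 + t)) - 1 ∈ Ideal.span {(p : 𝓞 K)}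
  d_congr : d - c * s ^ 2 * t ∈ Ideal.span {(p : 𝓞 K)}

variable {p : ℕ} {s t c d : 𝓞 K} {v : HeightOneSpectrum (𝓞 K)}

lemma IsCompatible.c_notMem (H : IsCompatible p s t c d) (hv : (p : 𝓞 K) ∈ v.asIdeal) :
    c ∉ v.asIdeal := fun hc =>
  v.isPrime.one_notMem <| (Submodule.sub_mem_iff_right _ (Ideal.mul_mem_right _ _ hc)).mp
    (mem_asIdeal_of_mem_span hv H.c_congr)

variable [NumberField K]

variable (K) in
lemma exists_natCast_mem_asIdeal (p : ℕ) [hp : Fact p.Prime] :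
    ∃ v : HeightOneSpectrum (𝓞 K), (p : 𝓞 K) ∈ v.asIdeal := by
  have : (Ideal.span {(p : ℤ)}).IsMaximal :=
    PrincipalIdealRing.isMaximal_of_irreducible (Nat.prime_iff_prime_int.mp hp.out).irreducible
  obtain ⟨P, hP, _⟩ :=
    Ideal.exists_maximal_ideal_liesOver_of_isIntegral (S := 𝓞 K) (Ideal.span {(p : ℤ)})
  have hpP : (p : 𝓞 K) ∈ P := by
    simpa using (Ideal.mem_of_liesOver P (Ideal.span {(p : ℤ)}) p).mp
      (Ideal.mem_span_singleton_self _)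
  obtain ⟨v, hv⟩ := exists_le_asIdeal hP.ne_top (Nat.cast_ne_zero.mpr hp.out.ne_zero) hpP
  exact ⟨v, hv hpP⟩

/-- The conditions on a prime `p`, unramified in `K`, and on `s, t : 𝓞 K` under which suitable
surfaces `pencil p c d` have no rational point: at a rational point, the ratio `r` of
`exists_isZeroRatio` is congruent to `s²` modulo `p`, and then reciprocity would make the norm of
`s² + 1` a square modulo `p`. -/
structure IsAdmissible (p : ℕ) (s t : 𝓞 K) : Prop where
  mod_eight : p % 8 = 1
  notMem_sq (v : HeightOneSpectrum (𝓞 K)) : (p : 𝓞 K) ∈ v.asIdeal → (p : 𝓞 K) ∉ v.asIdeal ^ 2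
  s_notMem (v : HeightOneSpectrum (𝓞 K)) : (p : 𝓞 K) ∈ v.asIdeal → s ∉ v.asIdeal
  sq_sub_notMem (v : HeightOneSpectrum (𝓞 K)) :
    (p : 𝓞 K) ∈ v.asIdeal → ∀ x : 𝓞 K, x ^ 2 - t ∉ v.asIdeal
  not_isSquare : ¬ IsSquare (normMod (𝓞 K) p (Ideal.Quotient.mk _ (s ^ 2 + 1)))

lemma IsCompatible.d_notMem (H : IsCompatible p s t c d) (Hst : IsAdmissible p s t)
    (hv : (p : 𝓞 K) ∈ v.asIdeal) : d ∉ v.asIdeal := by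
  intro hd
  have hcst : c * s ^ 2 * t ∈ v.asIdeal :=
    (Submodule.sub_mem_iff_right _ hd).mp (mem_asIdeal_of_mem_span hv H.d_congr)
  rcases v.isPrime.mem_or_mem hcst with hcs | ht
  · rcases v.isPrime.mem_or_mem hcs with hc | hs
    · exact H.c_notMem hv hc
    · exact Hst.s_notMem v hv (v.isPrime.mem_of_pow_mem _ hs)
  · exact Hst.sq_sub_notMem v hv 0 (by simpa using ht)

lemma IsAdmissible.not_isSquare_valuation (Hst : IsAdmissible p s t)
    (hv : (p : 𝓞 K) ∈ v.asIdeal) : ¬ IsSquare (v.valuation K (p : K)) := by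
  rw [← map_natCast (algebraMap (𝓞 K) K)]
  exact HasseDense.not_isSquare_valuation K v hv (Hst.notMem_sq v hv)

lemma IsZeroRatio.valuation_sub_sq_lt_one_of_isCompatible {r : K}
    (h : IsZeroRatio (p : K) (c : K) (d : K) r) (hr : r ≠ 0) (Hst : IsAdmissible p s t)
    (H : IsCompatible p s t c d) (hv : (p : 𝓞 K) ∈ v.asIdeal) :
    v.valuation K (r - algebraMap (𝓞 K) K (s ^ 2)) < 1 := by
  rw [map_pow]
  have hlt {x : 𝓞 K} (hx : x ∈ Ideal.span {(p : 𝓞 K)}) :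
      v.valuation K (algebraMap (𝓞 K) K x) < 1 :=
    (v.valuation_lt_one_iff_mem _).mpr (mem_asIdeal_of_mem_span hv hx)
  refine h.valuation_sub_sq_lt_one (v.valuation K) (Hst.not_isSquare_valuation hv)
    (v.valuation_eq_one_iff_notMem.mpr (H.c_notMem hv))
    (v.valuation_eq_one_iff_notMem.mpr (H.d_notMem Hst hv)) hr
    (one_le_valuation_sq_sub K v (Hst.sq_sub_notMem v hv)) ?_ ?_
  · simpa using hlt H.c_congr
  · simpa using hlt H.d_congr

lemma IsZeroRatio.isSquare_valuation_of_notMem {r : K} (h : IsZeroRatio (p : K) (c : K) (d : K) r)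
    (hv : ∀ x : 𝓞 K, x ^ 2 - p ∉ v.asIdeal) : IsSquare (v.valuation K (r * (r + 1))) := by
  have hp : (p : 𝓞 K) ∉ v.asIdeal := fun hp => hv 0 (by simpa using hp)
  refine h.isSquare_valuation_mul_add_one (v.valuation K) ?_ (fun x => ?_)
    (v.valuation_le_one c) (v.valuation_le_one d)
  · rw [← map_natCast (algebraMap (𝓞 K) K)]
    exact v.valuation_eq_one_iff_notMem.mpr hp
  · simpa using one_le_valuation_sq_sub K v hv x

lemma IsZeroRatio.isSquare_normMod [Fact p.Prime] (hp : p % 8 = 1) {r : K}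
    (h : IsZeroRatio (p : K) (c : K) (d : K) r) (hr : r ≠ 0) (hr1 : r + 1 ≠ 0) {a β : 𝓞 K}
    (hβ : β ≠ 0) (ha : algebraMap (𝓞 K) K a = algebraMap (𝓞 K) K β * r) :
    IsSquare (normMod (𝓞 K) p (Ideal.Quotient.mk _ (a * (a + β)))) := by
  have hval : algebraMap (𝓞 K) K (a * (a + β)) =
      algebraMap (𝓞 K) K β * algebraMap (𝓞 K) K β * (r * (r + 1)) := by
    rw [map_mul, map_add, ha]
    ring
  have hne : a * (a + β) ≠ 0 := by
    have hβK : algebraMap (𝓞 K) K β ≠ 0 := by simpa using hβ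
    intro h0
    rw [h0, map_zero] at hval
    exact mul_ne_zero (mul_ne_zero hβK hβK) (mul_ne_zero hr hr1) hval.symm
  refine isSquare_intCast_norm hp hne fun v _ hv => ?_
  rw [hval, map_mul, map_mul]
  exact (IsSquare.mul_self _).mul (h.isSquare_valuation_of_notMem hv)

-- Reciprocity makes the norm of `a * (a + β) = β² r (r + 1)` a square modulo `p`, but this element
-- is congruent to `s² (s² + 1)`.
lemma IsCompatible.not_isZeroRatio [Fact p.Prime] (H : IsCompatible p s t c d)
    (Hst : IsAdmissible p s t) {r : K} (hr : r ≠ 0) (hr1 : r + 1 ≠ 0) :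
    ¬ IsZeroRatio (p : K) (c : K) (d : K) r := by
  intro h
  have hp : (p : 𝓞 K) ≠ 0 := Nat.cast_ne_zero.mpr (Fact.out : p.Prime).ne_zero
  obtain ⟨β, a, hβ, has, ha⟩ := exists_mul_eq_algebraMap_of_valuation_sub_lt_one hp Hst.notMem_sq
    fun v hv => h.valuation_sub_sq_lt_one_of_isCompatible hr Hst H hv
  have hβ0 : β ≠ 0 := by
    rintro rfl
    obtain ⟨v, hv⟩ := exists_natCast_mem_asIdeal K p
    exact v.isPrime.one_notMem (by simpa using mem_asIdeal_of_mem_span hv hβ)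
  have hsq := h.isSquare_normMod Hst.mod_eight hr hr1 hβ0 ha
  have hmk : Ideal.Quotient.mk (Ideal.span {(p : 𝓞 K)}) (a * (a + β)) =
      Ideal.Quotient.mk _ s ^ 2 * Ideal.Quotient.mk _ (s ^ 2 + 1) := by
    rw [map_mul, map_add, Ideal.Quotient.eq.mpr has, Ideal.Quotient.eq.mpr hβ]
    simp only [map_pow, map_add, map_one]
  have hs : normMod (𝓞 K) p (Ideal.Quotient.mk _ s) ≠ 0 :=
    (((isUnit_mk_span_singleton_iff hp).mpr Hst.s_notMem).map (normMod (𝓞 K) p)).ne_zero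
  rw [hmk, map_mul, map_pow] at hsq
  refine Hst.not_isSquare ?_
  have hdiv := hsq.div (IsSquare.sq (normMod (𝓞 K) p (Ideal.Quotient.mk _ s)))
  rwa [mul_div_cancel_left₀ _ (pow_ne_zero 2 hs)] at hdiv

theorem IsCompatible.not_hasCommonZero_pencil [Fact p.Prime] (H : IsCompatible p s t c d)
    (Hst : IsAdmissible p s t) : ¬ HasCommonZero (pencil (p : K) (c : K) (d : K)) := by
  intro h
  obtain ⟨v, hv⟩ := exists_natCast_mem_asIdeal K p
  obtain ⟨r, hr, hr1, hratio⟩ := exists_isZeroRatio (v.valuation K)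
    (Hst.not_isSquare_valuation hv) (v.valuation_eq_one_iff_notMem.mpr (H.c_notMem hv))
    (v.valuation_eq_one_iff_notMem.mpr (H.d_notMem Hst hv)) h
  exact H.not_isZeroRatio Hst hr hr1 hratio

end GlobalObstruction

/-! ### Existence of parameters -/

section Parameters

lemma charP_quotient {R : Type*} [CommRing R] {I : Ideal R} (hI : I ≠ ⊤) {p : ℕ} [hp : Fact p.Prime]
    (hpI : (p : R) ∈ I) : CharP (R ⧸ I) p := by
  have := Ideal.Quotient.nontrivial_iff.mpr hI
  refine (CharP.charP_iff_prime_eq_zero hp.out).mpr ?_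
  rwa [← map_natCast (Ideal.Quotient.mk I), Ideal.Quotient.eq_zero_iff_mem]

lemma dvd_of_intCast_mem {R : Type*} [CommRing R] {I : Ideal R} (hI : I ≠ ⊤) {p : ℕ}
    [Fact p.Prime] (hpI : (p : R) ∈ I) {n : ℤ} (hn : (n : R) ∈ I) : (p : ℤ) ∣ n := by
  have := charP_quotient hI hpI
  rwa [← CharP.intCast_eq_zero_iff (R ⧸ I), ← map_intCast (Ideal.Quotient.mk I),
    Ideal.Quotient.eq_zero_iff_mem]

lemma exists_sq_eq_neg_one_of_charP (A : Type*) [CommRing A] {p : ℕ} [Fact p.Prime] [CharP A p]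
    (hp4 : p % 4 ≠ 3) : ∃ j : A, j ^ 2 = -1 := by
  obtain ⟨j, hj⟩ := ZMod.exists_sq_eq_neg_one_iff.mpr hp4
  exact ⟨ZMod.castHom dvd_rfl A j, by rw [sq, ← map_mul, ← hj, map_neg, map_one]⟩

lemma one_add_notMem_of_forall_sq_sub_notMem {R : Type*} [CommRing R] {I : Ideal R} (hI : I ≠ ⊤)
    {p : ℕ} [Fact p.Prime] (hpI : (p : R) ∈ I) (hp4 : p % 4 ≠ 3) {t : R}
    (ht : ∀ x, x ^ 2 - t ∉ I) : 1 + t ∉ I := by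
  intro h
  have := charP_quotient hI hpI
  obtain ⟨j, hj⟩ := exists_sq_eq_neg_one_of_charP (R ⧸ I) hp4
  obtain ⟨x, rfl⟩ := Ideal.Quotient.mk_surjective j
  have hx : x ^ 2 + 1 ∈ I := by
    rw [← Ideal.Quotient.eq_zero_iff_mem, map_add, map_pow, hj, map_one, neg_add_cancel]
  exact ht x (by simpa [add_comm (1 : R)] using sub_mem hx h)

lemma exists_mul_sq_sub_one_ne_zero {k : Type*} [Field k] (h2 : (2 : k) ≠ 0) (h3 : (3 : k) ≠ 0)
    (h5 : (5 : k) ≠ 0) (w : k) : ∃ e : k, e ≠ 0 ∧ w * e ^ 2 - 1 ≠ 0 ∧ w * e ^ 2 + 1 ≠ 0 := by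
  by_contra! h
  have he (e : k) (he : e ≠ 0) : w * e ^ 2 = 1 ∨ w * e ^ 2 = -1 := by
    rw [or_iff_not_imp_left, ← sub_eq_zero, ← add_eq_zero_iff_eq_neg]
    exact h e he
  rcases he 1 one_ne_zero with h1 | h1 <;> rcases he 2 h2 with h4 | h4
  · exact h3 (by linear_combination h4 - 4 * h1)
  · exact h5 (by linear_combination h4 - 4 * h1)
  · exact h5 (by linear_combination 4 * h1 - h4)
  · exact h3 (by linear_combination 4 * h1 - h4)

lemma exists_isUnit_sq_add_one_eq_mul_sq {A : Type*} [CommRing A] {j w e : A} (hj : j ^ 2 = -1)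
    (h2 : IsUnit (2 : A)) (he : IsUnit e) (hsub : IsUnit (w * e ^ 2 - 1))
    (hadd : IsUnit (w * e ^ 2 + 1)) :
    ∃ s u : A, IsUnit s ∧ IsUnit u ∧ s ^ 2 + 1 = w * u ^ 2 := by
  obtain ⟨m, hm⟩ := hsub.exists_right_inv
  have hjunit : IsUnit j := .of_mul_eq_one (-j) (by linear_combination -hj)
  have hmunit : IsUnit m := .of_mul_eq_one_right _ hm
  refine ⟨j * (w * e ^ 2 + 1) * m, 2 * j * m * e, (hjunit.mul hadd).mul hmunit,
    ((h2.mul hjunit).mul hmunit).mul he, ?_⟩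
  linear_combination ((w * e ^ 2 - 1) ^ 2 * m ^ 2) * hj - ((w * e ^ 2 - 1) * m + 1) * hm

lemma finite_setOf_not_isNondegenerate {R : Type*} [CommRing R] [IsDomain R] {D c : R}
    (hD : D ≠ 0) (hc : c ≠ 0) : {d | ¬ IsNondegenerate D c d}.Finite := by
  classical
  have hdiscr : {d : R | (d - (c + 1)) ^ 2 = 4 * c}.Finite := by
    refine Set.Finite.preimage (f := fun d : R => d - (c + 1)) (s := {x | x ^ 2 = 4 * c})
      (sub_left_injective.injOn) ?_
    refine (Polynomial.nthRoots 2 (4 * c)).toFinset.finite_toSet.subset fun x hx => ?_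
    simpa [Polynomial.mem_nthRoots] using hx
  refine ((Set.toFinite {0, c}).union hdiscr).subset fun d hd => ?_
  by_contra hbad
  simp only [Set.mem_union, Set.mem_insert_iff, Set.mem_singleton_iff, Set.mem_ofPred_eq,
    not_or] at hbad
  exact hd ⟨hD, hc, hbad.1.1, Ne.symm hbad.1.2, fun h => hbad.2 (by linear_combination h)⟩

variable [NumberField K]

lemma infinite_setOf_isCompatible {p : ℕ} (hp : (p : 𝓞 K) ≠ 0) {s t c : 𝓞 K} (hc : c ≠ 0)
    (hcst : c * ((1 + s ^ 2) * (1 + t)) - 1 ∈ Ideal.span {(p : 𝓞 K)}) :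
    {d | IsCompatible p s t c d}.Infinite := by
  obtain ⟨z, hz⟩ := Ideal.mem_span_singleton.mp hcst
  refine Set.infinite_of_injective_forall_mem (f := fun k : ℕ =>
    1 + (c * s ^ 2 * t - 1) * (c * ((1 + s ^ 2) * (1 + t))) + k * (c * p)) ?_ fun k => ?_
  · intro k l hkl
    exact_mod_cast mul_right_cancel₀ (mul_ne_zero hc hp) (add_left_cancel hkl)
  · refine ⟨⟨-((c * s ^ 2 * t - 1) * ((1 + s ^ 2) * (1 + t)) + k * p), 1, by ring⟩, hcst,
      Ideal.mem_span_singleton.mpr ⟨(c * s ^ 2 * t - 1) * z + k * c, ?_⟩⟩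
    linear_combination (c * s ^ 2 * t - 1) * hz

variable {p : ℕ} [hp : Fact p.Prime]

lemma infinite_setOf_isCompatible_and_isNondegenerate {s t c₀ : 𝓞 K}
    (hc₀ : c₀ * ((1 + s ^ 2) * (1 + t)) - 1 ∈ Ideal.span {(p : 𝓞 K)}) :
    {c : 𝓞 K | {d | IsCompatible p s t c d ∧ IsNondegenerate (p : 𝓞 K) c d}.Infinite}.Infinite := by
  have hp0 : (p : 𝓞 K) ≠ 0 := Nat.cast_ne_zero.mpr hp.out.ne_zero
  have hinj : Function.Injective fun n : ℕ => c₀ + p * n := fun m n hmn => by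
    exact_mod_cast mul_left_cancel₀ hp0 (add_left_cancel hmn)
  refine ((Set.infinite_range_of_injective hinj).sdiff (Set.finite_singleton 0)).mono ?_
  rintro _ ⟨⟨n, rfl⟩, hc⟩
  have hcst : (c₀ + p * n) * ((1 + s ^ 2) * (1 + t)) - 1 ∈ Ideal.span {(p : 𝓞 K)} := by
    rw [show (c₀ + p * n) * ((1 + s ^ 2) * (1 + t)) - 1 = (c₀ * ((1 + s ^ 2) * (1 + t)) - 1) +
      p * (n * ((1 + s ^ 2) * (1 + t))) by ring]
    exact add_mem hc₀ (Ideal.mul_mem_right _ _ (Ideal.mem_span_singleton_self _))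
  refine ((infinite_setOf_isCompatible hp0 hc hcst).sdiff
    (finite_setOf_not_isNondegenerate hp0 hc)).mono fun d hd => ⟨hd.1, not_not.mp hd.2⟩

lemma natCast_notMem_sq_of_natAbs_discr_lt (hdiscr : (discr K).natAbs < p)
    {v : HeightOneSpectrum (𝓞 K)} (hv : (p : 𝓞 K) ∈ v.asIdeal) : (p : 𝓞 K) ∉ v.asIdeal ^ 2 := by
  intro h
  have hdvd : v.asIdeal ∣ differentIdeal ℤ (𝓞 K) := by
    simpa using pow_sub_one_dvd_differentIdeal ℤ v.asIdeal 2 (p := Ideal.span {(p : ℤ)})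
      (by simpa using hp.out.ne_zero)
      (by simpa [Ideal.dvd_iff_le, Ideal.map_span] using h)
  have hmem : ((discr K : ℤ) : 𝓞 K) ∈ v.asIdeal :=
    Ideal.le_of_dvd hdvd (discr_mem_differentIdeal K (𝓞 K))
  have hle := Int.le_of_dvd (Int.natAbs_pos.mpr (discr_ne_zero K) |> Int.natCast_pos.mpr)
    (Int.dvd_natAbs.mpr (dvd_of_intCast_mem v.isPrime.ne_top hv hmem))
  omega

lemma exists_forall_sq_sub_notMem (hp2 : p ≠ 2) :
    ∃ t : 𝓞 K, ∀ v : HeightOneSpectrum (𝓞 K), (p : 𝓞 K) ∈ v.asIdeal →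
      ∀ x : 𝓞 K, x ^ 2 - t ∉ v.asIdeal := by
  have hp0 : (p : 𝓞 K) ≠ 0 := Nat.cast_ne_zero.mpr hp.out.ne_zero
  obtain ⟨t, ht⟩ := exists_forall_of_forall_exists hp0 (P := fun v y => ¬ IsSquare y)
    fun v hv => by
      have := v.isMaximal
      let _ : Field (𝓞 K ⧸ v.asIdeal) := Ideal.Quotient.field _
      have : Finite (𝓞 K ⧸ v.asIdeal) := Ideal.finiteQuotientOfFreeOfNeBot _ v.ne_bot
      have := charP_quotient v.isPrime.ne_top hv
      exact FiniteField.exists_nonsquare (by rwa [ringChar.eq (𝓞 K ⧸ v.asIdeal) p])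
  refine ⟨t, fun v hv x hx => ht v hv ⟨Ideal.Quotient.mk _ x, ?_⟩⟩
  rw [← map_mul, ← sq, eq_comm, Ideal.Quotient.eq]
  exact hx

lemma isUnit_of_normMod_ne_zero {x : 𝓞 K ⧸ Ideal.span {(p : 𝓞 K)}} (hx : normMod (𝓞 K) p x ≠ 0) :
    IsUnit x := by
  obtain ⟨x, rfl⟩ := Ideal.Quotient.mk_surjective x
  refine (isUnit_mk_span_singleton_iff (Nat.cast_ne_zero.mpr hp.out.ne_zero)).mpr
    fun v hv hxv => hx ?_
  rw [normMod_mk, ZMod.intCast_zmod_eq_zero_iff_dvd]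
  refine dvd_trans (dvd_of_intCast_mem v.isPrime.ne_top hv ?_)
    (Ideal.absNorm_dvd_norm_of_mem hxv)
  exact_mod_cast Ideal.absNorm_mem v.asIdeal

lemma exists_not_isSquare_normMod (hp2 : p ≠ 2)
    (hsq : ∀ v : HeightOneSpectrum (𝓞 K), (p : 𝓞 K) ∈ v.asIdeal → (p : 𝓞 K) ∉ v.asIdeal ^ 2) :
    ∃ w, ¬ IsSquare (normMod (𝓞 K) p w) := by
  classical
  have hp0 : (p : 𝓞 K) ≠ 0 := Nat.cast_ne_zero.mpr hp.out.ne_zero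
  obtain ⟨v, hv⟩ := exists_natCast_mem_asIdeal K p
  have := v.isMaximal
  let _ : Field (𝓞 K ⧸ v.asIdeal) := Ideal.Quotient.field _
  have : Finite (𝓞 K ⧸ v.asIdeal) := Ideal.finiteQuotientOfFreeOfNeBot _ v.ne_bot
  have := charP_quotient v.isPrime.ne_top hv
  let _ : Algebra (ZMod p) (𝓞 K ⧸ v.asIdeal) := ZMod.algebra _ p
  obtain ⟨a, ha⟩ := FiniteField.exists_nonsquare (F := ZMod p) (by rwa [ZMod.ringChar_zmod_n])
  obtain ⟨y, rfl⟩ := FiniteField.norm_surjective (ZMod p) (𝓞 K ⧸ v.asIdeal) a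
  obtain ⟨w₀, rfl⟩ := Ideal.Quotient.mk_surjective y
  obtain ⟨w, hw⟩ := exists_forall_of_forall_exists hp0
    (P := fun v' y => y = Ideal.Quotient.mk v'.asIdeal (if v' = v then w₀ else 1))
    fun v' _ => ⟨_, rfl⟩
  refine ⟨Ideal.Quotient.mk _ w, ?_⟩
  rw [normMod_mk_eq_norm_mk v.asIdeal, hw v hv, if_pos rfl]
  · exact ha
  · refine fun x hx => mem_span_singleton_of_forall_mem hp0 hsq fun v' hv' => ?_
    rcases eq_or_ne v' v with rfl | hne
    · exact Ideal.mul_mem_left _ _ hx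
    · have hw1 := hw v' hv'
      rw [if_neg hne, Ideal.Quotient.eq] at hw1
      exact Ideal.mul_mem_right _ _ hw1

lemma exists_isUnit_mul_sq_sub_one (hp5 : 5 < p) (w : 𝓞 K ⧸ Ideal.span {(p : 𝓞 K)}) :
    ∃ e, IsUnit e ∧ IsUnit (w * e ^ 2 - 1) ∧ IsUnit (w * e ^ 2 + 1) := by
  have hp0 : (p : 𝓞 K) ≠ 0 := Nat.cast_ne_zero.mpr hp.out.ne_zero
  obtain ⟨w, rfl⟩ := Ideal.Quotient.mk_surjective w
  obtain ⟨e, he⟩ := exists_forall_of_forall_exists hp0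
    (P := fun v y => y ≠ 0 ∧ Ideal.Quotient.mk v.asIdeal w * y ^ 2 - 1 ≠ 0 ∧
      Ideal.Quotient.mk v.asIdeal w * y ^ 2 + 1 ≠ 0)
    fun v hv => by
      have := v.isMaximal
      let _ : Field (𝓞 K ⧸ v.asIdeal) := Ideal.Quotient.field _
      have := charP_quotient v.isPrime.ne_top hv
      have hne {n : ℕ} (hn : 0 < n) (hn5 : n ≤ 5) : (n : 𝓞 K ⧸ v.asIdeal) ≠ 0 := fun h =>
        absurd (Nat.le_of_dvd hn ((CharP.cast_eq_zero_iff _ p n).mp h)) (by omega)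
      exact exists_mul_sq_sub_one_ne_zero (mod_cast hne (n := 2) (by omega) (by omega))
        (mod_cast hne (n := 3) (by omega) (by omega)) (mod_cast hne (n := 5) (by omega) le_rfl) _
  have hunit {x : 𝓞 K} (hx : ∀ v : HeightOneSpectrum (𝓞 K), (p : 𝓞 K) ∈ v.asIdeal →
      Ideal.Quotient.mk v.asIdeal x ≠ 0) : IsUnit (Ideal.Quotient.mk (Ideal.span {(p : 𝓞 K)}) x) :=
    (isUnit_mk_span_singleton_iff hp0).mpr fun v hv h =>
      hx v hv (Ideal.Quotient.eq_zero_iff_mem.mpr h)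
  refine ⟨Ideal.Quotient.mk _ e, hunit fun v hv => (he v hv).1, ?_, ?_⟩
  · exact hunit (x := w * e ^ 2 - 1) (fun v hv => (he v hv).2.1)
  · exact hunit (x := w * e ^ 2 + 1) (fun v hv => (he v hv).2.2)

variable (K p) in
instance charP_quotient_span_natCast : CharP (𝓞 K ⧸ Ideal.span {(p : 𝓞 K)}) p := by
  obtain ⟨v, hv⟩ := exists_natCast_mem_asIdeal K p
  exact charP_quotient (ne_top_of_le_ne_top v.isPrime.ne_top
    ((Ideal.span_singleton_le_iff_mem _).mpr hv)) (Ideal.mem_span_singleton_self _)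

lemma exists_isUnit_not_isSquare_normMod_sq_add_one (hp4 : p % 4 ≠ 3) (hp5 : 5 < p)
    (hsq : ∀ v : HeightOneSpectrum (𝓞 K), (p : 𝓞 K) ∈ v.asIdeal → (p : 𝓞 K) ∉ v.asIdeal ^ 2) :
    ∃ s, IsUnit s ∧ ¬ IsSquare (normMod (𝓞 K) p (s ^ 2 + 1)) := by
  have hp2 : p ≠ 2 := by omega
  obtain ⟨w, hw⟩ := exists_not_isSquare_normMod hp2 hsq
  obtain ⟨e, he, hsub, hadd⟩ := exists_isUnit_mul_sq_sub_one hp5 w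
  obtain ⟨j, hj⟩ := exists_sq_eq_neg_one_of_charP (𝓞 K ⧸ Ideal.span {(p : 𝓞 K)}) hp4
  have h2 : IsUnit (2 : 𝓞 K ⧸ Ideal.span {(p : 𝓞 K)}) := by
    exact_mod_cast (CharP.isUnit_natCast_iff hp.out (n := 2)).mpr
      ((Nat.prime_dvd_prime_iff_eq hp.out Nat.prime_two).not.mpr hp2)
  obtain ⟨s, u, hs, hu, hsu⟩ :=
    exists_isUnit_sq_add_one_eq_mul_sq hj h2 he hsub hadd
  refine ⟨s, hs, fun h => hw ?_⟩
  rw [hsu, map_mul, map_pow] at h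
  simpa [(hu.map (normMod (𝓞 K) p)).ne_zero] using h.div (IsSquare.sq (normMod (𝓞 K) p u))

variable (K) in
lemma exists_isAdmissible : ∃ (p : ℕ) (s t : 𝓞 K), p.Prime ∧ IsAdmissible p s t := by
  obtain ⟨p, hp, hlt, hmod⟩ :=
    Nat.exists_prime_gt_modEq_one (k := 8) (discr K).natAbs (by norm_num)
  have : Fact p.Prime := ⟨hp⟩
  have hp8 : p % 8 = 1 := hmod
  have hp1 := hp.one_lt
  have hsq (v : HeightOneSpectrum (𝓞 K)) (hv : (p : 𝓞 K) ∈ v.asIdeal) :=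
    natCast_notMem_sq_of_natAbs_discr_lt hlt hv
  obtain ⟨s, hs, hns⟩ :=
    exists_isUnit_not_isSquare_normMod_sq_add_one (by omega) (by omega) hsq
  obtain ⟨s, rfl⟩ := Ideal.Quotient.mk_surjective s
  obtain ⟨t, ht⟩ := exists_forall_sq_sub_notMem (K := K) (p := p) (by omega)
  exact ⟨p, s, t, hp, hp8, hsq,
    (isUnit_mk_span_singleton_iff (Nat.cast_ne_zero.mpr hp.ne_zero)).mp hs, ht, by simpa using hns⟩

lemma IsAdmissible.exists_mul_sub_one_mem {s t : 𝓞 K} (Hst : IsAdmissible p s t) :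
    ∃ c₀ : 𝓞 K, c₀ * ((1 + s ^ 2) * (1 + t)) - 1 ∈ Ideal.span {(p : 𝓞 K)} := by
  have hs : IsUnit (Ideal.Quotient.mk (Ideal.span {(p : 𝓞 K)}) (s ^ 2 + 1)) :=
    isUnit_of_normMod_ne_zero fun h => Hst.not_isSquare (h ▸ IsSquare.zero)
  have ht : IsUnit (Ideal.Quotient.mk (Ideal.span {(p : 𝓞 K)}) (1 + t)) :=
    (isUnit_mk_span_singleton_iff (Nat.cast_ne_zero.mpr hp.out.ne_zero)).mpr fun v hv =>
      one_add_notMem_of_forall_sq_sub_notMem v.isPrime.ne_top hv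
        (by have := Hst.mod_eight; omega) (Hst.sq_sub_notMem v hv)
  obtain ⟨c, hc⟩ := (hs.mul ht).exists_left_inv
  obtain ⟨c₀, rfl⟩ := Ideal.Quotient.mk_surjective c
  refine ⟨c₀, ?_⟩
  rw [← Ideal.Quotient.eq, map_mul, map_mul, add_comm 1, hc, map_one]

end Parameters

section Counterexamples

variable [NumberField K] {p : ℕ} {s t c d : 𝓞 K}

lemma IsCompatible.hasCommonZero_pencil (H : IsCompatible p s t c d) (Hst : IsAdmissible p s t)
    (v : HeightOneSpectrum (𝓞 K)) :
    HasCommonZero (pencil (p : v.adicCompletion K) (algebraMap K _ c) (algebraMap K _ d)) := by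
  by_cases h2 : (2 : 𝓞 K) ∈ v.asIdeal
  · exact hasCommonZero_pencil_of_two_mem v Hst.mod_eight c d h2
  by_cases hv : (p : 𝓞 K) ∈ v.asIdeal
  · exact hasCommonZero_pencil_of_congruences v p h2 (Hst.s_notMem v hv)
      (Hst.sq_sub_notMem v hv s) (mem_asIdeal_of_mem_span hv H.c_congr)
      (mem_asIdeal_of_mem_span hv H.d_congr)
  · refine hasCommonZero_pencil_of_notMem v hv h2 ?_
    by_contra! hcd
    obtain ⟨x, y, hxy⟩ := H.isCoprime
    exact v.isPrime.one_notMem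
      (hxy ▸ add_mem (Ideal.mul_mem_left _ x hcd.1) (Ideal.mul_mem_left _ y hcd.2))

lemma IsCompatible.isHasseCounterexample_pencil [Fact p.Prime] (H : IsCompatible p s t c d)
    (Hst : IsAdmissible p s t) (Hcd : IsNondegenerate (p : 𝓞 K) c d) :
    IsHasseCounterexample fun i => formCoeffs (pencil (p : K) (c : K) (d : K) i) :=
  HasseDense.isHasseCounterexample_pencil p
    (by simpa using Hcd.map (FaithfulSMul.algebraMap_injective (𝓞 K) K))
    (H.hasCommonZero_pencil Hst) (H.not_hasCommonZero_pencil Hst)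

end Counterexamples

lemma infinite_setOf_infinite_map {α β : Type*} {φ : α → β} (hφ : Function.Injective φ)
    {good : α → α → Prop} (h : {a | {b | good a b}.Infinite}.Infinite) :
    {a' | {b' | Relation.Map good φ φ a' b'}.Infinite}.Infinite := by
  refine (h.image hφ.injOn).mono ?_
  rintro _ ⟨a, ha, rfl⟩
  refine (ha.image hφ.injOn).mono ?_
  rintro _ ⟨b, hb, rfl⟩
  exact ⟨a, b, hb, rfl, rfl⟩

end HasseDense

open HasseDense

/-- Theorem 1/2: over every number field `K`, the degree four del Pezzo surfaces
violating the Hasse principle are Zariski dense in the space of pairs of quinary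
quadratic forms: every polynomial in the 30 coefficients vanishing on all Hasse
counterexamples is zero. -/
theorem hasse_counterexamples_zariski_dense
    (K : Type*) [Field K] [NumberField K]
    (P : MvPolynomial (Fin 2 × QIdx) K)
    (hP : ∀ c : Fin 2 → QIdx → K, IsHasseCounterexample c →
      MvPolynomial.eval (fun q => c q.1 q.2) P = 0) :
    P = 0 := by
  obtain ⟨p, s, t, hp, Hst⟩ := exists_isAdmissible K
  have : Fact p.Prime := ⟨hp⟩
  obtain ⟨c₀, hc₀⟩ := Hst.exists_mul_sub_one_mem
  have hinf := infinite_setOf_infinite_map (FaithfulSMul.algebraMap_injective (𝓞 K) K)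
    (infinite_setOf_isCompatible_and_isNondegenerate hc₀)
  refine eq_zero_of_eval_twist_pencil (Nat.cast_ne_zero.mpr hp.ne_zero : (p : K) ≠ 0) hinf ?_
  rintro g h hg hh _ _ ⟨c, d, ⟨Hcd, Hnd⟩, rfl, rfl⟩
  exact (hP _ <| isHasseCounterexample_twist hg hh <| Hcd.isHasseCounterexample_pencil Hst Hnd :)
end

section
/- Consider the surface S in P^4 over ℚ given by the equations T0·T1 = T2² − 17·T3² and (T0 + 9·T1)(T0 + 11·T1) = T2² − 17·T4². Then S has a real point and, for every prime number p, a point over the p-adic field ℚ_p (so S(𝔸_ℚ) ≠ ∅), but S has no ℚ-rational point: there is no nonzero tuple (t0,…,t4) ∈ ℚ^5 satisfying both equations. -/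
/-- The affine equations defining the surface `S^{(D;A,B)}`:
`t0·t1 = t2² − D·t3²` and `(t0 + A·t1)(t0 + B·t1) = t2² − D·t4²`. -/
def SPoint {F : Type*} [Field F] (A B D : F) (t : Fin 5 → F) : Prop :=
  t 0 * t 1 = t 2 ^ 2 - D * t 3 ^ 2 ∧
  (t 0 + A * t 1) * (t 0 + B * t 1) = t 2 ^ 2 - D * t 4 ^ 2

/-- `S^{(D;A,B)}(F) ≠ ∅`: there is a nonzero solution of the two equations over `F`. -/
def HasPoint (F : Type*) [Field F] (A B D : F) : Prop :=
  ∃ t : Fin 5 → F, t ≠ 0 ∧ SPoint A B D t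

/-!
*Local points.* The surface has points over `ℚ(√17)`, `ℚ(√-17)` and `ℚ(i)`, and each completion of
`ℚ` contains one of these fields: `17` is a square in `ℝ` and in `ℚ₂`, `-1` is a square in `ℚ₁₇`,
and for every other `p` one of the units `-1`, `17`, `-17` is a square modulo `p`.

*No rational point.* Scale a rational point so that `t0 = a` and `t1 = b` are coprime integers. A
prime `p` that is not a square modulo `17` is inert in `ℚ(√17)`, so it divides the norms `a * b` and
`(a + 9 * b) * (a + 11 * b)` to even powers. As `p` does not divide both factors of either product,
it divides `b` and `a + 9 * b` to even powers, and these two integers are squares modulo `17`. But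
the two norms agree modulo `17`, which forces `a / b = 1` or `a / b = -3`, and then
`(a + 9 * b) / b` is `10` or `6`, neither of which is a square modulo `17`.
-/

section Field

variable {F : Type*} [Field F] {A B D : F}

lemma SPoint.smul {t : Fin 5 → F} (ht : SPoint A B D t) (c : F) : SPoint A B D (c • t) := by
  obtain ⟨h₁, h₂⟩ := ht
  simp only [SPoint, Pi.smul_apply, smul_eq_mul]
  constructor
  · linear_combination c ^ 2 * h₁
  · linear_combination c ^ 2 * h₂

lemma hasPoint_of_isSquare (hD : IsSquare D) : HasPoint F A B D := by
  obtain ⟨s, rfl⟩ := hD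
  refine ⟨![s, 0, s, 1, 0], fun h => one_ne_zero (congrFun h 3), ?_, ?_⟩
  · simp [sq]
  · simp [sq]

lemma hasPoint_of_isSquare_neg (hD : IsSquare (-D)) : HasPoint F A B D := by
  obtain ⟨s, hs⟩ := hD
  refine ⟨![s, 0, 0, 0, 1], fun h => one_ne_zero (congrFun h 4), ?_, ?_⟩
  · simp
  · simp [hs]

lemma hasPoint_of_isSquare_neg_one (h : IsSquare (-1 : F)) : HasPoint F 9 11 17 := by
  obtain ⟨i, hi⟩ := h
  -- From a search for integers `a, b, c` such that both `a * b - c ^ 2` and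
  -- `(a + 9 * b) * (a + 11 * b) - c ^ 2` are `17` times a square.
  refine ⟨![121, 2, 15, i, 34 * i], fun h => ?_, ?_, ?_⟩
  · have h121 : (121 : F) = 0 := congrFun h 0
    have h2 : (2 : F) = 0 := congrFun h 1
    exact one_ne_zero (by linear_combination h121 - 60 * h2 : (1 : F) = 0)
  · simp only [Matrix.cons_val]
    linear_combination -17 * hi
  · simp only [Matrix.cons_val]
    linear_combination -19652 * hi

lemma eq_zero_and_eq_zero_of_sq_eq_mul_sq (hD : ¬IsSquare D) {x y : F} (h : x ^ 2 = D * y ^ 2) :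
    x = 0 ∧ y = 0 := by
  have hy : y = 0 := by
    by_contra hy
    exact hD ⟨x / y, by field_simp; exact h.symm⟩
  exact ⟨by simpa [hy] using h, hy⟩

lemma SPoint.eq_zero_of_apply_one_eq_zero (hD : ¬IsSquare D) (hnD : ¬IsSquare (-D))
    {t : Fin 5 → F} (ht : SPoint A B D t) (h1 : t 1 = 0) : t = 0 := by
  obtain ⟨e₁, e₂⟩ := ht
  rw [h1] at e₁ e₂
  obtain ⟨h2, h3⟩ := eq_zero_and_eq_zero_of_sq_eq_mul_sq hD (x := t 2) (y := t 3)
    (by linear_combination -e₁)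
  obtain ⟨h0, h4⟩ := eq_zero_and_eq_zero_of_sq_eq_mul_sq hnD (x := t 0) (y := t 4)
    (by linear_combination e₂ + t 2 * h2)
  ext i
  fin_cases i <;> assumption

end Field

lemma isSquare_neg_one_or_isSquare_or_isSquare_neg {F : Type*} [Field F] [Finite F] (a : F) :
    IsSquare (-1 : F) ∨ IsSquare a ∨ IsSquare (-a) := by
  classical
  have := Fintype.ofFinite F
  by_contra! h
  obtain ⟨h₁, ha, hna⟩ := h
  rw [← quadraticChar_neg_one_iff_not_isSquare] at h₁ ha hna
  rw [← neg_one_mul, map_mul, h₁, ha] at hna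
  norm_num at hna

section Padic

variable {p : ℕ} [Fact p.Prime]

lemma toZMod_eq_zero_iff_norm_lt_one {z : ℤ_[p]} : PadicInt.toZMod z = 0 ↔ ‖z‖ < 1 := by
  rw [← RingHom.mem_ker, PadicInt.ker_toZMod, IsLocalRing.mem_maximalIdeal, PadicInt.mem_nonunits]

lemma isSquare_of_norm_sq_sub_lt {u a : ℤ_[p]} (h : ‖a ^ 2 - u‖ < ‖2 * a‖ ^ 2) : IsSquare u := by
  obtain ⟨z, hz, -⟩ := hensels_lemma (F := Polynomial.X ^ 2 - Polynomial.C u) (a := a)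
    (by simpa [one_add_one_eq_two] using h)
  refine ⟨z, ?_⟩
  simp only [map_sub, map_pow, Polynomial.aeval_X, Polynomial.aeval_C, Algebra.algebraMap_self,
    RingHom.id_apply] at hz
  linear_combination -hz

lemma isSquare_intCast_padic (hp : p ≠ 2) {u : ℤ} (hu : (u : ZMod p) ≠ 0)
    (hsq : IsSquare (u : ZMod p)) : IsSquare (u : ℚ_[p]) := by
  obtain ⟨w, hw⟩ := hsq
  obtain ⟨a, rfl⟩ := ZMod.ringHom_surjective (PadicInt.toZMod (p := p)) w
  have h2 : (2 : ZMod p) ≠ 0 := by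
    exact_mod_cast ZMod.prime_ne_zero p 2 (hq := ⟨Nat.prime_two⟩) hp
  have ha : PadicInt.toZMod a ≠ 0 := fun h => hu (by rw [hw, h, zero_mul])
  have hlt : ‖a ^ 2 - u‖ < 1 := toZMod_eq_zero_iff_norm_lt_one.mp (by simp [hw, sq])
  have hone : ‖2 * a‖ = 1 := by
    refine (PadicInt.norm_le_one _).eq_of_not_lt fun h => mul_ne_zero h2 ha ?_
    simpa only [map_mul, map_ofNat] using toZMod_eq_zero_iff_norm_lt_one.mpr h
  have hsq : IsSquare (u : ℤ_[p]) := isSquare_of_norm_sq_sub_lt (a := a) (by simpa [hone] using hlt)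
  simpa using hsq.map PadicInt.Coe.ringHom

lemma isSquare_intCast_padic_two {u : ℤ} (hu : 8 ∣ u - 1) : IsSquare (u : ℚ_[2]) := by
  have hlt : ‖(1 : ℤ_[2]) ^ 2 - u‖ < ‖(2 : ℤ_[2]) * 1‖ ^ 2 := by
    have hle : ‖((1 - u : ℤ) : ℤ_[2])‖ ≤ (2 : ℕ) ^ (-(3 : ℕ) : ℤ) :=
      PadicInt.norm_int_le_pow_iff_dvd.mpr (by norm_num; omega)
    have h2 : ‖(2 : ℤ_[2])‖ = 2⁻¹ := by exact_mod_cast PadicInt.norm_p (p := 2)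
    push_cast at hle
    rw [one_pow, mul_one, h2]
    exact hle.trans_lt (by norm_num)
  simpa using (isSquare_of_norm_sq_sub_lt hlt).map PadicInt.Coe.ringHom

lemma hasPoint_padic (p : ℕ) [Fact p.Prime] : HasPoint ℚ_[p] 9 11 17 := by
  rcases eq_or_ne p 2 with rfl | hp2
  · exact hasPoint_of_isSquare
      (by exact_mod_cast isSquare_intCast_padic_two (u := 17) (by norm_num))
  have hneg_one (h : IsSquare (-1 : ZMod p)) : HasPoint ℚ_[p] 9 11 17 :=
    hasPoint_of_isSquare_neg_one
      (by exact_mod_cast isSquare_intCast_padic hp2 (u := -1) (by simp) (by exact_mod_cast h))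
  rcases eq_or_ne p 17 with rfl | hp17
  · exact hneg_one ⟨4, rfl⟩
  have h17 : (17 : ZMod p) ≠ 0 := by
    exact_mod_cast ZMod.prime_ne_zero p 17 (hq := ⟨by norm_num⟩) hp17
  rcases isSquare_neg_one_or_isSquare_or_isSquare_neg (17 : ZMod p) with h | h | h
  · exact hneg_one h
  · exact hasPoint_of_isSquare (by
      exact_mod_cast isSquare_intCast_padic hp2 (u := 17) (by exact_mod_cast h17)
        (by exact_mod_cast h))
  · exact hasPoint_of_isSquare_neg (by
      exact_mod_cast isSquare_intCast_padic hp2 (u := -17) (by simpa using h17)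
        (by exact_mod_cast h))

lemma norm_sq_sub_intCast_eq_one {d : ℤ} (hd : ¬IsSquare (d : ZMod p)) (z : ℤ_[p]) :
    ‖z ^ 2 - (d : ℤ_[p])‖ = 1 := by
  refine (PadicInt.norm_le_one _).eq_of_not_lt fun h => hd ⟨PadicInt.toZMod z, ?_⟩
  have hz : PadicInt.toZMod (z ^ 2 - (d : ℤ_[p])) = 0 := toZMod_eq_zero_iff_norm_lt_one.mpr h
  simp only [map_sub, map_pow, map_intCast] at hz
  linear_combination -hz

lemma norm_sq_sub_intCast_mul_sq {d : ℤ} (hd : ¬IsSquare (d : ZMod p)) (x y : ℚ_[p]) :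
    ‖x ^ 2 - d * y ^ 2‖ = max ‖x‖ ‖y‖ ^ 2 := by
  rcases eq_or_ne ‖x‖ ‖y‖ with hxy | hxy
  · rcases eq_or_ne y 0 with rfl | hy
    · simp
    have hz : ‖x / y‖ ≤ 1 := by rw [norm_div, hxy, div_self (norm_ne_zero_iff.mpr hy)]
    have hone : ‖(x / y) ^ 2 - d‖ = 1 := norm_sq_sub_intCast_eq_one hd ⟨x / y, hz⟩
    calc ‖x ^ 2 - d * y ^ 2‖ = ‖((x / y) ^ 2 - d) * y ^ 2‖ := by field_simp
      _ = max ‖x‖ ‖y‖ ^ 2 := by rw [norm_mul, hone, one_mul, norm_pow, hxy, max_self]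
  · have hd_norm : ‖(d : ℚ_[p])‖ = 1 := by simpa using norm_sq_sub_intCast_eq_one hd 0
    have hne : ‖x ^ 2‖ ≠ ‖-(d * y ^ 2)‖ := by
      simpa [hd_norm, sq_eq_sq₀] using hxy
    rw [sub_eq_add_neg, Padic.add_eq_max_of_ne hne, norm_neg, norm_mul, hd_norm, one_mul, norm_pow,
      norm_pow]
    rcases le_total ‖x‖ ‖y‖ with hle | hle
    · rw [max_eq_right hle, max_eq_right (by gcongr)]
    · rw [max_eq_left hle, max_eq_left (by gcongr)]

lemma even_valuation_of_norm_eq_sq {z w : ℚ_[p]} (h : ‖z‖ = ‖w‖ ^ 2) : Even z.valuation := by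
  rcases eq_or_ne z 0 with rfl | hz
  · simp
  have hw : w ≠ 0 := by
    rintro rfl
    exact hz (by simpa using h)
  rw [← norm_pow, Padic.norm_eq_zpow_neg_valuation hz,
    Padic.norm_eq_zpow_neg_valuation (pow_ne_zero 2 hw)] at h
  have hp : (1 : ℝ) < p := by exact_mod_cast (Fact.out : p.Prime).one_lt
  have hval := neg_injective (zpow_right_injective₀ (by positivity) hp.ne' h)
  rw [hval, Padic.valuation_pow]
  exact even_two.mul_right _

lemma even_padicValInt_of_eq_sq_sub_mul_sq {d : ℤ} (hd : ¬IsSquare (d : ZMod p)) {n : ℤ} {x y : ℚ}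
    (h : (n : ℚ) = x ^ 2 - d * y ^ 2) : Even (padicValInt p n) := by
  have hn : (n : ℚ_[p]) = (x : ℚ_[p]) ^ 2 - d * (y : ℚ_[p]) ^ 2 := by
    exact_mod_cast congrArg (Rat.cast (K := ℚ_[p])) h
  have hnorm : ‖(n : ℚ_[p])‖ = max ‖(x : ℚ_[p])‖ ‖(y : ℚ_[p])‖ ^ 2 := by
    rw [hn, norm_sq_sub_intCast_mul_sq hd]
  have heven : Even (n : ℚ_[p]).valuation := by
    rcases max_choice ‖(x : ℚ_[p])‖ ‖(y : ℚ_[p])‖ with hmax | hmax <;>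
      exact even_valuation_of_norm_eq_sq (hmax ▸ hnorm)
  simpa using heven

lemma norm_le_one_of_norm_sq_sub_prime_mul_sq_le_one {x y : ℚ_[p]}
    (h : ‖x ^ 2 - p * y ^ 2‖ ≤ 1) : ‖y‖ ≤ 1 := by
  rcases eq_or_ne y 0 with rfl | hy
  · simp
  have hp : (p : ℚ_[p]) ≠ 0 := by exact_mod_cast (Fact.out : p.Prime).ne_zero
  have hval : (p * y ^ 2 : ℚ_[p]).valuation = 1 + 2 * y.valuation := by
    rw [Padic.valuation_mul hp (pow_ne_zero 2 hy), Padic.valuation_p, Padic.valuation_pow,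
      Nat.cast_two]
  have hne : ‖x ^ 2‖ ≠ ‖-(p * y ^ 2)‖ := by
    intro heq
    rw [norm_neg, norm_pow] at heq
    have heven := even_valuation_of_norm_eq_sq heq.symm
    rw [hval] at heven
    exact Int.not_even_iff_odd.mpr (odd_one.add_even (even_two_mul _)) heven
  rw [sub_eq_add_neg, Padic.add_eq_max_of_ne hne, norm_neg] at h
  have hnonneg := (Padic.norm_le_one_iff_val_nonneg _).mp ((le_max_right _ _).trans h)
  rw [hval] at hnonneg
  exact (Padic.norm_le_one_iff_val_nonneg y).mpr (by omega)

lemma intCast_zmod_eq_of_eq_sq_sub_prime_mul_sq {m n : ℤ} {x y z : ℚ}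
    (hm : (m : ℚ) = x ^ 2 - p * y ^ 2) (hn : (n : ℚ) = x ^ 2 - p * z ^ 2) :
    (m : ZMod p) = n := by
  have norm_le_one {k : ℤ} {w : ℚ} (hk : (k : ℚ) = x ^ 2 - p * w ^ 2) : ‖(w : ℚ_[p])‖ ≤ 1 := by
    have hk' : (k : ℚ_[p]) = (x : ℚ_[p]) ^ 2 - p * (w : ℚ_[p]) ^ 2 := by
      exact_mod_cast congrArg (Rat.cast (K := ℚ_[p])) hk
    exact norm_le_one_of_norm_sq_sub_prime_mul_sq_le_one (hk' ▸ Padic.norm_int_le_one k)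
  have hz_sub : ‖(z : ℚ_[p]) ^ 2 - (y : ℚ_[p]) ^ 2‖ ≤ 1 := by
    let Y : ℤ_[p] := ⟨y, norm_le_one hm⟩
    let Z : ℤ_[p] := ⟨z, norm_le_one hn⟩
    exact PadicInt.norm_le_one (Z ^ 2 - Y ^ 2)
  have hsub : ((m - n : ℤ) : ℚ_[p]) = p * ((z : ℚ_[p]) ^ 2 - (y : ℚ_[p]) ^ 2) := by
    have hsub : ((m - n : ℤ) : ℚ) = p * (z ^ 2 - y ^ 2) := by
      push_cast
      linear_combination hm - hn
    exact_mod_cast congrArg (Rat.cast (K := ℚ_[p])) hsub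
  have hlt : ‖((m - n : ℤ) : ℚ_[p])‖ < 1 := by
    rw [hsub, norm_mul]
    exact mul_lt_one_of_nonneg_of_lt_one_left (norm_nonneg _) Padic.norm_p_lt_one hz_sub
  have hdvd := (ZMod.intCast_zmod_eq_zero_iff_dvd _ p).mpr (Padic.norm_intCast_lt_one_iff.mp hlt)
  rwa [Int.cast_sub, sub_eq_zero] at hdvd

end Padic

lemma isSquare_natCast_of_even_padicValNat {R : Type*} [CommSemiring R] {n : ℕ} (hn : n ≠ 0)
    (h : ∀ p : ℕ, p.Prime → ¬IsSquare (p : R) → Even (padicValNat p n)) : IsSquare (n : R) := by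
  rw [← Nat.prod_factorization_pow_eq_self hn, Finsupp.prod, Nat.cast_prod]
  refine Finset.prod_induction _ IsSquare (fun _ _ => IsSquare.mul) IsSquare.one fun p hp => ?_
  have hprime := Nat.prime_of_mem_primeFactors hp
  rw [Nat.cast_pow, Nat.factorization_def n hprime]
  by_cases hsq : IsSquare (p : R)
  · exact hsq.pow _
  · exact (h p hprime hsq).isSquare_pow _

lemma isSquare_intCast_of_even_padicValInt {R : Type*} [CommRing R] (hneg : IsSquare (-1 : R))
    {n : ℤ} (hn : n ≠ 0)
    (h : ∀ p : ℕ, p.Prime → ¬IsSquare (p : R) → Even (padicValInt p n)) : IsSquare (n : R) := by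
  have hsq : IsSquare (n.natAbs : R) :=
    isSquare_natCast_of_even_padicValNat (Int.natAbs_ne_zero.mpr hn) h
  rcases Int.natAbs_eq n with hn' | hn' <;> rw [hn']
  · simpa using hsq
  · simpa using hneg.mul hsq

lemma dvd_sub_of_dvd_add_mul_of_isCoprime {R : Type*} [CommRing R] {a b A B p : R} (hp : Prime p)
    (hab : IsCoprime a b) (hA : p ∣ a + A * b) (hB : p ∣ a + B * b) : p ∣ B - A := by
  have hdvd : p ∣ (B - A) * b := by
    convert dvd_sub hB hA using 1
    ring
  refine (hp.dvd_or_dvd hdvd).resolve_right fun hb => hp.not_isUnit (hab.isUnit_of_dvd' ?_ hb)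
  exact (dvd_add_left (hb.mul_left A)).mp hA

section Rational

variable {q : ℕ} [Fact q.Prime]

lemma not_isSquare_zmod_swap (hq : q % 8 = 1) {p : ℕ} [Fact p.Prime]
    (hp : ¬IsSquare (p : ZMod q)) : ¬IsSquare (q : ZMod p) := by
  have hp2 : p ≠ 2 := by
    rintro rfl
    exact hp (by exact_mod_cast (ZMod.exists_sq_eq_two_iff (p := q) (by omega)).mpr (Or.inl hq))
  rwa [← ZMod.exists_sq_eq_prime_iff_of_mod_four_eq_one (p := q) (q := p) (by omega) hp2]

lemma isSquare_intCast_of_mul_eq_sq_sub_mul_sq (hq : q % 8 = 1) {u v : ℤ} (hu : u ≠ 0) (hv : v ≠ 0)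
    (huv : ∀ p : ℕ, p.Prime → (p : ℤ) ∣ u → (p : ℤ) ∣ v → IsSquare (p : ZMod q)) {x y : ℚ}
    (h : (u * v : ℚ) = x ^ 2 - q * y ^ 2) : IsSquare (u : ZMod q) := by
  have hneg : IsSquare (-1 : ZMod q) := ZMod.exists_sq_eq_neg_one_iff.mpr (by omega)
  refine isSquare_intCast_of_even_padicValInt hneg hu fun p hp hpq => ?_
  have : Fact p.Prime := ⟨hp⟩
  by_cases hpu : (p : ℤ) ∣ u
  · have heven : Even (padicValInt p (u * v)) :=
      even_padicValInt_of_eq_sq_sub_mul_sq (d := q)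
        (by exact_mod_cast not_isSquare_zmod_swap hq hpq) (by exact_mod_cast h)
    have hpv : padicValInt p v = 0 :=
      padicValInt.eq_zero_of_not_dvd fun hpv => hpq (huv p hp hpu hpv)
    rwa [padicValInt.mul hu hv, hpv, add_zero] at heven
  · rw [padicValInt.eq_zero_of_not_dvd hpu]
    exact Even.zero

lemma not_isSquare_prime_rat : ¬IsSquare (q : ℚ) := by
  rw [Rat.isSquare_natCast_iff]
  exact (Fact.out : q.Prime).prime.not_isSquare

lemma exists_zmod_root_of_isCoprime {A B : ℤ} {t : Fin 5 → ℚ} (ht : SPoint (A : ℚ) B q t) {a b : ℤ}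
    (hab : IsCoprime a b) (h0 : t 0 = a) (h1 : t 1 = b) :
    ∃ r : ZMod q, (b : ZMod q) ≠ 0 ∧ (a : ZMod q) = r * b ∧ (r + A) * (r + B) = r := by
  obtain ⟨h₁, h₂⟩ := ht
  rw [h0, h1] at h₁ h₂
  have hmod : ((a + A * b) * (a + B * b) : ZMod q) = a * b := by
    exact_mod_cast intCast_zmod_eq_of_eq_sq_sub_prime_mul_sq (p := q)
      (m := (a + A * b) * (a + B * b)) (n := a * b) (by exact_mod_cast h₂) (by exact_mod_cast h₁)
  have hb : (b : ZMod q) ≠ 0 := by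
    intro hb
    have ha : (a : ZMod q) = 0 := by simpa [hb] using hmod
    rw [ZMod.intCast_zmod_eq_zero_iff_dvd] at ha hb
    exact (Nat.prime_iff_prime_int.mp Fact.out).not_isUnit (hab.isUnit_of_dvd' ha hb)
  have hra : (a : ZMod q) = a / b * b := by field_simp
  refine ⟨a / b, hb, hra, ?_⟩
  field_simp
  linear_combination hmod

lemma isSquare_add_of_isCoprime (hq : q % 8 = 1) {A B : ℤ}
    (hAB : ∀ p : ℕ, p.Prime → (p : ℤ) ∣ B - A → IsSquare (p : ZMod q))
    {t : Fin 5 → ℚ} (ht : SPoint (A : ℚ) B q t) {a b : ℤ} (hab : IsCoprime a b)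
    (h0 : t 0 = a) (h1 : t 1 = b) {r : ZMod q} (hb : (b : ZMod q) ≠ 0) (ha : (a : ZMod q) = r * b)
    (hr : r ≠ 0) (hrA : r + A ≠ 0) (hrB : r + B ≠ 0) : IsSquare (r + A) := by
  obtain ⟨h₁, h₂⟩ := ht
  rw [h0, h1] at h₁ h₂
  have ne_zero_of_cast {n : ℤ} {s : ZMod q} (hs : s ≠ 0) (hn : (n : ZMod q) = s * b) : n ≠ 0 := by
    rintro rfl
    exact mul_ne_zero hs hb (by simpa using hn.symm)
  have hsq_b : IsSquare (b : ZMod q) :=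
    isSquare_intCast_of_mul_eq_sq_sub_mul_sq hq (u := b) (v := a)
      (ne_zero_of_cast one_ne_zero (one_mul _).symm) (ne_zero_of_cast hr ha)
      (fun p hp hpb hpa =>
        ((Nat.prime_iff_prime_int.mp hp).not_isUnit (hab.isUnit_of_dvd' hpa hpb)).elim)
      ((mul_comm (b : ℚ) a).trans h₁)
  have hcast (C : ℤ) : ((a + C * b : ℤ) : ZMod q) = (r + C) * b := by
    push_cast
    rw [ha]
    ring
  have hsq_u : IsSquare ((a + A * b : ℤ) : ZMod q) := by
    refine isSquare_intCast_of_mul_eq_sq_sub_mul_sq hq (v := a + B * b)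
      (ne_zero_of_cast hrA (hcast A)) (ne_zero_of_cast hrB (hcast B)) (fun p hp hpu hpv => ?_)
      (by exact_mod_cast h₂)
    exact hAB p hp (dvd_sub_of_dvd_add_mul_of_isCoprime (Nat.prime_iff_prime_int.mp hp) hab hpu hpv)
  have hquot : r + A = ((a + A * b : ℤ) : ZMod q) / b := by
    rw [hcast, mul_div_cancel_right₀ _ hb]
  rw [hquot]
  exact hsq_u.div hsq_b

lemma not_hasPoint_rat (hq : q % 8 = 1) {A B : ℤ} (hB : (B : ZMod q) ≠ 0)
    (hAB : ∀ p : ℕ, p.Prime → (p : ℤ) ∣ B - A → IsSquare (p : ZMod q))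
    (hroot : ∀ r : ZMod q, (r + A) * (r + B) = r → ¬IsSquare (r + A)) :
    ¬HasPoint ℚ A B q := by
  rintro ⟨t, ht, hS⟩
  have hneg : ¬IsSquare (-q : ℚ) := fun h => by
    have hpos : (0 : ℚ) < q := by exact_mod_cast (Fact.out : q.Prime).pos
    linarith [h.nonneg]
  have h1 : t 1 ≠ 0 := fun h1 => ht (hS.eq_zero_of_apply_one_eq_zero not_isSquare_prime_rat hneg h1)
  set s : ℚ := t 0 / t 1 with hs
  have hnum : ((s.den / t 1) • t) 0 = (s.num : ℤ) := by
    rw [← Rat.mul_den_eq_num s, hs, Pi.smul_apply, smul_eq_mul]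
    ring
  have hden : ((s.den / t 1) • t) 1 = (s.den : ℤ) := by
    exact_mod_cast div_mul_cancel₀ (s.den : ℚ) h1
  have hS' := hS.smul (s.den / t 1)
  have hcop := Rat.isCoprime_num_den s
  obtain ⟨r, hb, ha, hr⟩ := exists_zmod_root_of_isCoprime hS' hcop hnum hden
  have hrA : r + A ≠ 0 := fun h => hroot r hr (h ▸ IsSquare.zero)
  have hr0 : r ≠ 0 := by
    rintro rfl
    exact mul_ne_zero hrA (by simpa using hB) hr
  have hrB : r + B ≠ 0 := fun h => hr0 (by rw [← hr, h, mul_zero])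
  exact hroot r hr (isSquare_add_of_isCoprime hq hAB hS' hcop hnum hden hb ha hr0 hrA hrB)

end Rational

/-- The surface in `P⁴` over `ℚ` given by `T0·T1 = T2² − 17·T3²` and
`(T0 + 9·T1)(T0 + 11·T1) = T2² − 17·T4²` has points over `ℝ` and over every `ℚ_p`,
but no rational point. -/
theorem example_17_9_11_violates_Hasse_principle :
    HasPoint ℝ 9 11 17 ∧
    (∀ (p : ℕ) [Fact p.Prime], HasPoint ℚ_[p] 9 11 17) ∧
    ¬ HasPoint ℚ 9 11 17 := by
  refine ⟨hasPoint_of_isSquare ⟨√17, by norm_num⟩, fun p _ => hasPoint_padic p, ?_⟩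
  have hB : ((11 : ℤ) : ZMod 17) ≠ 0 := by decide
  have hAB (p : ℕ) (hp : p.Prime) (hdvd : (p : ℤ) ∣ 11 - 9) : IsSquare (p : ZMod 17) := by
    have hp2 : p = 2 :=
      (Nat.prime_dvd_prime_iff_eq hp Nat.prime_two).mp (Int.natCast_dvd_natCast.mp hdvd)
    exact hp2 ▸ ⟨6, rfl⟩
  have hroot (r : ZMod 17) : (r + (9 : ℤ)) * (r + (11 : ℤ)) = r → ¬IsSquare (r + (9 : ℤ)) := by
    decide +revert
  have : Fact (Nat.Prime 17) := ⟨by norm_num⟩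
  exact_mod_cast not_hasPoint_rat (q := 17) (by norm_num) hB hAB hroot
end

section
/- Let K be a field of characteristic ≠ 2 and A, B, D ∈ K. Then the surface S^{(D;A,B)} is nonsingular if and only if A·B·D ≠ 0, A ≠ B, and A² − 2AB + B² − 2A − 2B + 1 ≠ 0. -/
open IsDedekindDomain NumberField

/-- The Jacobian matrix of the two defining equations at a point `t`. -/
noncomputable def jacobian {F : Type*} [Field F] (A B D : F) (t : Fin 5 → F) :
    Matrix (Fin 2) (Fin 5) F :=
  !![t 1, t 0, -2 * t 2, 2 * D * t 3, 0;
     2 * t 0 + (A + B) * t 1, (A + B) * t 0 + 2 * A * B * t 1, -2 * t 2, 0, 2 * D * t 4]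

/-- `S^{(D;A,B)}` is nonsingular: it has no singular point over an algebraic closure,
i.e. no nonzero solution of the two equations at which the Jacobian has rank at most 1. -/
def Nonsingular (F : Type*) [Field F] (A B D : F) : Prop :=
  ∀ t : Fin 5 → AlgebraicClosure F, t ≠ 0 →
    SPoint (algebraMap F (AlgebraicClosure F) A) (algebraMap F (AlgebraicClosure F) B)
      (algebraMap F (AlgebraicClosure F) D) t →
    ¬ (jacobian (algebraMap F (AlgebraicClosure F) A) (algebraMap F (AlgebraicClosure F) B)
      (algebraMap F (AlgebraicClosure F) D) t).rank ≤ 1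

/-! Write the surface as `Q₁ = Q₂ = 0`. A point of it is singular exactly when the gradient of some
nonzero member `l Q₁ + m Q₂` of the pencil vanishes there. Suppose `ABD ≠ 0`. The coordinates
`t₂, t₃, t₄` enter the pencil with coefficients proportional to `l + m`, `l D`, `m D`. If none of
these is zero, a singular point has `t₂ = t₃ = t₄ = 0`, and `AB ≠ 0` forces `t₀ = t₁ = 0` as well.
Otherwise the part of `l Q₁ + m Q₂` in `T₀, T₁` has discriminant `l²`, `(A - B)² m²` or
`(A² - 2AB + B² - 2A - 2B + 1) m²`; if this is nonzero, again `t₀ = t₁ = 0`. But then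
`t₂² = D t₃² = D t₄²`, so `t₂, t₃, t₄` are all nonzero and `l = m = 0`, a contradiction.
Conversely, each degeneration produces an explicit singular point. -/

section Rank

open scoped Matrix

variable {m n F : Type*} [Fintype m] [Fintype n] [Field F]

theorem rank_lt_card_iff_not_linearIndependent_row (M : Matrix m n F) :
    M.rank < Fintype.card m ↔ ¬ LinearIndependent F M.row := by
  rw [linearIndependent_iff_card_le_finrank_span, Set.finrank, ← Matrix.rank_eq_finrank_span_row,
    not_le]

theorem rank_lt_card_iff_exists_vecMul_eq_zero (M : Matrix m n F) :
    M.rank < Fintype.card m ↔ ∃ c : m → F, c ≠ 0 ∧ c ᵥ* M = 0 := by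
  rw [rank_lt_card_iff_not_linearIndependent_row, ← Matrix.vecMul_injective_iff,
    ← Matrix.coe_vecMulLinear, injective_iff_map_eq_zero]
  simp only [Matrix.vecMulLinear_apply, not_forall, exists_prop, and_comm, ne_eq]

end Rank

section Discrim

variable {R : Type*} [CommRing R]

theorem eq_zero_of_discrim_ne_zero [NoZeroDivisors R] {a b c x y : R} (h : discrim a b c ≠ 0)
    (hx : 2 * a * x + b * y = 0) (hy : b * x + 2 * c * y = 0) : x = 0 ∧ y = 0 := by
  have hdx : discrim a b c * x = 0 := by
    rw [discrim]; linear_combination b * hy - 2 * c * hx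
  have hdy : discrim a b c * y = 0 := by
    rw [discrim]; linear_combination b * hx - 2 * a * hy
  exact ⟨(mul_eq_zero.mp hdx).resolve_left h, (mul_eq_zero.mp hdy).resolve_left h⟩

/-- The discriminant of the binary quadratic form
`l·T0·T1 + m·(T0 + A·T1)(T0 + B·T1) = m·T0² + (l + (A + B)m)·T0·T1 + ABm·T1²`, the part in `T0, T1`
of the member `[l : m]` of the pencil of quadrics that cuts out `S^{(D;A,B)}`. -/
def pencilDiscrim (A B l m : R) : R :=
  discrim m (l + (A + B) * m) (A * B * m)

theorem pencilDiscrim_zero_right (A B l : R) : pencilDiscrim A B l 0 = l ^ 2 := by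
  rw [pencilDiscrim, discrim]; ring

theorem pencilDiscrim_zero_left (A B m : R) : pencilDiscrim A B 0 m = ((A - B) * m) ^ 2 := by
  rw [pencilDiscrim, discrim]; ring

theorem pencilDiscrim_neg_self (A B m : R) :
    pencilDiscrim A B (-m) m = (A ^ 2 - 2 * A * B + B ^ 2 - 2 * A - 2 * B + 1) * m ^ 2 := by
  rw [pencilDiscrim, discrim]; ring

theorem pencilDiscrim_ne_zero [NoZeroDivisors R] {A B l m : R} (hAB : A ≠ B)
    (hd : A ^ 2 - 2 * A * B + B ^ 2 - 2 * A - 2 * B + 1 ≠ 0) (hlm : l ≠ 0 ∨ m ≠ 0)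
    (h : m = 0 ∨ l = 0 ∨ l + m = 0) : pencilDiscrim A B l m ≠ 0 := by
  rcases h with rfl | rfl | h
  · rw [pencilDiscrim_zero_right]
    exact pow_ne_zero 2 (hlm.resolve_right (not_not_intro rfl))
  · rw [pencilDiscrim_zero_left]
    have hm : m ≠ 0 := hlm.resolve_left (not_not_intro rfl)
    exact pow_ne_zero 2 (mul_ne_zero (sub_ne_zero.mpr hAB) hm)
  · obtain rfl : l = -m := eq_neg_of_add_eq_zero_left h
    have hm : m ≠ 0 := by simpa using hlm
    rw [pencilDiscrim_neg_self]
    exact mul_ne_zero hd (pow_ne_zero 2 hm)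

end Discrim

section SingularPoints

open scoped Matrix

variable {F : Type*} [Field F] {A B D : F} {t : Fin 5 → F}

/-- `t` is a vector of homogeneous coordinates of a singular point of `S^{(D;A,B)}` with
coordinates in `F` itself rather than in an algebraic closure. -/
def IsSingularPoint (A B D : F) (t : Fin 5 → F) : Prop :=
  t ≠ 0 ∧ SPoint A B D t ∧ (jacobian A B D t).rank ≤ 1

theorem vecMul_jacobian (A B D : F) (t : Fin 5 → F) (l m : F) :
    ![l, m] ᵥ* jacobian A B D t =
      ![2 * m * t 0 + (l + (A + B) * m) * t 1, (l + (A + B) * m) * t 0 + 2 * (A * B * m) * t 1,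
        -(2 * ((l + m) * t 2)), 2 * D * (l * t 3), 2 * D * (m * t 4)] := by
  ext j
  fin_cases j <;>
    simp only [jacobian, Matrix.vecMul, dotProduct, Fin.sum_univ_two, Fin.reduceFinMk,
      Fin.zero_eta, Fin.mk_one, Matrix.of_apply, Matrix.cons_val', Matrix.cons_val,
      Matrix.cons_val_fin_one] <;>
    ring

theorem jacobian_rank_le_one_iff :
    (jacobian A B D t).rank ≤ 1 ↔ ∃ l m : F, (l ≠ 0 ∨ m ≠ 0) ∧
      ![l, m] ᵥ* jacobian A B D t = 0 := by
  rw [← Nat.lt_succ_iff]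
  refine (rank_lt_card_iff_exists_vecMul_eq_zero (jacobian A B D t)).trans ?_
  simp [Fin.exists_fin_succ_pi, or_iff_not_imp_left]

theorem SPoint.apply_ne_zero_of_apply_zero_of_apply_one (hD : D ≠ 0) (h : SPoint A B D t)
    (ht : t ≠ 0) (h0 : t 0 = 0) (h1 : t 1 = 0) : t 2 ≠ 0 ∧ t 3 ≠ 0 ∧ t 4 ≠ 0 := by
  have h23 : t 2 ^ 2 = D * t 3 ^ 2 := by linear_combination -h.1 + t 1 * h0
  have h24 : t 2 ^ 2 = D * t 4 ^ 2 := by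
    simpa [h0, h1, sub_eq_zero] using h.2.symm
  have h32 : t 3 = 0 ↔ t 2 = 0 := by simpa [hD] using congrArg (· = 0) h23.symm
  have h42 : t 4 = 0 ↔ t 2 = 0 := by simpa [hD] using congrArg (· = 0) h24.symm
  have h2 : t 2 ≠ 0 := by
    refine fun h2 => ht (funext fun i => ?_)
    fin_cases i
    exacts [h0, h1, h2, h32.mpr h2, h42.mpr h2]
  exact ⟨h2, mt h32.mp h2, mt h42.mp h2⟩

theorem SPoint.apply_zero_eq_zero_and_apply_one_eq_zero (hA : A ≠ 0) (hB : B ≠ 0)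
    (h : SPoint A B D t) (h2 : t 2 = 0) (h3 : t 3 = 0) (h4 : t 4 = 0) : t 0 = 0 ∧ t 1 = 0 := by
  obtain ⟨h01, hAB⟩ := h
  simp only [h2, h3, h4, ne_eq, OfNat.ofNat_ne_zero, not_false_eq_true, zero_pow, mul_zero,
    sub_zero, mul_eq_zero] at h01 hAB
  rcases h01 with h0 | h1
  · simpa [h0, hA, hB] using hAB
  · simpa [h1] using hAB

theorem not_isSingularPoint [NeZero (2 : F)] (hABD : A * B * D ≠ 0) (hAB : A ≠ B)
    (hd : A ^ 2 - 2 * A * B + B ^ 2 - 2 * A - 2 * B + 1 ≠ 0) : ¬ IsSingularPoint A B D t := by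
  rintro ⟨ht, hS, hrank⟩
  obtain ⟨⟨hA, hB⟩, hD⟩ : (A ≠ 0 ∧ B ≠ 0) ∧ D ≠ 0 := by simpa [not_or] using hABD
  obtain ⟨l, m, hlm, hJ⟩ := jacobian_rank_le_one_iff.mp hrank
  obtain ⟨hx, hy, hz, hu, hv⟩ :
      2 * m * t 0 + (l + (A + B) * m) * t 1 = 0 ∧
      (l + (A + B) * m) * t 0 + 2 * (A * B * m) * t 1 = 0 ∧
      (l + m = 0 ∨ t 2 = 0) ∧ (l = 0 ∨ t 3 = 0) ∧ (m = 0 ∨ t 4 = 0) := by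
    simpa [vecMul_jacobian, hD, NeZero.ne] using hJ
  have h01 : t 0 = 0 ∧ t 1 = 0 := by
    by_cases h : m = 0 ∨ l = 0 ∨ l + m = 0
    · exact eq_zero_of_discrim_ne_zero (pencilDiscrim_ne_zero hAB hd hlm h) hx hy
    · obtain ⟨hm, hl, hlm'⟩ : m ≠ 0 ∧ l ≠ 0 ∧ l + m ≠ 0 := by simpa only [not_or] using h
      exact hS.apply_zero_eq_zero_and_apply_one_eq_zero hA hB (hz.resolve_left hlm')
        (hu.resolve_left hl) (hv.resolve_left hm)
  obtain ⟨-, h3, h4⟩ := hS.apply_ne_zero_of_apply_zero_of_apply_one hD ht h01.1 h01.2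
  exact hlm.elim (· (hu.resolve_right h3)) (· (hv.resolve_right h4))

theorem isSingularPoint_zero_right (A B : F) : IsSingularPoint A B 0 ![0, 0, 0, 0, 1] := by
  refine ⟨fun h => one_ne_zero (congrFun h 4), by simp [SPoint],
    jacobian_rank_le_one_iff.mpr ⟨1, 0, by simp, ?_⟩⟩
  simp [vecMul_jacobian]

theorem isSingularPoint_of_mul_eq_zero (h : A * B = 0) (D : F) :
    IsSingularPoint A B D ![0, 1, 0, 0, 0] := by
  refine ⟨fun h => one_ne_zero (congrFun h 1), by simpa [SPoint] using h,
    jacobian_rank_le_one_iff.mpr ⟨-(A + B), 1, by simp, ?_⟩⟩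
  simp [vecMul_jacobian, h]

theorem isSingularPoint_self_of_mul_sq_eq {u : F} (hu : D * u ^ 2 = A) :
    IsSingularPoint A A D ![-A, 1, 0, u, 0] := by
  refine ⟨fun h => one_ne_zero (congrFun h 1), by simp [SPoint, hu],
    jacobian_rank_le_one_iff.mpr ⟨0, 1, by simp, ?_⟩⟩
  simp only [vecMul_jacobian, Matrix.cons_eq_zero_iff, Matrix.cons_val, mul_zero, zero_mul,
    neg_zero, Matrix.zero_empty, and_true]
  constructor <;> ring

-- The hypotheses make `z ^ 2` the double root of `X² + (A + B - 1)X + AB`, the form of the member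
-- `[-1 : 1]` of the pencil.
theorem isSingularPoint_of_two_mul_sq_eq {z : F} (h2 : 2 * z ^ 2 = 1 - A - B)
    (h4 : (z ^ 2) ^ 2 = A * B) (D : F) : IsSingularPoint A B D ![z ^ 2, 1, z, 0, 0] := by
  refine ⟨fun h => one_ne_zero (congrFun h 1), ⟨by simp, ?_⟩,
    jacobian_rank_le_one_iff.mpr ⟨-1, 1, by simp, ?_⟩⟩
  · simp only [Matrix.cons_val]
    linear_combination z ^ 2 * h2 - h4
  · simp only [vecMul_jacobian, Matrix.cons_eq_zero_iff, Matrix.cons_val, neg_add_cancel, mul_zero,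
      zero_mul, neg_zero, Matrix.zero_empty, and_true]
    constructor
    · linear_combination h2
    · linear_combination z ^ 2 * h2 - 2 * h4

theorem exists_isSingularPoint [IsAlgClosed F] [NeZero (2 : F)]
    (h : A * B * D = 0 ∨ A = B ∨ A ^ 2 - 2 * A * B + B ^ 2 - 2 * A - 2 * B + 1 = 0) :
    ∃ t, IsSingularPoint A B D t := by
  by_cases hD : D = 0
  · subst hD
    exact ⟨_, isSingularPoint_zero_right A B⟩
  rcases h with hABD | rfl | hd
  · exact ⟨_, isSingularPoint_of_mul_eq_zero ((mul_eq_zero.mp hABD).resolve_right hD) D⟩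
  · obtain ⟨u, hu⟩ := IsAlgClosed.exists_pow_nat_eq (A / D) two_pos
    exact ⟨_, isSingularPoint_self_of_mul_sq_eq (u := u) (by rw [hu, mul_div_cancel₀ A hD])⟩
  · obtain ⟨z, hz⟩ := IsAlgClosed.exists_pow_nat_eq ((1 - A - B) / 2) two_pos
    have h2 : 2 * z ^ 2 = 1 - A - B := by rw [hz, mul_div_cancel₀ _ two_ne_zero]
    have h4 : (z ^ 2) ^ 2 = A * B := by
      rw [hz, div_pow, div_eq_iff (pow_ne_zero 2 two_ne_zero)]
      linear_combination hd
    exact ⟨_, isSingularPoint_of_two_mul_sq_eq h2 h4 D⟩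

theorem forall_not_isSingularPoint_iff [IsAlgClosed F] [NeZero (2 : F)] :
    (∀ t, ¬ IsSingularPoint A B D t) ↔
      A * B * D ≠ 0 ∧ A ≠ B ∧ A ^ 2 - 2 * A * B + B ^ 2 - 2 * A - 2 * B + 1 ≠ 0 := by
  refine ⟨fun h => ?_, fun ⟨hABD, hAB, hd⟩ _ => not_isSingularPoint hABD hAB hd⟩
  contrapose! h
  exact exists_isSingularPoint (by tauto)

end SingularPoints

theorem nonsingular_iff_forall_not_isSingularPoint {K : Type*} [Field K] {A B D : K} :
    Nonsingular K A B D ↔ ∀ t, ¬ IsSingularPoint (algebraMap K (AlgebraicClosure K) A)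
      (algebraMap K (AlgebraicClosure K) B) (algebraMap K (AlgebraicClosure K) D) t := by
  simp only [Nonsingular, IsSingularPoint, not_and, ne_eq]

/-- Proposition 1 a): for `char K ≠ 2`, the surface `S^{(D;A,B)}` is nonsingular iff
`ABD ≠ 0`, `A ≠ B` and `A² − 2AB + B² − 2A − 2B + 1 ≠ 0`. -/
theorem nonsingular_iff (K : Type*) [Field K] (hchar : ringChar K ≠ 2) (A B D : K) :
    Nonsingular K A B D ↔
      A * B * D ≠ 0 ∧ A ≠ B ∧ A ^ 2 - 2 * A * B + B ^ 2 - 2 * A - 2 * B + 1 ≠ 0 := by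
  have : NeZero (2 : AlgebraicClosure K) :=
    ⟨Ring.two_ne_zero (Algebra.ringChar_eq K (AlgebraicClosure K) ▸ hchar)⟩
  rw [nonsingular_iff_forall_not_isSingularPoint, forall_not_isSingularPoint_iff]
  set f := algebraMap K (AlgebraicClosure K)
  have hdisc : f A ^ 2 - 2 * f A * f B + f B ^ 2 - 2 * f A - 2 * f B + 1 =
      f (A ^ 2 - 2 * A * B + B ^ 2 - 2 * A - 2 * B + 1) := by
    simp only [map_add, map_sub, map_mul, map_pow, map_ofNat, map_one]
  rw [hdisc, ← map_mul, ← map_mul, map_ne_zero, map_ne_zero, f.injective.ne_iff]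
end
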